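/- arXiv:math/0310496 — 4 statements merged into one kernel-verified Lean document; each statement's English description precedes it below -/
import Mathlib

section
/- For every positive natural number d divisible by 4, there exist a real polynomial P of degree d and a nonzero entire function w : ℂ → ℂ satisfying w''(z) + P(z)·w(z) = 0 for all z ∈ ℂ, such that the set of zeros of w is infinite and every zero of w is real. -/
open Complex Polynomial

/-!
Write `d = 4k`. The function
`w z = ∏ j, E (z² / T j) · exp (-θ z²ᵏ⁺² / (k + 1))`, with `E` the Weierstrass primary factor of
genus `k`, has finitely many zeros, all real when `T j > 0`. By the Riccati equation for its
logarithmic derivative, `w'' = -P w` for a polynomial `P` when the points `T i` are an equilibrium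
`∑ j ≠ i, m j / (T i - T j) + κ m i / T i = θ` of charges `m j = (T j)⁻ᵏ`, with `κ = k + 1/4`. The
polynomial `P` has degree `4k + 2` and leading coefficient `-4θ²`, and its other coefficients are
linear in `θ` and in power sums of the `(T i)⁻¹`.

Such equilibria exist for any positive number of points: in coordinates given by the gaps between
consecutive points, the forces on the clusters of outermost points change sign across opposite
faces of a box, so the Poincaré–Miranda theorem gives a common zero. Scale so that the sum of
`(T i)⁻ᵏ⁻¹` is `1 - θ`. Moment identities then force `T i ≥ 1`, which bounds the coefficients, and
force `θ → 0` as the number of points grows, while the coefficient of `z⁴ᵏ` stays away from `0`. In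
the limit `P` has degree `4k`; the limit of `w` has only real zeros by Hurwitz's theorem and
infinitely many by Sturm's comparison theorem on the real axis.
-/

section Brouwer

open MeasureTheory Metric Set Module
open scoped NNReal

lemma exists_quadrature_at_one {s : Set ℝ} (hs : s.Infinite) (n : ℕ) :
    ∃ (t : Finset ℝ) (L : ℝ → ℝ), ↑t ⊆ s ∧
      ∀ q : ℝ[X], q.natDegree ≤ n → q.eval 1 = ∑ v ∈ t, L v * q.eval v := by
  obtain ⟨t, hts, ht⟩ := hs.exists_subset_card_eq (n + 1)
  refine ⟨t, fun v => (Lagrange.basis t id v).eval 1, hts, fun q hq => ?_⟩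
  have hdeg : q.degree < t.card := by
    rw [ht]
    exact degree_le_natDegree.trans_lt (by exact_mod_cast Nat.lt_succ_of_le hq)
  conv_lhs => rw [Lagrange.eq_interpolate Function.injective_id.injOn hdeg]
  simp [Lagrange.interpolate_apply, eval_finsetSum, mul_comm]

lemma exists_polynomial_det_one_add_smul {E : Type*} [NormedAddCommGroup E] [NormedSpace ℝ E]
    [FiniteDimensional ℝ E] (A : E →L[ℝ] E) :
    ∃ q : ℝ[X], q.natDegree ≤ finrank ℝ E ∧ ∀ t : ℝ, (1 + t • A).det = q.eval t := by
  let b := finBasis ℝ E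
  let M := LinearMap.toMatrix b b (A : E →ₗ[ℝ] E)
  refine ⟨((X : ℝ[X]) • M.map C + (1 : Matrix _ _ ℝ).map C).det, ?_, fun t => ?_⟩
  · simpa using natDegree_det_X_add_C_le M 1
  · have hmat : LinearMap.toMatrix b b ((1 + t • A : E →L[ℝ] E) : E →ₗ[ℝ] E) = t • M + 1 := by
      rw [ContinuousLinearMap.toLinearMap_add, ContinuousLinearMap.toLinearMap_smul, map_add,
        map_smul, add_comm]
      exact congrArg _ (LinearMap.toMatrix_id b)
    rw [ContinuousLinearMap.det, ← LinearMap.det_toMatrix b, hmat, ← coe_evalRingHom,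
      RingHom.map_det]
    congr 1
    ext i j
    rcases eq_or_ne i j with rfl | hij
    · simp
      ring
    · simp [hij]
      ring

lemma det_one_add_pos_of_norm_lt_one {E : Type*} [NormedAddCommGroup E] [NormedSpace ℝ E]
    [FiniteDimensional ℝ E] {A : E →L[ℝ] E} (hA : ‖A‖ < 1) : 0 < (1 + A).det := by
  have := FiniteDimensional.complete ℝ E
  have hne : ∀ s ∈ Icc (0 : ℝ) 1, (1 + s • A).det ≠ 0 := fun s hs => by
    have hnorm : ‖-(s • A)‖ < 1 := by
      rw [norm_neg, norm_smul, Real.norm_of_nonneg hs.1]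
      nlinarith [norm_nonneg A, hs.2]
    have hunit : IsUnit (1 + s • A) := by
      simpa using isUnit_one_sub_of_norm_lt_one hnorm
    exact ((hunit.map ContinuousLinearMap.toLinearMapRingHom).map LinearMap.det).ne_zero
  have hcont : Continuous fun s : ℝ => (1 + s • A).det :=
    ContinuousLinearMap.continuous_det.comp (by fun_prop)
  by_contra! hle
  obtain ⟨s, hs, hs0⟩ := intermediate_value_Icc' zero_le_one hcont.continuousOn
    (show (0 : ℝ) ∈ Icc _ _ by
      simpa [ContinuousLinearMap.det, ContinuousLinearMap.one_def] using hle)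
  exact hne s hs hs0

lemma bijective_id_add_of_contractingWith {E : Type*} [NormedAddCommGroup E] [CompleteSpace E]
    {h : E → E} {K : ℝ≥0} (hh : ContractingWith K h) : Function.Bijective fun x => x + h x := by
  refine (Function.bijective_iff_existsUnique _).2 fun y => ?_
  have hy : ContractingWith K fun x => y - h x :=
    ⟨hh.1, by simpa using (LipschitzWith.const y).sub hh.toLipschitzWith⟩
  exact ⟨hy.fixedPoint, eq_sub_iff_add_eq.1 hy.fixedPoint_isFixedPt.symm,
    fun x hx => hy.fixedPoint_unique (eq_sub_iff_add_eq.2 hx).symm⟩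

lemma image_eq_self_of_bijective_of_eqOn_compl {α : Type*} {φ : α → α} {s : Set α}
    (hφ : Function.Bijective φ) (hs : EqOn φ id sᶜ) : φ '' s = s := by
  rw [← compl_inj_iff, ← image_compl_eq hφ, hs.image_eq, image_id]

lemma exists_mem_segment_frontier {E : Type*} [AddCommGroup E] [Module ℝ E] [TopologicalSpace E]
    [ContinuousAdd E] [ContinuousSMul ℝ E] {s : Set E} {x y : E} (hx : x ∈ s) (hy : y ∉ s) :
    ∃ z ∈ segment ℝ x y, z ∈ frontier s := by
  by_contra! hno
  have hcover : segment ℝ x y ⊆ interior s ∪ (closure s)ᶜ := fun z hz => by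
    by_cases hzc : z ∈ closure s
    · exact Or.inl (by_contra fun hzi => hno z hz ⟨hzc, hzi⟩)
    · exact Or.inr hzc
  have hxi : x ∈ interior s := by
    by_contra hxi
    exact hno x (left_mem_segment ℝ x y) ⟨subset_closure hx, hxi⟩
  have hsub := (convex_segment x y).isPreconnected.subset_left_of_subset_union isOpen_interior
    isClosed_closure.isOpen_compl
    (disjoint_compl_right.mono_left (interior_subset.trans subset_closure)) hcover
    ⟨x, left_mem_segment ℝ x y, hxi⟩
  exact hy (interior_subset (hsub (right_mem_segment ℝ x y)))

lemma lipschitzWith_indicator_of_frontier {E F : Type*} [NormedAddCommGroup E] [NormedSpace ℝ E]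
    [NormedAddCommGroup F] {f : E → F} {K : ℝ≥0} {s : Set E} (hs : IsClosed s)
    (hf : LipschitzOnWith K f s) (hf0 : ∀ x ∈ frontier s, f x = 0) :
    LipschitzWith K (s.indicator f) := by
  have hcross : ∀ x ∈ s, ∀ y ∉ s, dist (s.indicator f x) (s.indicator f y) ≤ K * dist x y := by
    intro x hx y hy
    obtain ⟨z, hz, hzs⟩ := exists_mem_segment_frontier hx hy
    calc dist (s.indicator f x) (s.indicator f y) = dist (f x) (f z) := by
          rw [indicator_of_mem hx, indicator_of_notMem hy, hf0 z hzs]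
      _ ≤ K * dist x z := hf.dist_le_mul x hx z (hs.frontier_subset hzs)
      _ ≤ K * dist x y := by
          gcongr
          linarith [dist_add_dist_of_mem_segment hz, dist_nonneg (x := z) (y := y)]
  refine LipschitzWith.of_dist_le_mul fun x y => ?_
  by_cases hx : x ∈ s <;> by_cases hy : y ∈ s
  · simpa only [indicator_of_mem hx, indicator_of_mem hy] using hf.dist_le_mul x hx y hy
  · exact hcross x hx y hy
  · simpa only [dist_comm] using hcross y hy x hx
  · rw [indicator_of_notMem hx, indicator_of_notMem hy, dist_self]
    positivity

section ChangeOfVariables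

variable {E : Type*} [NormedAddCommGroup E] [NormedSpace ℝ E] [FiniteDimensional ℝ E]
  [MeasurableSpace E] [BorelSpace E] (μ : Measure E) [μ.IsAddHaarMeasure]

lemma setIntegral_det_one_add_of_contractingWith {s : Set E} (hs : IsOpen s) {h : E → E}
    {K : ℝ≥0} (hh : ContractingWith K h) (h0 : ∀ x ∉ s, h x = 0) {h' : E → E →L[ℝ] E}
    (hd : ∀ x ∈ s, HasFDerivAt h (h' x) x) :
    ∫ x in s, (1 + h' x).det ∂μ = μ.real s := by
  have := FiniteDimensional.complete ℝ E
  have hbij := bijective_id_add_of_contractingWith hh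
  have hderiv : ∀ x ∈ s, HasFDerivWithinAt (fun x => x + h x) (1 + h' x) s x :=
    fun x hx => ((hasFDerivAt_id x).add (hd x hx)).hasFDerivWithinAt
  have himage : (fun x => x + h x) '' s = s :=
    image_eq_self_of_bijective_of_eqOn_compl hbij fun x hx => by simp [h0 x hx]
  have hpos : ∀ x ∈ s, 0 < (1 + h' x).det := fun x hx =>
    det_one_add_pos_of_norm_lt_one
      (((hd x hx).le_of_lipschitz hh.toLipschitzWith).trans_lt (by exact_mod_cast hh.1))
  calc ∫ x in s, (1 + h' x).det ∂μ
      = ∫ x in s, |(1 + h' x).det| • (1 : ℝ) ∂μ :=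
        setIntegral_congr_fun hs.measurableSet fun x hx => by simp [abs_of_pos (hpos x hx)]
    _ = ∫ _ in s, (1 : ℝ) ∂μ := by
        rw [← integral_image_eq_integral_abs_det_fderiv_smul μ hs.measurableSet hderiv
          hbij.injective.injOn fun _ => 1, himage]
    _ = μ.real s := by simp

/-- The integral of `det (1 + t h')` is a polynomial in `t`, constant for small `t`. -/
lemma setIntegral_det_one_add_of_lipschitzWith {s : Set E} (hs : IsOpen s)
    (hsb : Bornology.IsBounded s) {h : E → E} {K : ℝ≥0} (hh : LipschitzWith K h)
    (h0 : ∀ x ∉ s, h x = 0) {h' : E → E →L[ℝ] E} (hd : ∀ x ∈ s, HasFDerivAt h (h' x) x)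
    (hc : ContinuousOn h' (closure s)) :
    ∫ x in s, (1 + h' x).det ∂μ = μ.real s := by
  obtain ⟨T, L, hT, hL⟩ :=
    exists_quadrature_at_one (Ico_infinite (a := (0 : ℝ)) (b := (K + 1)⁻¹) (by positivity))
      (finrank ℝ E)
  have hpoint : ∀ x, (1 + h' x).det = ∑ t ∈ T, L t * (1 + t • h' x).det := fun x => by
    obtain ⟨q, hq, hqe⟩ := exists_polynomial_det_one_add_smul (h' x)
    simp_rw [hqe, ← hL q hq, ← hqe, one_smul]
  have hint : ∀ t ∈ T, IntegrableOn (fun x => L t * (1 + t • h' x).det) s μ := fun t _ => by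
    refine IntegrableOn.mono_set ?_ subset_closure
    refine ContinuousOn.integrableOn_compact hsb.isCompact_closure (continuousOn_const.mul ?_)
    exact ContinuousLinearMap.continuous_det.comp_continuousOn
      (continuousOn_const.add (hc.const_smul t))
  have hvol : ∀ t ∈ T, ∫ x in s, (1 + t • h' x).det ∂μ = μ.real s := fun t ht => by
    obtain ⟨ht0, ht1⟩ := hT ht
    have hcontr : ContractingWith (‖t‖₊ * K) (t • h) := by
      refine ⟨?_, (lipschitzWith_smul t).comp hh⟩
      rw [← NNReal.coe_lt_coe, NNReal.coe_mul, coe_nnnorm, Real.norm_of_nonneg ht0]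
      calc t * K ≤ t * (K + 1) := by gcongr; linarith
        _ < 1 := by rwa [← lt_div_iff₀ (by positivity), one_div]
    exact setIntegral_det_one_add_of_contractingWith μ hs hcontr
      (fun x hx => by simp [h0 x hx]) fun x hx => (hd x hx).const_smul t
  calc ∫ x in s, (1 + h' x).det ∂μ = ∑ t ∈ T, L t * ∫ x in s, (1 + t • h' x).det ∂μ := by
        simp_rw [hpoint, integral_finsetSum T hint, integral_const_mul]
    _ = ∑ t ∈ T, L t * μ.real s := Finset.sum_congr rfl fun t ht => by rw [hvol t ht]
    _ = μ.real s := by simpa using (hL (C (μ.real s)) (by simp)).symm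

end ChangeOfVariables

lemma det_eq_zero_of_norm_eventually_const {E : Type*} [NormedAddCommGroup E]
    [InnerProductSpace ℝ E] [FiniteDimensional ℝ E] {G : E → E} {G' : E →L[ℝ] E} {x : E} {r : ℝ}
    (hr : r ≠ 0) (hG : HasFDerivAt G G' x) (hnorm : ∀ᶠ y in nhds x, ‖G y‖ = r) : G'.det = 0 := by
  have hortho : ∀ v, inner ℝ (G x) (G' v) = 0 := fun v => by
    have hconst : HasFDerivAt (fun y => inner ℝ (G y) (G y)) (0 : E →L[ℝ] ℝ) x := by
      refine (hasFDerivAt_const (r ^ 2) x).congr_of_eventuallyEq ?_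
      filter_upwards [hnorm] with y hy
      rw [real_inner_self_eq_norm_sq, hy]
    have happly := congrArg (· v) ((hG.inner ℝ hG).unique hconst)
    have hsum : inner ℝ (G x) (G' v) + inner ℝ (G' v) (G x) = 0 := by
      simpa [fderivInnerCLM_apply] using happly
    linarith [real_inner_comm (G x) (G' v)]
  by_contra hdet
  have hunit : IsUnit (G' : E →ₗ[ℝ] E) :=
    (LinearMap.isUnit_iff_isUnit_det _).2 (isUnit_iff_ne_zero.2 hdet)
  obtain ⟨v, hv⟩ := ((Module.End.isUnit_iff _).1 hunit).2 (G x)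
  have hGx : inner ℝ (G x) (G x) = 0 := by
    nth_rw 2 [← hv]
    exact hortho v
  rw [real_inner_self_eq_norm_sq, hnorm.self_of_nhds] at hGx
  exact hr (by simpa using hGx)

lemma not_exists_contDiffOn_retraction_sphere {E : Type*} [NormedAddCommGroup E]
    [InnerProductSpace ℝ E] [FiniteDimensional ℝ E] {r : ℝ} (hr : 0 < r) {U : Set E}
    (hU : IsOpen U) (hBU : closedBall 0 r ⊆ U) :
    ¬∃ G : E → E, ContDiffOn ℝ 1 G U ∧ MapsTo G U (sphere 0 r) ∧ EqOn G id (sphere 0 r) := by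
  rintro ⟨G, hG, hGU, hGid⟩
  borelize E
  set H : E → E := fun x => G x - x with hH
  have hHC : ContDiffOn ℝ 1 H U := hG.sub contDiffOn_id
  have hHd : ∀ x ∈ U, HasFDerivAt H (fderiv ℝ H x) x := fun x hx =>
    ((hHC.differentiableOn one_ne_zero).differentiableAt (hU.mem_nhds hx)).hasFDerivAt
  have hH0 : ∀ x ∈ sphere (0 : E) r, H x = 0 := fun x hx => by simp [hH, hGid hx]
  have hcont : ContinuousOn (fderiv ℝ H) (closedBall 0 r) :=
    (hHC.continuousOn_fderiv_of_isOpen hU le_rfl).mono hBU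
  obtain ⟨K, hK⟩ := (hHC.mono hBU).exists_lipschitzOnWith one_ne_zero (convex_closedBall 0 r)
    (isCompact_closedBall 0 r)
  have hLip : LipschitzWith K ((closedBall 0 r).indicator H) :=
    lipschitzWith_indicator_of_frontier isClosed_closedBall hK fun x hx =>
      hH0 x (by rwa [frontier_closedBall _ hr.ne'] at hx)
  have hzero : ∀ x ∉ ball (0 : E) r, (closedBall 0 r).indicator H x = 0 := fun x hx =>
    indicator_apply_eq_zero.2 fun hxc => hH0 x (mem_sphere.2 (le_antisymm hxc (not_lt.1 hx)))
  have hder : ∀ x ∈ ball (0 : E) r,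
      HasFDerivAt ((closedBall 0 r).indicator H) (fderiv ℝ H x) x := fun x hx => by
    refine (hHd x (hBU (ball_subset_closedBall hx))).congr_of_eventuallyEq ?_
    filter_upwards [isOpen_ball.mem_nhds hx] with y hy
    exact indicator_of_mem (ball_subset_closedBall hy) H
  have hdet : ∀ x ∈ ball (0 : E) r, (1 + fderiv ℝ H x).det = 0 := fun x hx => by
    have hxU := hBU (ball_subset_closedBall hx)
    have hGx : HasFDerivAt G (1 + fderiv ℝ H x) x := by
      refine ((hasFDerivAt_id x).add (hHd x hxU)).congr_of_eventuallyEq (.of_forall fun y => ?_)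
      simp [hH]
    refine det_eq_zero_of_norm_eventually_const hr.ne' hGx ?_
    filter_upwards [hU.mem_nhds hxU] with y hy using mem_sphere_zero_iff_norm.1 (hGU hy)
  have hvol := setIntegral_det_one_add_of_lipschitzWith Measure.addHaar isOpen_ball isBounded_ball
    hLip hzero hder (by rwa [closure_ball _ hr.ne'])
  rw [setIntegral_congr_fun measurableSet_ball hdet, integral_zero] at hvol
  exact (ENNReal.toReal_pos (measure_ball_pos _ _ hr).ne' measure_ball_lt_top.ne).ne hvol

lemma exists_eq_of_contDiff_of_norm_le {E : Type*} [NormedAddCommGroup E] [InnerProductSpace ℝ E]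
    [FiniteDimensional ℝ E] {g : E → E} (hg : ContDiff ℝ 1 g) {R : ℝ} (hgR : ∀ x, ‖g x‖ ≤ R) :
    ∃ x, g x = x := by
  by_contra! hno
  have hR : 0 < R + 1 := by linarith [(norm_nonneg _).trans (hgR 0)]
  let χ : ContDiffBump (0 : E) := ⟨R + 1, 2 * (R + 1), hR, by linarith⟩
  set F : E → E := fun x => x - χ x • g x with hF
  have hFC : ContDiff ℝ 1 F := contDiff_id.sub (χ.contDiff.smul hg)
  have hF0 : ∀ x, F x ≠ 0 := fun x hx => by
    have hx' : x = χ x • g x := sub_eq_zero.1 hx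
    have hxR : ‖x‖ ≤ R := by
      rw [hx', norm_smul, Real.norm_of_nonneg χ.nonneg]
      exact (mul_le_of_le_one_left (norm_nonneg _) χ.le_one).trans (hgR x)
    have hχ : χ x = 1 := χ.one_of_mem_closedBall (by simp [χ]; linarith)
    rw [hχ, one_smul] at hx'
    exact hno x hx'.symm
  have hFid : ∀ x ∈ sphere (0 : E) (2 * (R + 1)), F x = x := fun x hx => by
    have hχ : χ x = 0 := χ.zero_of_le_dist (mem_sphere.1 hx).ge
    simp [hF, hχ]
  refine not_exists_contDiffOn_retraction_sphere (by positivity) isOpen_univ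
    (subset_univ (closedBall (0 : E) (2 * (R + 1))))
    ⟨fun x => (2 * (R + 1) * ‖F x‖⁻¹) • F x, ?_, fun x _ => ?_, fun x hx => ?_⟩
  · exact ((contDiff_const.mul ((hFC.norm ℝ hF0).inv fun x => norm_ne_zero_iff.2 (hF0 x))).smul
      hFC).contDiffOn
  · have := norm_ne_zero_iff.2 (hF0 x)
    simp [norm_smul, this, abs_of_pos hR]
  · simp only [id, hFid x hx]
    rw [mem_sphere_zero_iff_norm.1 hx, mul_inv_cancel₀ (by positivity), one_smul]

open scoped Manifold in
lemma exists_contDiff_norm_sub_lt {E F : Type*} [NormedAddCommGroup E] [NormedSpace ℝ E]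
    [FiniteDimensional ℝ E] [NormedAddCommGroup F] [NormedSpace ℝ F] {f : E → F}
    (hf : Continuous f) {δ : ℝ} (hδ : 0 < δ) :
    ∃ g : E → F, ContDiff ℝ 1 g ∧ ∀ x, ‖g x - f x‖ < δ := by
  obtain ⟨g, hg⟩ := exists_contMDiffMap_forall_mem_convex_of_local_const 𝓘(ℝ, E) (n := 1)
    (t := fun x => ball (f x) δ) (fun x => convex_ball _ _) fun x => ⟨f x, by
      filter_upwards [hf.continuousAt.preimage_mem_nhds (ball_mem_nhds (f x) hδ)] with y hy
      exact mem_ball_comm.1 hy⟩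
  exact ⟨g, g.contMDiff.contDiff, fun x => by simpa [dist_eq_norm] using hg x⟩

lemma exists_eq_of_continuous_of_norm_le {E : Type*} [NormedAddCommGroup E] [InnerProductSpace ℝ E]
    [FiniteDimensional ℝ E] {f : E → E} (hf : Continuous f) {R : ℝ} (hfR : ∀ x, ‖f x‖ ≤ R) :
    ∃ x, f x = x := by
  have happrox : ∀ δ > 0, δ ≤ 1 → ∃ x ∈ closedBall (0 : E) (R + 1), ‖x - f x‖ < δ := by
    intro δ hδ hδ1
    obtain ⟨g, hg, hgf⟩ := exists_contDiff_norm_sub_lt hf hδ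
    have hgR : ∀ x, ‖g x‖ ≤ R + 1 := fun x => by
      linarith [norm_le_norm_add_norm_sub (f x) (g x), norm_sub_rev (f x) (g x), hfR x, hgf x]
    obtain ⟨x, hx⟩ := exists_eq_of_contDiff_of_norm_le hg hgR
    exact ⟨x, by simpa [hx] using hgR x, by simpa [hx] using hgf x⟩
  have hR : (closedBall (0 : E) (R + 1)).Nonempty :=
    nonempty_closedBall.2 (by linarith [(norm_nonneg _).trans (hfR 0)])
  obtain ⟨x, -, hmin⟩ := (isCompact_closedBall (0 : E) (R + 1)).exists_isMinOn hR
    (continuous_id.sub hf).norm.continuousOn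
  by_contra! hno
  have hpos : 0 < ‖x - f x‖ := norm_pos_iff.2 (sub_ne_zero.2 (hno x).symm)
  obtain ⟨y, hy, hlt⟩ := happrox (min ‖x - f x‖ 1) (lt_min hpos one_pos) (min_le_right _ _)
  exact (hlt.trans_le (min_le_left _ _)).not_ge (hmin hy)

theorem brouwer_fixed_point {E : Type*} [NormedAddCommGroup E] [NormedSpace ℝ E]
    [FiniteDimensional ℝ E] {f : E → E} (hf : Continuous f)
    (hfb : Bornology.IsBounded (range f)) : ∃ x, Function.IsFixedPt f x := by
  let e : E ≃L[ℝ] EuclideanSpace ℝ (Fin (finrank ℝ E)) := toEuclidean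
  obtain ⟨R, hR⟩ := (e.lipschitz.isBounded_image hfb).exists_norm_le
  obtain ⟨y, hy⟩ := exists_eq_of_continuous_of_norm_le (f := e ∘ f ∘ e.symm) (by fun_prop)
    (fun y => hR _ ⟨_, ⟨e.symm y, rfl⟩, rfl⟩)
  exact ⟨e.symm y, e.eq_symm_apply.2 hy⟩

lemma eq_zero_of_max_min_add_eq {a b x s : ℝ} (hab : a ≤ b) (hx : max a (min b (x + s)) = x)
    (ha : x = a → 0 ≤ s) (hb : x = b → s ≤ 0) : s = 0 := by
  grind

theorem poincare_miranda {ι : Type*} [Finite ι] {lo hi : ι → ℝ} (hlh : lo ≤ hi)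
    {S : (ι → ℝ) → ι → ℝ} (hS : ContinuousOn S (Icc lo hi))
    (hlo : ∀ x ∈ Icc lo hi, ∀ i, x i = lo i → 0 ≤ S x i)
    (hhi : ∀ x ∈ Icc lo hi, ∀ i, x i = hi i → S x i ≤ 0) :
    ∃ x ∈ Icc lo hi, S x = 0 := by
  cases nonempty_fintype ι
  let c : (ι → ℝ) → ι → ℝ := fun x => lo ⊔ (hi ⊓ x)
  have hcI : ∀ x, c x ∈ Icc lo hi := fun x => ⟨le_sup_left, sup_le hlh inf_le_left⟩
  have hcc : Continuous c := by
    refine continuous_pi fun i => ?_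
    simp only [c, Pi.sup_apply, Pi.inf_apply]
    fun_prop
  have hSc : Continuous fun x => S (c x) := hS.comp_continuous hcc hcI
  obtain ⟨x, hx⟩ := brouwer_fixed_point (hcc.comp (hcc.add hSc))
    (isCompact_Icc.isBounded.subset (range_subset_iff.2 fun x => hcI _))
  have hxI : x ∈ Icc lo hi := hx ▸ hcI _
  have hcx : c x = x := by simp only [c, inf_eq_right.2 hxI.2, sup_eq_right.2 hxI.1]
  refine ⟨x, hxI, funext fun i => eq_zero_of_max_min_add_eq (hlh i) ?_ (hlo x hxI i) (hhi x hxI i)⟩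
  have h : c (c x + S (c x)) = x := hx
  rw [hcx] at h
  exact congrFun h i

end Brouwer

section Equilibria

open Finset

/-- Equilibrium of mutually repelling particles: each particle, at position `t i` with charge
`m i`, feels the other particles, a wall at `0` carrying `κ` times its own charge, and a constant
external force `θ` pushing it towards the wall. The term `j = i` of the sum is `m i / 0 = 0`. -/
structure IsEquilibrium {F ι : Type*} [Field F] [Fintype ι] (m t : ι → F) (κ θ : F) : Prop where
  injective : Function.Injective t
  balance : ∀ i, ∑ j, m j / (t i - t j) + κ * m i / t i = θ

lemma two_mul_sum_mul_sum_div_sub {F ι : Type*} [Field F] (A : Finset ι) (m t φ : ι → F) :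
    2 * ∑ i ∈ A, m i * φ i * ∑ j ∈ A, m j / (t i - t j) =
      ∑ i ∈ A, ∑ j ∈ A, m i * m j * ((φ i - φ j) / (t i - t j)) := by
  have hswap : ∑ i ∈ A, ∑ j ∈ A, m i * m j * (φ j / (t i - t j)) =
      -∑ i ∈ A, m i * φ i * ∑ j ∈ A, m j / (t i - t j) := by
    rw [sum_comm, ← sum_neg_distrib]
    refine sum_congr rfl fun i _ => ?_
    rw [mul_sum, ← sum_neg_distrib]
    refine sum_congr rfl fun j _ => ?_
    rw [← neg_sub (t i), div_neg]
    ring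
  simp_rw [sub_div, mul_sub, sum_sub_distrib]
  rw [hswap, sub_neg_eq_add, two_mul]
  congr 1
  simp_rw [mul_sum]
  exact sum_congr rfl fun i _ => sum_congr rfl fun j _ => by ring

/-- Total force on the cluster of particles `i ≥ r`, at positions `t i` with charges `m (t i)`,
when the external force is `1`; the forces internal to the cluster cancel and are left out. -/
noncomputable def clusterForce {n : ℕ} (m : ℝ → ℝ) (κ : ℝ) (t : Fin n → ℝ) (r : Fin n) : ℝ :=
  ∑ i ∈ Ici r, m (t i) * (∑ j ∈ Iio r, m (t j) / (t i - t j) + κ * m (t i) / t i - 1)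

section ClusterForce

variable {n : ℕ} {m : ℝ → ℝ} {κ : ℝ} {t : Fin n → ℝ} {r : Fin n}

lemma clusterForce_pos (hm0 : ∀ x, 0 < x → 0 < m x) (hm : AntitoneOn m (Set.Ioi 0)) (hκ : 0 ≤ κ)
    (ht0 : ∀ i, 0 < t i) (ht : StrictMono t)
    (hr : n < ∑ j ∈ Iio r, m (t j) / (t r - t j) + κ * m (t r) / t r) :
    0 < clusterForce m κ t r := by
  have hmt : ∀ i, 0 < m (t i) := fun i => hm0 _ (ht0 i)
  have hforce : ∀ i ∈ Ici r,
      0 ≤ m (t i) * (∑ j ∈ Iio r, m (t j) / (t i - t j) + κ * m (t i) / t i) := fun i hi => by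
    refine mul_nonneg (hmt i).le (add_nonneg (sum_nonneg fun j hj => ?_) ?_)
    · exact div_nonneg (hmt j).le
        (sub_nonneg.2 (ht ((mem_Iio.1 hj).trans_le (mem_Ici.1 hi))).le)
    · exact div_nonneg (mul_nonneg hκ (hmt i).le) (ht0 i).le
  simp_rw [clusterForce, mul_sub, sum_sub_distrib, mul_one, sub_pos]
  calc ∑ i ∈ Ici r, m (t i) ≤ #(Ici r) • m (t r) := sum_le_card_nsmul _ _ _ fun i hi =>
        hm (ht0 r) (ht0 i) (ht.monotone (mem_Ici.1 hi))
    _ ≤ n * m (t r) := by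
        rw [nsmul_eq_mul]
        gcongr
        · exact (hmt r).le
        · exact card_finset_fin_le _
    _ < m (t r) * (∑ j ∈ Iio r, m (t j) / (t r - t j) + κ * m (t r) / t r) := by
        rw [mul_comm]
        exact mul_lt_mul_of_pos_left hr (hmt r)
    _ ≤ _ := single_le_sum hforce (mem_Ici.2 le_rfl)

lemma clusterForce_neg {C H : ℝ} (hκ : 0 ≤ κ) (hm : ∀ i, 0 < m (t i)) (hC : ∀ i, m (t i) ≤ C)
    (hdist : ∀ j < r, ∀ i ≥ r, H ≤ t i - t j) (hwall : ∀ i ≥ r, H ≤ t i) (hH : (n + κ) * C < H) :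
    clusterForce m κ t r < 0 := by
  have hC0 : 0 < C := (hm r).trans_le (hC r)
  have hH0 : 0 < H := lt_of_le_of_lt (by positivity) hH
  refine sum_neg (fun i hi => mul_neg_of_pos_of_neg (hm i) (sub_neg.2 ?_)) ⟨r, mem_Ici.2 le_rfl⟩
  have hi := mem_Ici.1 hi
  calc ∑ j ∈ Iio r, m (t j) / (t i - t j) + κ * m (t i) / t i
      ≤ #(Iio r) • (C / H) + κ * C / H := by
        gcongr
        · exact sum_le_card_nsmul _ _ _ fun j hj =>
            div_le_div₀ hC0.le (hC j) hH0 (hdist j (mem_Iio.1 hj) i hi)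
        · exact hC i
        · exact hwall i hi
    _ ≤ n * (C / H) + κ * C / H := by
        rw [nsmul_eq_mul]
        gcongr
        exact card_finset_fin_le _
    _ = (n + κ) * C / H := by ring
    _ < 1 := (div_lt_one hH0).2 hH

lemma clusterForce_eq_sum_force (m : ℝ → ℝ) (κ : ℝ) (t : Fin n → ℝ) (r : Fin n) :
    clusterForce m κ t r =
      ∑ i ∈ Ici r, m (t i) * (∑ j, m (t j) / (t i - t j) + κ * m (t i) / t i - 1) := by
  have hinternal : ∑ i ∈ Ici r, m (t i) * ∑ j ∈ Ici r, m (t j) / (t i - t j) = 0 := by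
    simpa using two_mul_sum_mul_sum_div_sub (Ici r) (m ∘ t) t fun _ => 1
  have hsplit : ∀ i, ∑ j, m (t j) / (t i - t j) =
      ∑ j ∈ Iio r, m (t j) / (t i - t j) + ∑ j ∈ Ici r, m (t j) / (t i - t j) := fun i => by
    rw [← sum_filter_add_sum_filter_not univ (· < r)]
    congr 2 <;> ext <;> simp
  rw [clusterForce, ← add_zero (∑ i ∈ Ici r, _), ← hinternal, ← sum_add_distrib]
  exact sum_congr rfl fun i _ => by rw [hsplit]; ring

lemma isEquilibrium_of_clusterForce_eq_zero (hm : ∀ i, 0 < m (t i)) (ht : Function.Injective t)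
    (h : clusterForce m κ t = 0) : IsEquilibrium (fun i => m (t i)) t κ 1 := by
  refine ⟨ht, fun r => sub_eq_zero.1 ?_⟩
  induction r using WellFoundedGT.induction with
  | ind r ih =>
    have hr : clusterForce m κ t r = 0 := congrFun h r
    rw [clusterForce_eq_sum_force, ← Ioi_insert, sum_insert (by simp), sum_eq_zero (s := Ioi r),
      add_zero] at hr
    · exact (mul_eq_zero.1 hr).resolve_left (hm r).ne'
    · exact fun i hi => by rw [ih i (mem_Ioi.1 hi), mul_zero]

lemma continuousOn_clusterForce (hm : ContinuousOn m (Set.Ioi 0)) :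
    ContinuousOn (clusterForce (n := n) m κ) {t | (∀ i, 0 < t i) ∧ StrictMono t} := by
  have hmt : ∀ i : Fin n, ContinuousOn (fun t : Fin n → ℝ => m (t i))
      {t | (∀ i, 0 < t i) ∧ StrictMono t} := fun i =>
    hm.comp (continuous_apply i).continuousOn fun t ht => ht.1 i
  refine continuousOn_pi.2 fun r => continuousOn_finsetSum _ fun i hi => (hmt i).mul ?_
  refine ((continuousOn_finsetSum _ fun j hj => ?_).add ?_).sub continuousOn_const
  · refine (hmt j).div (by fun_prop) fun t ht => (sub_pos.2 (ht.2 ?_)).ne'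
    exact (mem_Iio.1 hj).trans_le (mem_Ici.1 hi)
  · exact (continuousOn_const.mul (hmt i)).div (by fun_prop) fun t ht => (ht.1 i).ne'

end ClusterForce

/-- The point of index `i` of the configuration whose successive gaps, starting from `0`,
are `g`. -/
def gapSum {n : ℕ} (g : Fin n → ℝ) (i : Fin n) : ℝ :=
  ∑ j ∈ Iic i, g j

section GapSum

variable {n : ℕ} {g : Fin n → ℝ} {i j r : Fin n}

lemma le_gapSum (hg : 0 ≤ g) (hr : r ≤ i) : g r ≤ gapSum g i :=
  single_le_sum (fun l _ => hg l) (mem_Iic.2 hr)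

lemma gapSum_add_le (hg : 0 ≤ g) (hj : j < r) (hr : r ≤ i) :
    gapSum g j + g r ≤ gapSum g i := by
  rw [gapSum, add_comm, ← sum_insert (by simpa using hj)]
  refine sum_le_sum_of_subset_of_nonneg (fun l hl => ?_) fun l _ _ => hg l
  grind

lemma gapSum_le {H : ℝ} (hH : 0 ≤ H) (hg : ∀ i, g i ≤ H) (i : Fin n) : gapSum g i ≤ n * H :=
  (sum_le_card_nsmul _ _ H fun l _ => hg l).trans <| by
    rw [nsmul_eq_mul]
    gcongr
    exact card_finset_fin_le _

lemma gapSum_zero (g : Fin (n + 1) → ℝ) : gapSum g 0 = g 0 := by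
  rw [gapSum, ← bot_eq_zero, Iic_bot, sum_singleton]

lemma gapSum_succ (g : Fin (n + 1) → ℝ) (j : Fin n) :
    gapSum g j.succ = gapSum g j.castSucc + g j.succ := by
  have : Iic j.succ = insert j.succ (Iic j.castSucc) := by
    ext l
    simp [Fin.le_def, Fin.ext_iff]
    omega
  rw [gapSum, this, sum_insert (by simp), add_comm, gapSum]

lemma gapSum_pos (hg : ∀ i, 0 < g i) (i : Fin n) : 0 < gapSum g i :=
  (hg i).trans_le (le_gapSum (fun l => (hg l).le) le_rfl)

lemma strictMono_gapSum (hg : ∀ i, 0 < g i) : StrictMono (gapSum g) := fun j r hjr => by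
  linarith [gapSum_add_le (fun l => (hg l).le) hjr le_rfl, hg r]

end GapSum

section Existence

variable {n : ℕ} {m : ℝ → ℝ} {κ : ℝ} {g : Fin (n + 1) → ℝ}

lemma clusterForce_gapSum_zero_pos (hm0 : ∀ x, 0 < x → 0 < m x) (hm : AntitoneOn m (Set.Ioi 0))
    (hκ : 0 ≤ κ) (hg : ∀ i, 0 < g i) (hg1 : g 0 ≤ 1) (hg0 : (n + 2) * g 0 ≤ κ * m 1) :
    0 < clusterForce m κ (gapSum g) 0 := by
  refine clusterForce_pos hm0 hm hκ (gapSum_pos hg) (strictMono_gapSum hg) ?_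
  rw [← bot_eq_zero, Iio_bot, sum_empty, zero_add, bot_eq_zero, gapSum_zero, lt_div_iff₀ (hg 0)]
  calc ((n + 1 : ℕ) : ℝ) * g 0 < (n + 2) * g 0 := by
        gcongr
        · exact hg 0
        · push_cast
          linarith
    _ ≤ κ * m 1 := hg0
    _ ≤ κ * m (g 0) := by
        gcongr
        exact hm (hg 0) (Set.mem_Ioi.2 one_pos) hg1

lemma clusterForce_gapSum_succ_pos {H : ℝ} (hm0 : ∀ x, 0 < x → 0 < m x)
    (hm : AntitoneOn m (Set.Ioi 0)) (hκ : 0 ≤ κ) (hg : ∀ i, 0 < g i) (hgH : ∀ i, g i ≤ H)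
    {j : Fin n} (hj : (n + 2) * g j.succ ≤ m ((n + 1) * H)) :
    0 < clusterForce m κ (gapSum g) j.succ := by
  have hmono := strictMono_gapSum hg
  have hpos := gapSum_pos hg
  have hH : 0 < H := (hg 0).trans_le (hgH 0)
  refine clusterForce_pos hm0 hm hκ hpos hmono ?_
  have hwall : 0 ≤ κ * m (gapSum g j.succ) / gapSum g j.succ :=
    div_nonneg (mul_nonneg hκ (hm0 _ (hpos _)).le) (hpos _).le
  have hterm : ∀ l ∈ Iio j.succ, 0 ≤ m (gapSum g l) / (gapSum g j.succ - gapSum g l) :=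
    fun l hl => div_nonneg (hm0 _ (hpos l)).le (sub_nonneg.2 (hmono (mem_Iio.1 hl)).le)
  calc ((n + 1 : ℕ) : ℝ) < n + 2 := by push_cast; linarith
    _ ≤ m ((n + 1) * H) / g j.succ := (le_div_iff₀ (hg _)).2 hj
    _ ≤ m (gapSum g j.castSucc) / (gapSum g j.succ - gapSum g j.castSucc) := by
        rw [gapSum_succ, add_sub_cancel_left]
        gcongr
        · exact (hg _).le
        · refine hm (hpos _) (by positivity : (0 : ℝ) < (n + 1) * H) ?_
          exact_mod_cast gapSum_le hH.le hgH j.castSucc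
    _ ≤ ∑ l ∈ Iio j.succ, m (gapSum g l) / (gapSum g j.succ - gapSum g l) :=
        single_le_sum hterm (mem_Iio.2 j.castSucc_lt_succ)
    _ ≤ _ := le_add_of_nonneg_right hwall

lemma clusterForce_gapSum_neg {C : ℝ} (hm0 : ∀ x, 0 < x → 0 < m x) (hm : AntitoneOn m (Set.Ioi 0))
    (hκ : 0 ≤ κ) (hg : ∀ i, 0 < g i) (hC : m (g 0) ≤ C) {r : Fin (n + 1)}
    (hr : (n + 1 + κ) * C < g r) : clusterForce m κ (gapSum g) r < 0 := by
  have hg' : 0 ≤ g := fun i => (hg i).le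
  refine clusterForce_neg hκ (fun i => hm0 _ (gapSum_pos hg i)) (fun i => ?_)
    (fun j hj i hi => ?_) (fun i hi => le_gapSum hg' hi) (by exact_mod_cast hr)
  · exact (hm (hg 0) (gapSum_pos hg i) (le_gapSum hg' (Fin.zero_le i))).trans hC
  · linarith [gapSum_add_le hg' hj hi]

/-- Poincaré–Miranda applied to the cluster forces as functions of the gaps: a tiny gap pushes the
cluster behind it outwards, while across a huge gap the external force wins. -/
theorem exists_isEquilibrium (n : ℕ) (hm0 : ∀ x, 0 < x → 0 < m x)
    (hm : AntitoneOn m (Set.Ioi 0)) (hmc : ContinuousOn m (Set.Ioi 0)) (hκ : 0 < κ) :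
    ∃ t : Fin (n + 1) → ℝ, (∀ i, 0 < t i) ∧ IsEquilibrium (fun i => m (t i)) t κ 1 := by
  set ε := min 1 (κ * m 1 / (n + 2))
  set H := max 1 ((n + 1 + κ) * m ε + 1)
  set δ := min 1 (m ((n + 1) * H) / (n + 2))
  have hH0 : 0 < H := one_pos.trans_le (le_max_left _ _)
  have hε0 : 0 < ε := lt_min one_pos (div_pos (mul_pos hκ (hm0 1 one_pos)) (by positivity))
  have hδ0 : 0 < δ := lt_min one_pos (div_pos (hm0 _ (by positivity)) (by positivity))
  let lo : Fin (n + 1) → ℝ := Fin.cons ε fun _ => δ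
  have hlo0 : ∀ i, 0 < lo i := Fin.cases hε0 fun _ => hδ0
  have hlo1 : ∀ i, lo i ≤ 1 := Fin.cases (min_le_left _ _) fun _ => min_le_left _ _
  have hpos : ∀ g ∈ Set.Icc lo fun _ => H, ∀ i, 0 < g i := fun g hg i => (hlo0 i).trans_le (hg.1 i)
  have hcont : ContinuousOn (fun g => clusterForce m κ (gapSum g)) (Set.Icc lo fun _ => H) :=
    (continuousOn_clusterForce hmc).comp (by unfold gapSum; fun_prop) fun g hg =>
      ⟨gapSum_pos (hpos g hg), strictMono_gapSum (hpos g hg)⟩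
  have hface_lo : ∀ g ∈ Set.Icc lo fun _ => H, ∀ r, g r = lo r →
      0 ≤ clusterForce m κ (gapSum g) r := fun g hg => Fin.cases
    (fun h : g 0 = ε => by
      refine (clusterForce_gapSum_zero_pos hm0 hm hκ.le (hpos g hg) (h ▸ min_le_left _ _) ?_).le
      rw [h, ← le_div_iff₀' (by positivity)]
      exact min_le_right _ _)
    fun j (h : g j.succ = δ) => by
      refine (clusterForce_gapSum_succ_pos hm0 hm hκ.le (hpos g hg) hg.2 ?_).le
      rw [h, ← le_div_iff₀' (by positivity)]
      exact min_le_right _ _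
  have hface_hi : ∀ g ∈ Set.Icc lo fun _ => H, ∀ r, g r = H →
      clusterForce m κ (gapSum g) r ≤ 0 := fun g hg r h => by
    refine (clusterForce_gapSum_neg hm0 hm hκ.le (hpos g hg)
      (hm (Set.mem_Ioi.2 hε0) (hpos g hg 0) (hg.1 0)) ?_).le
    rw [h]
    exact (lt_add_one _).trans_le (le_max_right _ _)
  obtain ⟨g, hg, hg0⟩ := poincare_miranda (fun i => (hlo1 i).trans (le_max_left _ _)) hcont
    hface_lo hface_hi
  have hp := hpos g hg
  exact ⟨gapSum g, gapSum_pos hp, isEquilibrium_of_clusterForce_eq_zero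
    (fun i => hm0 _ (gapSum_pos hp i)) (strictMono_gapSum hp).injective hg0⟩

end Existence

end Equilibria

section Moments

open Finset

lemma pow_succ_sub_pow_succ_div_sub_le {a b : ℝ} (ha : 0 ≤ a) (hb : 0 ≤ b) (p : ℕ) :
    (a ^ (p + 1) - b ^ (p + 1)) / (a - b) ≤ (p + 1) * (a ^ p + b ^ p) := by
  rcases eq_or_ne a b with rfl | hab
  · rw [sub_self, sub_self, div_zero]
    positivity
  rw [← geom_sum₂_mul, mul_div_cancel_right₀ _ (sub_ne_zero.2 hab)]
  calc ∑ i ∈ range (p + 1), a ^ i * b ^ (p - i) ≤ #(range (p + 1)) • (a ^ p + b ^ p) := by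
        refine sum_le_card_nsmul _ _ _ fun i hi => ?_
        have hip : i + (p - i) = p := Nat.add_sub_cancel' (Nat.lt_succ_iff.1 (mem_range.1 hi))
        calc a ^ i * b ^ (p - i) ≤ max a b ^ i * max a b ^ (p - i) := by
              gcongr
              exacts [le_max_left _ _, le_max_right _ _]
          _ = max (a ^ p) (b ^ p) := by
              rw [← pow_add, hip, (pow_left_monotoneOn (n := p)).map_max ha hb]
          _ ≤ a ^ p + b ^ p := max_le_add_of_nonneg (pow_nonneg ha p) (pow_nonneg hb p)
    _ = _ := by rw [card_range, nsmul_eq_mul, Nat.cast_succ]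

/-- Force exerted at `u` on a unit charge by particles at positions `t i` with charges `m i` and by
the constant external force `θ`; the wall is left out. -/
def forceField {F ι : Type*} [Field F] [Fintype ι] (m t : ι → F) (θ u : F) : F :=
  ∑ i, m i / (u - t i) - θ

namespace IsEquilibrium

section Field

variable {F ι : Type*} [Field F] [Fintype ι] {m t : ι → F} {κ θ : F}

lemma map {K : Type*} [Field K] (h : IsEquilibrium m t κ θ) (f : F →+* K) :
    IsEquilibrium (fun i => f (m i)) (fun i => f (t i)) (f κ) (f θ) where
  injective := f.injective.comp h.injective
  balance i := by simp_rw [← h.balance i, map_add, map_sum, map_div₀, map_sub, map_mul]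

lemma two_mul_mul_sum (h : IsEquilibrium m t κ θ) (φ : ι → F) :
    2 * θ * ∑ i, m i * φ i = ∑ i, ∑ j, m i * m j * ((φ i - φ j) / (t i - t j)) +
      2 * κ * ∑ i, m i ^ 2 * φ i / t i := by
  rw [← two_mul_sum_mul_sum_div_sub univ, mul_assoc, mul_assoc, ← mul_add]
  congr 1
  rw [mul_sum, mul_sum, ← sum_add_distrib]
  refine sum_congr rfl fun i _ => ?_
  rw [← h.balance i]
  ring

lemma sq_forceField (h : IsEquilibrium m t κ θ) {u : F} (hu : ∀ i, u ≠ t i) :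
    forceField m t θ u ^ 2 =
      ∑ i, (m i ^ 2 / (u - t i) ^ 2 - 2 * κ * (m i ^ 2 / (t i * (u - t i)))) + θ ^ 2 := by
  classical
  have hu' : ∀ i, u - t i ≠ 0 := fun i => sub_ne_zero.2 (hu i)
  have hpair : ∀ i j, m i * m j * (((u - t i)⁻¹ - (u - t j)⁻¹) / (t i - t j)) =
      m i / (u - t i) * (m j / (u - t j)) - if i = j then m i ^ 2 / (u - t i) ^ 2 else 0 := by
    intro i j
    have := hu' i
    have := hu' j
    split_ifs with hij
    · subst hij
      rw [sub_self, sub_self, div_zero, mul_zero, sq, sq, mul_div_mul_comm, sub_self]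
    · have := sub_ne_zero.2 (h.injective.ne hij)
      field_simp
      ring
  have hvirial := h.two_mul_mul_sum fun i => (u - t i)⁻¹
  simp_rw [hpair, sum_sub_distrib, ← sum_mul_sum, sum_ite_eq, mem_univ, if_true,
    ← div_eq_mul_inv, div_div, mul_comm _ (t _)] at hvirial
  rw [forceField, sum_sub_distrib, ← mul_sum]
  linear_combination -hvirial

end Field

section Real

variable {ι : Type*} [Fintype ι] {m t : ι → ℝ} {κ θ : ℝ}

lemma mul_sum_le (h : IsEquilibrium m t κ θ) (hκ : 0 ≤ κ) (hm0 : ∀ i, 0 ≤ m i)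
    (hm1 : ∀ i, m i ≤ 1) (ht : ∀ i, 0 < t i) : θ * ∑ i, m i ≤ κ * ∑ i, m i / t i := by
  have hbalance := h.two_mul_mul_sum fun _ => 1
  simp only [sub_self, zero_div, mul_zero, sum_const_zero, mul_one, zero_add] at hbalance
  have hsq : ∑ i, m i ^ 2 / t i ≤ ∑ i, m i / t i := sum_le_sum fun i _ =>
    div_le_div_of_nonneg_right (pow_le_of_le_one (hm0 i) (hm1 i) two_ne_zero) (ht i).le
  linarith [mul_le_mul_of_nonneg_left hsq hκ]

lemma mul_sum_pow_succ_le (h : IsEquilibrium m t κ θ) (hκ : 0 ≤ κ) (hm0 : ∀ i, 0 ≤ m i)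
    (hm1 : ∀ i, m i ≤ 1) (ht : ∀ i, 0 < t i) (p : ℕ) :
    θ * ∑ i, m i * t i ^ (p + 1) ≤ ((p + 1) * ∑ i, m i + κ) * ∑ i, m i * t i ^ p := by
  have hpair : ∑ i, ∑ j, m i * m j * ((t i ^ (p + 1) - t j ^ (p + 1)) / (t i - t j)) ≤
      2 * ((p + 1) * (∑ i, m i) * ∑ i, m i * t i ^ p) := calc
    _ ≤ ∑ i, ∑ j, m i * m j * ((p + 1) * (t i ^ p + t j ^ p)) := by
        gcongr with i _ j _
        · exact mul_nonneg (hm0 i) (hm0 j)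
        · exact pow_succ_sub_pow_succ_div_sub_le (ht i).le (ht j).le p
    _ = (p + 1) * (∑ i, ∑ j, m i * t i ^ p * m j + ∑ i, ∑ j, m i * (m j * t j ^ p)) := by
        simp_rw [← sum_add_distrib, mul_sum]
        exact sum_congr rfl fun i _ => sum_congr rfl fun j _ => by ring
    _ = _ := by
        rw [← sum_mul_sum, ← sum_mul_sum]
        ring
  have hself : ∑ i, m i ^ 2 * t i ^ (p + 1) / t i ≤ ∑ i, m i * t i ^ p := sum_le_sum fun i _ => by
    rw [pow_succ (t i), ← mul_assoc, mul_div_cancel_right₀ _ (ht i).ne']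
    exact mul_le_mul_of_nonneg_right (pow_le_of_le_one (hm0 i) (hm1 i) two_ne_zero)
      (pow_nonneg (ht i).le p)
  linarith [h.two_mul_mul_sum fun i => t i ^ (p + 1), mul_le_mul_of_nonneg_left hself hκ]

lemma sum_mul_pow_le (h : IsEquilibrium m t κ θ) (hκ : 0 ≤ κ) (hθ : 0 < θ) (hm0 : ∀ i, 0 ≤ m i)
    (hm1 : ∀ i, m i ≤ 1) (ht : ∀ i, 0 < t i) {A : ℝ} (hA : ∑ i, m i ≤ A) {k p : ℕ} (hp : p ≤ k) :
    ∑ i, m i * t i ^ p ≤ ((k * A + κ) / θ) ^ p * A := by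
  have hA0 : 0 ≤ A := (sum_nonneg fun i _ => hm0 i).trans hA
  induction p with
  | zero => simpa only [pow_zero, mul_one, one_mul] using hA
  | succ p ih =>
    have hpk : (p : ℝ) + 1 ≤ k := by exact_mod_cast hp
    calc ∑ i, m i * t i ^ (p + 1)
        ≤ ((p + 1) * ∑ i, m i + κ) * (∑ i, m i * t i ^ p) / θ :=
          (le_div_iff₀' hθ).2 (h.mul_sum_pow_succ_le hκ hm0 hm1 ht p)
      _ ≤ (k * A + κ) * (((k * A + κ) / θ) ^ p * A) / θ := by
          gcongr
          · exact sum_nonneg fun i _ => mul_nonneg (hm0 i) (pow_nonneg (ht i).le p)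
          · exact sum_nonneg fun i _ => hm0 i
          · exact ih (p.le_succ.trans hp)
      _ = ((k * A + κ) / θ) ^ (p + 1) * A := by ring

end Real

end IsEquilibrium

/-- Equilibrium of particles `T i` with charges `(T i)⁻ᵏ` and wall constant `k + 1/4`, in the units
of length for which `forceField _ T θ 0 = -1`. -/
structure IsNormalizedEquilibrium {ι : Type*} [Fintype ι] (k : ℕ) (T : ι → ℝ) (θ : ℝ) : Prop
    extends IsEquilibrium (fun i => (T i ^ k)⁻¹) T (k + 1 / 4) θ where
  pos : ∀ i, 0 < T i
  add_sum_eq_one : θ + ∑ i, (T i ^ (k + 1))⁻¹ = 1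

namespace IsNormalizedEquilibrium

variable {ι : Type*} [Fintype ι] {k : ℕ} {T : ι → ℝ} {θ : ℝ}

lemma sum_inv_pow_two_mul_add_two (h : IsNormalizedEquilibrium k T θ) :
    (4 * k + 3) / 2 * ∑ i, (T i ^ (2 * k + 2))⁻¹ = 1 - θ ^ 2 := by
  have hsq := h.sq_forceField fun i => (h.pos i).ne
  have hfst : ∀ i, (T i ^ k)⁻¹ / (0 - T i) = -(T i ^ (k + 1))⁻¹ := fun i => by
    rw [zero_sub, div_neg, pow_succ, mul_inv, div_eq_mul_inv]
  have hsnd : ∀ i, (T i ^ k)⁻¹ ^ 2 / (0 - T i) ^ 2 - 2 * (k + 1 / 4) *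
      ((T i ^ k)⁻¹ ^ 2 / (T i * (0 - T i))) = (4 * k + 3) / 2 * (T i ^ (2 * k + 2))⁻¹ := fun i => by
    have := (h.pos i).ne'
    field_simp
    ring
  simp_rw [forceField, hfst, hsnd, ← mul_sum, sum_neg_distrib] at hsq
  linear_combination -hsq + (1 + (θ + ∑ i, (T i ^ (k + 1))⁻¹)) * h.add_sum_eq_one

lemma one_le (h : IsNormalizedEquilibrium k T θ) (i : ι) : 1 ≤ T i := by
  have hle : (T i ^ (2 * k + 2))⁻¹ ≤ ∑ j, (T j ^ (2 * k + 2))⁻¹ :=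
    single_le_sum (f := fun j => (T j ^ (2 * k + 2))⁻¹)
      (fun j _ => (inv_pos.2 (pow_pos (h.pos j) _)).le) (mem_univ i)
  have hinv : (T i ^ (2 * k + 2))⁻¹ ≤ 1 := by
    nlinarith [h.sum_inv_pow_two_mul_add_two, sq_nonneg θ, k.cast_nonneg (α := ℝ),
      inv_pos.2 (pow_pos (h.pos i) (2 * k + 2))]
  rwa [inv_le_one₀ (pow_pos (h.pos i) _), one_le_pow_iff_of_nonneg (h.pos i).le (by omega)] at hinv

lemma card_le (h : IsNormalizedEquilibrium k T θ) (hθ : 0 < θ) :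
    (Fintype.card ι : ℝ) ≤
      ((k * ((k + 1 / 4) / θ) + (k + 1 / 4)) / θ) ^ k * ((k + 1 / 4) / θ) := by
  have hm0 : ∀ i, 0 ≤ (T i ^ k)⁻¹ := fun i => (inv_pos.2 (pow_pos (h.pos i) _)).le
  have hm1 : ∀ i, (T i ^ k)⁻¹ ≤ 1 := fun i => inv_le_one_of_one_le₀ (one_le_pow₀ (h.one_le i))
  have hκ : (0 : ℝ) ≤ k + 1 / 4 := by positivity
  have hA : ∑ i, (T i ^ k)⁻¹ ≤ (k + 1 / 4) / θ := by
    rw [le_div_iff₀' hθ]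
    refine (h.mul_sum_le hκ hm0 hm1 h.pos).trans (mul_le_of_le_one_right hκ ?_)
    simp_rw [div_eq_mul_inv, ← mul_inv, ← pow_succ]
    linarith [h.add_sum_eq_one]
  calc (Fintype.card ι : ℝ) = ∑ i, (T i ^ k)⁻¹ * T i ^ k := by
        simp_rw [inv_mul_cancel₀ (pow_pos (h.pos _) k).ne']
        simp
    _ ≤ _ := h.sum_mul_pow_le hκ hθ hm0 hm1 h.pos hA le_rfl

lemma of_isEquilibrium {t : ι → ℝ} (ht : ∀ i, 0 < t i)
    (h : IsEquilibrium (fun i => (t i ^ k)⁻¹) t (k + 1 / 4) 1) {μ : ℝ} (hμ : 0 < μ)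
    (hμk : μ ^ (k + 1) = 1 + ∑ i, (t i ^ (k + 1))⁻¹) :
    IsNormalizedEquilibrium k (fun i => μ * t i) (μ ^ (k + 1))⁻¹ where
  injective := (mul_right_injective₀ hμ.ne').comp h.injective
  balance i := by
    have hscale := congrArg ((μ ^ (k + 1))⁻¹ * ·) (h.balance i)
    simp only [mul_one, mul_add, mul_sum] at hscale
    rw [← hscale]
    simp_rw [← mul_sub, mul_pow, pow_succ, div_eq_mul_inv, mul_inv]
    congr 1
    · exact sum_congr rfl fun j _ => by ring
    · ring
  pos i := mul_pos hμ (ht i)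
  add_sum_eq_one := by
    simp_rw [mul_pow, mul_inv, ← mul_sum]
    rw [← mul_one_add, ← hμk, inv_mul_cancel₀ (pow_pos hμ _).ne']

lemma exists_lt (k : ℕ) {η : ℝ} (hη : 0 < η) :
    ∃ (n : ℕ) (T : Fin n → ℝ) (θ : ℝ), 0 < θ ∧ θ < η ∧ IsNormalizedEquilibrium k T θ := by
  obtain ⟨n, hn⟩ := exists_nat_gt
    (((k * ((k + 1 / 4) / η) + (k + 1 / 4)) / η) ^ k * ((k + 1 / 4) / η) : ℝ)
  obtain ⟨t, ht, heq⟩ := exists_isEquilibrium (m := fun x => (x ^ k)⁻¹) (κ := k + 1 / 4) n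
    (fun x hx => inv_pos.2 (pow_pos hx k))
    (fun x hx y _ hxy => inv_anti₀ (pow_pos hx k) (pow_le_pow_left₀ (le_of_lt hx) hxy k))
    (fun x hx => ((continuousAt_id.pow k).inv₀ (pow_pos hx k).ne').continuousWithinAt)
    (by positivity)
  have hs : 0 < 1 + ∑ i, (t i ^ (k + 1))⁻¹ :=
    add_pos_of_pos_of_nonneg one_pos (sum_nonneg fun i _ => (inv_pos.2 (pow_pos (ht i) _)).le)
  have hμ := Real.rpow_pos_of_pos hs ((k + 1 : ℕ) : ℝ)⁻¹
  have hnorm := of_isEquilibrium ht heq hμ (Real.rpow_inv_natCast_pow hs.le k.succ_ne_zero)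
  refine ⟨n + 1, _, _, inv_pos.2 (pow_pos hμ _), lt_of_not_ge fun hle => ?_, hnorm⟩
  refine hn.not_ge (?_ : (n : ℝ) ≤ _)
  calc (n : ℝ) ≤ Fintype.card (Fin (n + 1)) := by simp
    _ ≤ _ := hnorm.card_le (inv_pos.2 (pow_pos hμ _))
    _ ≤ _ := by gcongr

end IsNormalizedEquilibrium

end Moments

section FiniteZeros

open Finset Filter Topology

lemma sub_one_sq_mul_sum_range (R : Type*) [CommRing R] (x : R) (k n : ℕ) :
    (x - 1) ^ 2 * ∑ i ∈ range (n + 1), (2 * k + 2 * i + 1) * x ^ i =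
      2 * x - (2 * k + 1) * (x - 1) + ((2 * k + 2 * n + 1) * (x - 1) - 2) * x ^ (n + 1) := by
  induction n with
  | zero =>
    rw [zero_add, sum_range_one, Nat.cast_zero]
    ring
  | succ n ih =>
    rw [sum_range_succ, mul_add, ih]
    push_cast
    ring

lemma sum_range_mul_inv_pow_mul_pow {F : Type*} [Field F] {u T κ : F} {k : ℕ}
    (hκ : 4 * κ = 4 * k + 1) (hT : T ≠ 0) (hu : u ≠ T) :
    ∑ i ∈ range (k + 1), (2 * k + 2 * i + 1) * (T ^ (k + 1 + i))⁻¹ * u ^ i =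
      2 * u * ((T ^ k)⁻¹ / (u - T) ^ 2) - (2 * k + 1) * ((T ^ k)⁻¹ / (u - T)) -
        2 * u ^ (k + 1) * ((T ^ k)⁻¹ ^ 2 / (u - T) ^ 2 -
          2 * κ * ((T ^ k)⁻¹ ^ 2 / (T * (u - T)))) := by
  obtain ⟨x, rfl⟩ : ∃ x, u = x * T := ⟨u / T, (div_mul_cancel₀ u hT).symm⟩
  have hx : x - 1 ≠ 0 := sub_ne_zero.2 fun hx => hu (by rw [hx, one_mul])
  have hscale : ∑ i ∈ range (k + 1), (2 * k + 2 * i + 1) * (T ^ (k + 1 + i))⁻¹ * (x * T) ^ i =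
      (T ^ (k + 1))⁻¹ * ∑ i ∈ range (k + 1), (2 * k + 2 * i + 1) * x ^ i := by
    rw [mul_sum]
    refine sum_congr rfl fun i _ => ?_
    rw [pow_add T, mul_pow]
    field_simp
  rw [hscale, eq_div_of_mul_eq (pow_ne_zero 2 hx) ((mul_comm _ _).trans
    (sub_one_sq_mul_sum_range F x k k)), ← sub_one_mul x T, mul_pow x]
  field_simp
  linear_combination (-(T ^ (2 * k + 2) * x ^ (k + 1) * (x - 1))) * hκ

lemma IsEquilibrium.riccati {F ι : Type*} [Field F] [Fintype ι] {T : ι → F} {κ θ u : F} {k : ℕ}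
    (h : IsEquilibrium (fun i => (T i ^ k)⁻¹) T κ θ) (hκ : 4 * κ = 4 * k + 1)
    (hT : ∀ i, T i ≠ 0) (hu : ∀ i, u ≠ T i) :
    (2 * k + 1) * forceField (fun i => (T i ^ k)⁻¹) T θ u -
        2 * u * ∑ i, (T i ^ k)⁻¹ / (u - T i) ^ 2 +
        2 * u ^ (k + 1) * forceField (fun i => (T i ^ k)⁻¹) T θ u ^ 2 =
      -(∑ i ∈ range (k + 1), (2 * k + 2 * i + 1) * (∑ j, (T j ^ (k + 1 + i))⁻¹) * u ^ i +
        (2 * k + 1) * θ - 2 * θ ^ 2 * u ^ (k + 1)) := by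
  have hsum : ∑ i ∈ range (k + 1), (2 * k + 2 * i + 1) * (∑ j, (T j ^ (k + 1 + i))⁻¹) * u ^ i =
      ∑ j, ∑ i ∈ range (k + 1), (2 * k + 2 * i + 1) * (T j ^ (k + 1 + i))⁻¹ * u ^ i := by
    simp_rw [mul_sum, sum_mul]
    exact sum_comm
  simp_rw [hsum, sum_range_mul_inv_pow_mul_pow hκ (hT _) (hu _), sum_sub_distrib, ← mul_sum]
  rw [h.sq_forceField hu, forceField, sum_sub_distrib, ← mul_sum]
  ring

/-- Weierstrass's primary factor `(1 - u) exp (u + u² / 2 + ⋯ + uᵏ / k)`. -/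
noncomputable def primaryFactor (k : ℕ) (u : ℂ) : ℂ :=
  (1 - u) * exp (-logTaylor (k + 1) (-u))

lemma primaryFactor_eq_zero_iff {k : ℕ} {u : ℂ} : primaryFactor k u = 0 ↔ u = 1 := by
  rw [primaryFactor, mul_eq_zero_iff_right (exp_ne_zero _), sub_eq_zero, eq_comm]

lemma primaryFactor_zero_right (k : ℕ) : primaryFactor k 0 = 1 := by
  rw [primaryFactor, neg_zero, logTaylor_at_zero, neg_zero, exp_zero, sub_zero, one_mul]

lemma hasDerivAt_primaryFactor (k : ℕ) (u : ℂ) :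
    HasDerivAt (primaryFactor k) (-u ^ k * exp (-logTaylor (k + 1) (-u))) u := by
  have hlog : HasDerivAt (fun v => -logTaylor (k + 1) (-v)) (∑ j ∈ range k, u ^ j) u := by
    refine ((hasDerivAt_logTaylor k (-u)).comp u (hasDerivAt_neg u)).neg.congr_deriv ?_
    simp_rw [← mul_pow, neg_mul_neg, one_mul, mul_neg_one, neg_neg]
  refine (((hasDerivAt_id u).const_sub 1).fun_mul hlog.cexp).congr_deriv ?_
  have hgeom : (1 - u) * ∑ j ∈ range k, u ^ j = 1 - u ^ k := mul_neg_geom_sum u k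
  simp only [id_eq]
  linear_combination exp (-logTaylor (k + 1) (-u)) * hgeom

lemma differentiable_primaryFactor (k : ℕ) : Differentiable ℂ (primaryFactor k) := fun u =>
  (hasDerivAt_primaryFactor k u).differentiableAt

lemma logDeriv_primaryFactor_sq_div {k : ℕ} {T z : ℂ} (hT : T ≠ 0) (hz : z ^ 2 ≠ T) :
    logDeriv (fun z => primaryFactor k (z ^ 2 / T)) z =
      2 * z ^ (2 * k + 1) * ((T ^ k)⁻¹ / (z ^ 2 - T)) := by
  have h := (hasDerivAt_primaryFactor k (z ^ 2 / T)).comp z ((hasDerivAt_pow 2 z).div_const T)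
  have hne : 1 - z ^ 2 / T ≠ 0 := sub_ne_zero.2 fun h1 => hz ((div_eq_one_iff_eq hT).1 h1.symm)
  have hzT := sub_ne_zero.2 hz
  rw [logDeriv_apply]
  refine (congrArg (· / _) h.deriv).trans ?_
  rw [primaryFactor]
  have hexp := exp_ne_zero (-logTaylor (k + 1) (-(z ^ 2 / T)))
  rw [div_eq_iff (mul_ne_zero hne hexp), div_pow]
  field_simp
  ring

/-- Even entire function with zeros `±√(T i)` whose logarithmic derivative is
`2 z²ᵏ⁺¹ (∑ i, (T i)⁻ᵏ / (z² - T i) - θ)`. -/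
noncomputable def primaryProduct {ι : Type*} [Fintype ι] (k : ℕ) (T : ι → ℝ) (θ : ℝ) (z : ℂ) : ℂ :=
  (∏ i, primaryFactor k (z ^ 2 / T i)) * exp (-(θ / (k + 1) * z ^ (2 * k + 2)))

section PrimaryProduct

variable {ι : Type*} [Fintype ι] {k : ℕ} {T : ι → ℝ} {θ : ℝ}

lemma differentiable_primaryProduct : Differentiable ℂ (primaryProduct k T θ) := by
  have hfactor := differentiable_primaryFactor k
  unfold primaryProduct
  fun_prop

lemma primaryProduct_zero : primaryProduct k T θ 0 = 1 := by
  simp [primaryProduct, primaryFactor_zero_right]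

lemma exists_sq_eq_of_primaryProduct_eq_zero (hT : ∀ i, T i ≠ 0) {z : ℂ}
    (hz : primaryProduct k T θ z = 0) : ∃ i, z ^ 2 = T i := by
  obtain ⟨i, -, hi⟩ := prod_eq_zero_iff.1 ((mul_eq_zero.1 hz).resolve_right (exp_ne_zero _))
  exact ⟨i, (div_eq_one_iff_eq (ofReal_ne_zero.2 (hT i))).1 (primaryFactor_eq_zero_iff.1 hi)⟩

lemma im_eq_zero_of_primaryProduct_eq_zero (hT : ∀ i, 0 < T i) {z : ℂ}
    (hz : primaryProduct k T θ z = 0) : z.im = 0 := by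
  obtain ⟨i, hi⟩ := exists_sq_eq_of_primaryProduct_eq_zero (fun i => (hT i).ne') hz
  rw [← Real.sq_sqrt (hT i).le, ofReal_pow, sq_eq_sq_iff_eq_or_eq_neg] at hi
  rcases hi with rfl | rfl <;> simp

lemma primaryProduct_conj (z : ℂ) :
    primaryProduct k T θ (starRingEnd ℂ z) = starRingEnd ℂ (primaryProduct k T θ z) := by
  simp [primaryProduct, primaryFactor, logTaylor, ← exp_conj]

lemma im_primaryProduct_ofReal (x : ℝ) : (primaryProduct k T θ x).im = 0 :=
  conj_eq_iff_im.1 (by rw [← primaryProduct_conj, conj_ofReal])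

lemma logDeriv_primaryProduct (hT : ∀ i, T i ≠ 0) {z : ℂ} (hz : ∀ i, z ^ 2 ≠ T i) :
    logDeriv (primaryProduct k T θ) z = 2 * z ^ (2 * k + 1) *
      forceField (fun i => ((T i : ℂ) ^ k)⁻¹) (fun i => (T i : ℂ)) θ (z ^ 2) := by
  have hT' : ∀ i, (T i : ℂ) ≠ 0 := fun i => ofReal_ne_zero.2 (hT i)
  have hne : ∀ i, primaryFactor k (z ^ 2 / T i) ≠ 0 := fun i h =>
    hz i ((div_eq_one_iff_eq (hT' i)).1 (primaryFactor_eq_zero_iff.1 h))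
  have hdiff : ∀ i, DifferentiableAt ℂ (fun z => primaryFactor k (z ^ 2 / T i)) z := fun i =>
    (differentiable_primaryFactor k).differentiableAt.comp z (by fun_prop)
  have hprod : DifferentiableAt ℂ (fun z => ∏ i, primaryFactor k (z ^ 2 / T i)) z :=
    DifferentiableAt.fun_finsetProd fun i _ => hdiff i
  have hexp : HasDerivAt (fun z : ℂ => exp (-(θ / (k + 1) * z ^ (2 * k + 2))))
      (exp (-(θ / (k + 1) * z ^ (2 * k + 2))) * -(2 * θ * z ^ (2 * k + 1))) z := by
    refine ((hasDerivAt_pow (2 * k + 2) z).const_mul (θ / (k + 1) : ℂ)).fun_neg.cexp.congr_deriv ?_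
    have : (k : ℂ) + 1 ≠ 0 := by exact_mod_cast k.succ_ne_zero
    push_cast
    field_simp
  have hsplit : logDeriv (primaryProduct k T θ) z =
      logDeriv (fun z => ∏ i, primaryFactor k (z ^ 2 / T i)) z +
        logDeriv (fun z : ℂ => exp (-(θ / (k + 1) * z ^ (2 * k + 2)))) z :=
    logDeriv_mul z (prod_ne_zero_iff.2 fun i _ => hne i) (exp_ne_zero _) hprod
      hexp.differentiableAt
  rw [hsplit, logDeriv_prod (fun i _ => hne i) fun i _ => hdiff i, logDeriv_apply _ z, hexp.deriv,
    mul_div_cancel_left₀ _ (exp_ne_zero _)]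
  simp_rw [logDeriv_primaryFactor_sq_div (hT' _) (hz _), ← mul_sum, forceField]
  ring

lemma hasDerivAt_primaryProduct (hT : ∀ i, T i ≠ 0) {z : ℂ} (hz : ∀ i, z ^ 2 ≠ T i) :
    HasDerivAt (primaryProduct k T θ) (2 * z ^ (2 * k + 1) *
      forceField (fun i => ((T i : ℂ) ^ k)⁻¹) (fun i => (T i : ℂ)) θ (z ^ 2) *
        primaryProduct k T θ z) z := by
  have hne : primaryProduct k T θ z ≠ 0 := fun h => by
    obtain ⟨i, hi⟩ := exists_sq_eq_of_primaryProduct_eq_zero hT h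
    exact hz i hi
  rw [← logDeriv_primaryProduct hT hz, logDeriv_apply, div_mul_cancel₀ _ hne]
  exact differentiable_primaryProduct.differentiableAt.hasDerivAt

lemma deriv_primaryProduct_zero (hT : ∀ i, T i ≠ 0) : deriv (primaryProduct k T θ) 0 = 0 := by
  rw [(hasDerivAt_primaryProduct hT fun i => ?_).deriv, zero_pow (2 * k).succ_ne_zero, mul_zero,
    zero_mul, zero_mul]
  rw [zero_pow two_ne_zero]
  exact_mod_cast (hT i).symm

end PrimaryProduct

lemma hasDerivAt_forceField {ι : Type*} [Fintype ι] {m t : ι → ℂ} {θ u : ℂ} (hu : ∀ i, u ≠ t i) :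
    HasDerivAt (forceField m t θ) (-∑ i, m i / (u - t i) ^ 2) u := by
  rw [← sum_neg_distrib]
  refine (HasDerivAt.fun_sum fun i _ => ?_).sub_const θ
  refine (((hasDerivAt_id u).sub_const (t i)).fun_inv (sub_ne_zero.2 (hu i))).const_mul (m i)
    |>.congr_deriv ?_
  simp only [id_eq]
  ring

lemma deriv_deriv_of_eventually_hasDerivAt_mul {w L : ℂ → ℂ} {L' z : ℂ}
    (hw : ∀ᶠ y in 𝓝 z, HasDerivAt w (L y * w y) y) (hL : HasDerivAt L L' z) :
    deriv (deriv w) z = (L' + L z ^ 2) * w z := by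
  have hderiv : deriv w =ᶠ[𝓝 z] fun y => L y * w y := hw.mono fun y hy => hy.deriv
  rw [hderiv.deriv_eq, (hL.fun_mul hw.self_of_nhds).deriv]
  ring

/-- The polynomial `P` of the equation `w'' + P w = 0` solved by `primaryProduct k T θ`, in terms of
`s i = ∑ j, (T j)⁻⁽ᵏ⁺¹⁺ⁱ⁾`. -/
noncomputable def potential (k : ℕ) (s : ℕ → ℝ) (θ : ℝ) : ℝ[X] :=
  2 * X ^ (2 * k) * (∑ i ∈ range (k + 1), C ((2 * k + 2 * i + 1) * s i) * X ^ (2 * i) +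
    C ((2 * k + 1) * θ) - C (2 * θ ^ 2) * X ^ (2 * k + 2))

lemma aeval_potential (k : ℕ) (s : ℕ → ℝ) (θ : ℝ) (z : ℂ) :
    aeval z (potential k s θ) =
      2 * z ^ (2 * k) * (∑ i ∈ range (k + 1), (2 * k + 2 * i + 1) * s i * z ^ (2 * i) +
        (2 * k + 1) * θ - 2 * θ ^ 2 * z ^ (2 * k + 2)) := by
  simp [potential, map_ofNat]

namespace IsNormalizedEquilibrium

variable {ι : Type*} [Fintype ι] {k : ℕ} {T : ι → ℝ} {θ : ℝ}

lemma deriv_deriv_primaryProduct_of_ne (h : IsNormalizedEquilibrium k T θ) {z : ℂ}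
    (hz : ∀ i, z ^ 2 ≠ T i) :
    deriv (deriv (primaryProduct k T θ)) z =
      -aeval z (potential k (fun i => ∑ j, (T j ^ (k + 1 + i))⁻¹) θ) * primaryProduct k T θ z := by
  have hT : ∀ i, T i ≠ 0 := fun i => (h.pos i).ne'
  have hnear : ∀ᶠ y : ℂ in 𝓝 z, ∀ i, y ^ 2 ≠ T i := eventually_all.2 fun i =>
    (continuous_pow 2).continuousAt.eventually_ne (hz i)
  have hLderiv := ((hasDerivAt_pow (2 * k + 1) z).const_mul 2).fun_mul
    ((hasDerivAt_forceField (m := fun i => ((T i : ℂ) ^ k)⁻¹) (θ := θ) hz).comp z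
      (hasDerivAt_pow 2 z))
  rw [deriv_deriv_of_eventually_hasDerivAt_mul
    (hnear.mono fun y hy => hasDerivAt_primaryProduct hT hy) hLderiv, aeval_potential]
  congr 1
  have hcomplex : IsEquilibrium (fun i => ((T i : ℂ) ^ k)⁻¹) (fun i => (T i : ℂ))
      ((k + 1 / 4 : ℝ) : ℂ) θ := by simpa using h.toIsEquilibrium.map ofRealHom
  have hriccati := hcomplex.riccati (by push_cast; ring)
    (fun i => ofReal_ne_zero.2 (hT i)) hz
  push_cast [pow_mul, Function.comp_apply] at hriccati ⊢
  linear_combination 2 * (z ^ 2) ^ k * hriccati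

theorem deriv_deriv_primaryProduct (h : IsNormalizedEquilibrium k T θ) (z : ℂ) :
    deriv (deriv (primaryProduct k T θ)) z =
      -aeval z (potential k (fun i => ∑ j, (T j ^ (k + 1 + i))⁻¹) θ) * primaryProduct k T θ z := by
  have hw : Differentiable ℂ (primaryProduct k T θ) := differentiable_primaryProduct
  have hnear : ∀ᶠ y : ℂ in 𝓝 0, ∀ i, y ^ 2 ≠ T i := eventually_all.2 fun i =>
    (continuous_pow 2).continuousAt.eventually_ne (by
      rw [zero_pow two_ne_zero]
      exact_mod_cast (h.pos i).ne)
  refine congrFun (AnalyticOnNhd.eq_of_eventuallyEq (𝕜 := ℂ) ?_ ?_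
    (hnear.mono fun y hy => h.deriv_deriv_primaryProduct_of_ne hy)) z
  · exact analyticOnNhd_univ_iff_differentiable.2 hw.deriv.deriv
  · exact analyticOnNhd_univ_iff_differentiable.2
      ((Polynomial.differentiable_aeval _).neg.mul hw)

end IsNormalizedEquilibrium

end FiniteZeros

section Limit

open Filter Topology Metric Set

lemma norm_le_gronwallBound_of_norm_deriv_deriv_le {f : ℂ → ℂ} (hf : Differentiable ℂ f)
    {R M ε : ℝ} (hε : 0 ≤ ε)
    (hbound : ∀ z ∈ closedBall (0 : ℂ) R, ‖deriv (deriv f) z‖ ≤ M * ‖f z‖ + ε) :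
    ∀ z ∈ closedBall (0 : ℂ) R,
      ‖f z‖ ≤ gronwallBound (max ‖f 0‖ ‖deriv f 0‖) (R * max 1 M) (R * ε) 1 := by
  intro z hz
  have hzR : ‖z‖ ≤ R := mem_closedBall_zero_iff.1 hz
  have hray : ∀ {g : ℂ → ℂ}, Differentiable ℂ g → ∀ t : ℝ,
      HasDerivAt (fun t : ℝ => g (t * z)) (deriv g (t * z) * z) t := fun hg t =>
    ((hg _).hasDerivAt.comp (t : ℂ) (hasDerivAt_mul_const z)).comp_ofReal
  have hpair : ∀ t : ℝ, HasDerivAt (fun t : ℝ => (f (t * z), deriv f (t * z)))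
      (deriv f (t * z) * z, deriv (deriv f) (t * z) * z) t := fun t =>
    (hray hf t).prodMk (hray hf.deriv t)
  refine (norm_fst_le (f z, deriv f z)).trans ?_
  have hgronwall := norm_le_gronwallBound_of_norm_deriv_right_le
    (δ := max ‖f 0‖ ‖deriv f 0‖) (K := R * max 1 M) (ε := R * ε)
    (fun t _ => (hpair t).continuousAt.continuousWithinAt) (fun t _ => (hpair t).hasDerivWithinAt)
    (by simp) (fun t ht => ?_) 1 (right_mem_Icc.2 zero_le_one)
  · simpa using hgronwall
  have htz : (t : ℂ) * z ∈ closedBall (0 : ℂ) R := by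
    rw [mem_closedBall_zero_iff, norm_mul, norm_real, Real.norm_of_nonneg ht.1]
    nlinarith [norm_nonneg z, ht.1, ht.2]
  set u : ℂ × ℂ := (f (t * z), deriv f (t * z))
  have hfirst : ‖deriv f (t * z)‖ ≤ max 1 M * ‖u‖ + ε := by
    nlinarith [norm_snd_le u, le_max_left 1 M, norm_nonneg u]
  have hsecond : ‖deriv (deriv f) (t * z)‖ ≤ max 1 M * ‖u‖ + ε := by
    refine (hbound _ htz).trans (add_le_add_left ?_ ε)
    exact mul_le_mul (le_max_right 1 M) (norm_fst_le u) (norm_nonneg _)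
      (zero_le_one.trans (le_max_left 1 M))
  calc ‖(deriv f (t * z) * z, deriv (deriv f) (t * z) * z)‖
      ≤ (max 1 M * ‖u‖ + ε) * R := by
        have h0 : 0 ≤ max 1 M * ‖u‖ + ε := (norm_nonneg _).trans hfirst
        rw [Prod.norm_mk, norm_mul, norm_mul]
        exact max_le (mul_le_mul hfirst hzR (norm_nonneg z) h0)
          (mul_le_mul hsecond hzR (norm_nonneg z) h0)
    _ = R * max 1 M * ‖u‖ + R * ε := by ring

lemma norm_sub_le_gronwallBound_of_deriv_deriv_eq_mul {p₁ p₂ w₁ w₂ : ℂ → ℂ} {R M B δ : ℝ}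
    (hw₁ : Differentiable ℂ w₁) (hw₂ : Differentiable ℂ w₂)
    (hode₁ : ∀ z, deriv (deriv w₁) z = p₁ z * w₁ z) (hode₂ : ∀ z, deriv (deriv w₂) z = p₂ z * w₂ z)
    (hzero : w₁ 0 = w₂ 0) (hderiv : deriv w₁ 0 = deriv w₂ 0)
    (hp₁ : ∀ z ∈ closedBall (0 : ℂ) R, ‖p₁ z‖ ≤ M)
    (hp : ∀ z ∈ closedBall (0 : ℂ) R, ‖p₁ z - p₂ z‖ ≤ δ)
    (hB : ∀ z ∈ closedBall (0 : ℂ) R, ‖w₂ z‖ ≤ B) :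
    ∀ z ∈ closedBall (0 : ℂ) R, ‖w₁ z - w₂ z‖ ≤ gronwallBound 0 (R * max 1 M) (R * (δ * B)) 1 := by
  intro z hz
  have hδB : 0 ≤ δ * B :=
    mul_nonneg ((norm_nonneg _).trans (hp z hz)) ((norm_nonneg _).trans (hB z hz))
  have hderiv_sub : deriv (w₁ - w₂) = deriv w₁ - deriv w₂ :=
    funext fun z => deriv_sub (hw₁ z) (hw₂ z)
  have hgronwall := norm_le_gronwallBound_of_norm_deriv_deriv_le (hw₁.sub hw₂) hδB
    (M := M) (R := R) (fun z hz => ?_) z hz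
  · simpa [hderiv_sub, hzero, hderiv] using hgronwall
  have hsplit : deriv (deriv (w₁ - w₂)) z = p₁ z * (w₁ - w₂) z + (p₁ z - p₂ z) * w₂ z := by
    rw [hderiv_sub, deriv_sub (hw₁.deriv z) (hw₂.deriv z), hode₁, hode₂, Pi.sub_apply]
    ring
  rw [hsplit]
  refine (norm_add_le _ _).trans ?_
  rw [norm_mul, norm_mul]
  have := (norm_nonneg _).trans (hp z hz)
  gcongr
  exacts [hp₁ z hz, hp z hz, hB z hz]

lemma tendsto_gronwallBound_zero (K x : ℝ) :
    Tendsto (fun ε => gronwallBound 0 K ε x) (𝓝 0) (𝓝 0) :=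
  (gronwallBound_continuous_ε 0 K x).tendsto' 0 0 (gronwallBound_ε0_δ0 K x)

lemma exists_eventually_norm_le_of_tendstoUniformlyOn {ι X E : Type*} [TopologicalSpace X]
    [SeminormedAddCommGroup E] {l : Filter ι} {F : ι → X → E} {f : X → E} {K : Set X}
    (hK : IsCompact K) (hf : ContinuousOn f K) (hF : TendstoUniformlyOn F f l K) :
    ∃ M, ∀ᶠ n in l, ∀ x ∈ K, ‖F n x‖ ≤ M := by
  obtain ⟨Q, hQ⟩ := hK.exists_bound_of_continuousOn hf
  refine ⟨Q + 1, (tendstoUniformlyOn_iff.1 hF 1 one_pos).mono fun n hn x hx => ?_⟩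
  have := norm_le_norm_add_norm_sub (f x) (F n x)
  rw [← dist_eq_norm] at this
  linarith [hn x hx, hQ x hx]

section Sequence

variable {p w : ℕ → ℂ → ℂ} {q : ℂ → ℂ} {a b : ℂ}

lemma uniformCauchySeqOn_of_deriv_deriv_eq_mul (hq : Continuous q)
    (hp : TendstoLocallyUniformlyOn p q atTop univ) (hw : ∀ n, Differentiable ℂ (w n))
    (hode : ∀ n z, deriv (deriv (w n)) z = p n z * w n z) (hzero : ∀ n, w n 0 = a)
    (hderiv : ∀ n, deriv (w n) 0 = b) (R : ℝ) :
    UniformCauchySeqOn w atTop (closedBall 0 R) := by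
  have hunif : TendstoUniformlyOn p q atTop (closedBall 0 R) :=
    (tendstoLocallyUniformlyOn_iff_forall_isCompact isOpen_univ).1 hp _ (subset_univ _)
      (isCompact_closedBall 0 R)
  obtain ⟨M, hM⟩ := exists_eventually_norm_le_of_tendstoUniformlyOn
    (isCompact_closedBall 0 R) hq.continuousOn hunif
  obtain ⟨N, hpM⟩ := eventually_atTop.1 hM
  set K := R * max 1 M
  set B := gronwallBound (max ‖a‖ ‖b‖) K (R * 0) 1
  have hwB : ∀ n ≥ N, ∀ z ∈ closedBall (0 : ℂ) R, ‖w n z‖ ≤ B := fun n hn => by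
    have := norm_le_gronwallBound_of_norm_deriv_deriv_le (hw n) le_rfl (M := M) (R := R)
      fun z hz => by
        rw [hode, norm_mul, add_zero]
        gcongr
        exact hpM n hn z hz
    rwa [hzero, hderiv] at this
  have hsmall : Tendsto (fun δ => gronwallBound 0 K (R * (δ * B)) 1) (𝓝[>] 0) (𝓝 0) :=
    (tendsto_gronwallBound_zero K 1).comp (Continuous.tendsto' (by fun_prop) 0 0 (by ring)
      |>.mono_left nhdsWithin_le_nhds)
  refine Metric.uniformCauchySeqOn_iff.2 fun ε hε => ?_
  obtain ⟨δ, hδε, hδ : 0 < δ⟩ := ((hsmall.eventually_lt_const hε).and self_mem_nhdsWithin).exists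
  obtain ⟨N', hN'⟩ := Metric.uniformCauchySeqOn_iff.1 hunif.uniformCauchySeqOn δ hδ
  refine ⟨max N N', fun m hm n hn z hz => lt_of_le_of_lt ?_ hδε⟩
  obtain ⟨hmN, hmN'⟩ := max_le_iff.1 hm
  obtain ⟨hnN, hnN'⟩ := max_le_iff.1 hn
  rw [dist_eq_norm]
  refine norm_sub_le_gronwallBound_of_deriv_deriv_eq_mul (hw m) (hw n) (hode m) (hode n)
    ((hzero m).trans (hzero n).symm) ((hderiv m).trans (hderiv n).symm) (hpM m hmN) (fun z hz => ?_)
    (hwB n hnN) z hz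
  rw [← dist_eq_norm]
  exact (hN' m hmN' n hnN' z hz).le

theorem exists_tendstoLocallyUniformlyOn_of_deriv_deriv_eq_mul (hq : Continuous q)
    (hp : TendstoLocallyUniformlyOn p q atTop univ) (hw : ∀ n, Differentiable ℂ (w n))
    (hode : ∀ n z, deriv (deriv (w n)) z = p n z * w n z) (hzero : ∀ n, w n 0 = a)
    (hderiv : ∀ n, deriv (w n) 0 = b) :
    ∃ W : ℂ → ℂ, Differentiable ℂ W ∧ (∀ z, deriv (deriv W) z = q z * W z) ∧
      TendstoLocallyUniformlyOn w W atTop univ := by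
  have hcauchy := uniformCauchySeqOn_of_deriv_deriv_eq_mul hq hp hw hode hzero hderiv
  choose W hW using fun z => cauchySeq_tendsto_of_complete
    ((hcauchy ‖z‖).cauchySeq (mem_closedBall_zero_iff.2 le_rfl))
  have hlim : TendstoLocallyUniformlyOn w W atTop univ := by
    refine (tendstoLocallyUniformlyOn_iff_forall_isCompact isOpen_univ).2 fun K _ hK => ?_
    obtain ⟨R, hR⟩ := hK.isBounded.subset_closedBall 0
    exact ((hcauchy R).tendstoUniformlyOn_of_tendsto fun z _ => hW z).mono hR
  have hdiff : ∀ n, DifferentiableOn ℂ (w n) univ := fun n => (hw n).differentiableOn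
  refine ⟨W, differentiableOn_univ.1 (hlim.differentiableOn (.of_forall hdiff) isOpen_univ),
    fun z => ?_, hlim⟩
  have hlim'' := (hlim.deriv (.of_forall hdiff) isOpen_univ).deriv
    (.of_forall fun n => (hw n).deriv.differentiableOn) isOpen_univ
  refine tendsto_nhds_unique (hlim''.tendsto_at (mem_univ z)) ?_
  exact ((hp.tendsto_at (mem_univ z)).mul (hW z)).congr fun n => (hode n z).symm

end Sequence

lemma tendstoLocallyUniformlyOn_potential (k : ℕ) {s : ℕ → ℕ → ℝ} {s₀ : ℕ → ℝ} {θ : ℕ → ℝ} {θ₀ : ℝ}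
    (hs : Tendsto s atTop (𝓝 s₀)) (hθ : Tendsto θ atTop (𝓝 θ₀)) :
    TendstoLocallyUniformlyOn (fun n (z : ℂ) => aeval z (potential k (s n) (θ n)))
      (fun z => aeval z (potential k s₀ θ₀)) atTop univ := by
  have hcont : Continuous fun x : ((ℕ → ℝ) × ℝ) × ℂ =>
      aeval x.2 (potential k x.1.1 x.1.2) := by
    simp_rw [aeval_potential]
    fun_prop
  have := ((ContinuousMap.curry ⟨_, hcont⟩).continuous.tendsto (s₀, θ₀)).comp (hs.prodMk_nhds hθ)
  exact tendstoLocallyUniformlyOn_univ.2 (ContinuousMap.tendsto_iff_tendstoLocallyUniformly.1 this)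

end Limit

section Hurwitz

open Filter Topology Metric Set

lemma exists_mem_sphere_norm_le {f : ℂ → ℂ} {z : ℂ} {r : ℝ} (hr : 0 < r)
    (hf : DifferentiableOn ℂ f (closedBall z r)) (hne : ∀ y ∈ closedBall z r, f y ≠ 0) :
    ∃ y ∈ sphere z r, ‖f y‖ ≤ ‖f z‖ := by
  have hcl : closure (ball z r) = closedBall z r := closure_ball z hr.ne'
  have hinv : DiffContOnCl ℂ f⁻¹ (ball z r) :=
    DiffContOnCl.inv (hcl ▸ hf).diffContOnCl (hcl ▸ hne)
  obtain ⟨y, hy, hmax⟩ := Complex.exists_mem_frontier_isMaxOn_norm isBounded_ball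
    (nonempty_ball.2 hr) hinv
  rw [frontier_ball z hr.ne'] at hy
  refine ⟨y, hy, ?_⟩
  have hle : ‖(f z)⁻¹‖ ≤ ‖(f y)⁻¹‖ := hmax (subset_closure (mem_ball_self hr))
  rw [norm_inv, norm_inv] at hle
  exact (inv_le_inv₀ (norm_pos_iff.2 (hne z (mem_closedBall_self hr.le)))
    (norm_pos_iff.2 (hne y (sphere_subset_closedBall hy)))).1 hle

theorem ne_zero_of_tendstoLocallyUniformlyOn {ι : Type*} {l : Filter ι} [l.NeBot] {U : Set ℂ}
    (hU : IsOpen U) {w : ι → ℂ → ℂ} {W : ℂ → ℂ} (hlim : TendstoLocallyUniformlyOn w W l U)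
    (hw : ∀ n, DifferentiableOn ℂ (w n) U) (hne : ∀ n, ∀ z ∈ U, w n z ≠ 0) {z : ℂ} (hz : z ∈ U)
    (hiso : ∀ᶠ y in 𝓝[≠] z, W y ≠ 0) : W z ≠ 0 := by
  intro hWz
  obtain ⟨r, hr, hball⟩ := nhds_basis_closedBall.eventually_iff.1
    ((eventually_nhdsWithin_iff.1 hiso).and (hU.mem_nhds hz))
  have hsub : closedBall z r ⊆ U := fun y hy => (hball hy).2
  have hunif : TendstoUniformlyOn w W l (closedBall z r) :=
    (tendstoLocallyUniformlyOn_iff_forall_isCompact hU).1 hlim _ hsub (isCompact_closedBall z r)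
  have hcont : ContinuousOn W (sphere z r) :=
    (hlim.continuousOn (.of_forall fun n => (hw n).continuousOn)).mono
      (sphere_subset_closedBall.trans hsub)
  obtain ⟨y₀, hy₀, hmin⟩ := (isCompact_sphere z r).exists_isMinOn
    (NormedSpace.sphere_nonempty.2 hr.le) hcont.norm
  have hε : 0 < ‖W y₀‖ := norm_pos_iff.2 <|
    (hball (sphere_subset_closedBall hy₀)).1 (ne_of_mem_sphere hy₀ hr.ne')
  obtain ⟨n, hn⟩ := (tendstoUniformlyOn_iff.1 hunif (‖W y₀‖ / 2) (half_pos hε)).exists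
  obtain ⟨y, hy, hle⟩ := exists_mem_sphere_norm_le hr ((hw n).mono hsub)
    fun y hy => hne n y (hsub hy)
  have hnz : ‖w n z‖ < ‖W y₀‖ / 2 := by
    simpa [hWz] using hn z (mem_closedBall_self hr.le)
  have hny : ‖W y‖ - ‖w n y‖ < ‖W y₀‖ / 2 := by
    refine (norm_sub_norm_le _ _).trans_lt ?_
    rw [← dist_eq_norm]
    exact hn y (sphere_subset_closedBall hy)
  have hWy : ‖W y₀‖ ≤ ‖W y‖ := hmin hy
  linarith

lemma im_eq_zero_of_tendstoLocallyUniformlyOn {ι : Type*} {l : Filter ι} [l.NeBot]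
    {w : ι → ℂ → ℂ} {W : ℂ → ℂ} (hlim : TendstoLocallyUniformlyOn w W l univ)
    (hw : ∀ n, Differentiable ℂ (w n)) (hreal : ∀ n z, w n z = 0 → z.im = 0)
    {a : ℂ} (ha : W a ≠ 0) {z : ℂ} (hz : W z = 0) : z.im = 0 := by
  by_contra him
  have hW : AnalyticOnNhd ℂ W univ := analyticOnNhd_univ_iff_differentiable.2 <|
    differentiableOn_univ.1 (hlim.differentiableOn (.of_forall fun n => (hw n).differentiableOn)
      isOpen_univ)
  have hiso : ∀ᶠ y in 𝓝[≠] z, W y ≠ 0 := by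
    by_contra hfreq
    exact ha (hW.eqOn_zero_of_preconnected_of_frequently_eq_zero isPreconnected_univ (mem_univ z)
      (by simpa [not_eventually] using hfreq) (mem_univ a))
  exact ne_zero_of_tendstoLocallyUniformlyOn (isOpen_ne_fun continuous_im continuous_const)
    (hlim.mono (subset_univ _)) (fun n => (hw n).differentiableOn)
    (fun n y hy h => hy (hreal n y h)) him hiso hz

end Hurwitz

section Oscillation

open Filter Set

-- Sturm comparison with `y'' = -y`: `ψ' sin(x - X) - ψ cos(x - X)` decreases while `ψ > 0`.
lemma exists_mem_Icc_nonpos_of_hasDerivAt_neg_mul {ψ ψ' p : ℝ → ℝ} {X : ℝ}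
    (hψ : ∀ x, HasDerivAt ψ (ψ' x) x) (hψ' : ∀ x, HasDerivAt ψ' (-p x * ψ x) x)
    (hp : ∀ x ∈ Icc X (X + Real.pi), 1 ≤ p x) : ∃ x ∈ Icc X (X + Real.pi), ψ x ≤ 0 := by
  by_contra! hpos
  set F : ℝ → ℝ := fun x => ψ' x * Real.sin (x - X) - ψ x * Real.cos (x - X) with hF_def
  have hF : ∀ x, HasDerivAt F ((1 - p x) * ψ x * Real.sin (x - X)) x := fun x => by
    have hsin := ((hasDerivAt_id x).sub_const X).sin
    have hcos := ((hasDerivAt_id x).sub_const X).cos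
    refine (((hψ' x).fun_mul hsin).fun_sub ((hψ x).fun_mul hcos)).congr_deriv ?_
    simp only [id_eq]
    ring
  have hanti : AntitoneOn F (Icc X (X + Real.pi)) := by
    refine antitoneOn_of_deriv_nonpos (convex_Icc _ _)
      (fun x _ => (hF x).continuousAt.continuousWithinAt)
      (fun x _ => (hF x).differentiableAt.differentiableWithinAt) fun x hx => ?_
    have hx' := interior_subset hx
    rw [(hF x).deriv]
    exact mul_nonpos_of_nonpos_of_nonneg
      (mul_nonpos_of_nonpos_of_nonneg (sub_nonpos.2 (hp x hx')) (hpos x hx').le)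
      (Real.sin_nonneg_of_nonneg_of_le_pi (sub_nonneg.2 hx'.1) (sub_le_iff_le_add'.2 hx'.2))
  have hX : X ≤ X + Real.pi := le_add_of_nonneg_right Real.pi_pos.le
  have hends : ψ (X + Real.pi) ≤ -ψ X := by
    simpa [hF_def] using hanti (left_mem_Icc.2 hX) (right_mem_Icc.2 hX) hX
  linarith [hpos X (left_mem_Icc.2 hX), hpos (X + Real.pi) (right_mem_Icc.2 hX)]

lemma exists_mem_Icc_eq_zero_of_hasDerivAt_neg_mul {ψ ψ' p : ℝ → ℝ} {X : ℝ}
    (hψ : ∀ x, HasDerivAt ψ (ψ' x) x) (hψ' : ∀ x, HasDerivAt ψ' (-p x * ψ x) x)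
    (hp : ∀ x ∈ Icc X (X + Real.pi), 1 ≤ p x) : ∃ x ∈ Icc X (X + Real.pi), ψ x = 0 := by
  obtain ⟨x, hx, hx0⟩ := exists_mem_Icc_nonpos_of_hasDerivAt_neg_mul hψ hψ' hp
  obtain ⟨y, hy, hy0⟩ := exists_mem_Icc_nonpos_of_hasDerivAt_neg_mul (fun x => (hψ x).fun_neg)
    (fun x => (hψ' x).fun_neg.congr_deriv (neg_mul_eq_mul_neg _ _)) hp
  have hcont : ContinuousOn ψ (Icc X (X + Real.pi)) := fun x _ =>
    (hψ x).continuousAt.continuousWithinAt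
  exact isPreconnected_Icc.intermediate_value hx hy hcont ⟨hx0, neg_nonpos.1 hy0⟩

theorem infinite_setOf_eq_zero_of_deriv_deriv_eq_neg_mul {W : ℂ → ℂ} (hW : Differentiable ℂ W)
    (hreal : ∀ x : ℝ, (W x).im = 0) {p : ℝ → ℝ} (hp : ∀ᶠ x in atTop, 1 ≤ p x)
    (hode : ∀ x : ℝ, deriv (deriv W) x = -p x * W x) : {z : ℂ | W z = 0}.Infinite := by
  have hre : ∀ x : ℝ, HasDerivAt (fun x : ℝ => (W x).re) (deriv W x).re x := fun x =>
    (hW x).hasDerivAt.real_of_complex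
  have hre' : ∀ x : ℝ, HasDerivAt (fun x : ℝ => (deriv W x).re) (-p x * (W x).re) x := fun x => by
    refine (hW.deriv x).hasDerivAt.real_of_complex.congr_deriv ?_
    rw [hode, ← ofReal_neg, re_ofReal_mul]
  obtain ⟨A, hA⟩ := eventually_atTop.1 hp
  have hunbounded : {x : ℝ | W x = 0}.Infinite := by
    refine infinite_of_not_bddAbove (not_bddAbove_iff.2 fun B => ?_)
    obtain ⟨x, hx, hx0⟩ := exists_mem_Icc_eq_zero_of_hasDerivAt_neg_mul (X := max A (B + 1))
      hre hre' fun x hx => hA x ((le_max_left _ _).trans hx.1)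
    exact ⟨x, Complex.ext hx0 (hreal x), (lt_add_one B).trans_le ((le_max_right _ _).trans hx.1)⟩
  exact (hunbounded.image ofReal_injective.injOn).mono (image_subset_iff.2 fun _ hx => hx)

end Oscillation

section Conclusion

open Finset Filter Topology

variable {k : ℕ} {s : ℕ → ℝ}

lemma potential_zero_right (k : ℕ) (s : ℕ → ℝ) :
    potential k s 0 =
      2 * X ^ (2 * k) * ∑ i ∈ range (k + 1), C ((2 * k + 2 * i + 1) * s i) * X ^ (2 * i) := by
  simp [potential]

lemma natDegree_potential_zero_right_le : (potential k s 0).natDegree ≤ 4 * k := by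
  have hmonomial : (2 * X ^ (2 * k) : ℝ[X]).natDegree ≤ 2 * k := by compute_degree
  rw [potential_zero_right]
  refine (natDegree_mul_le_of_le (n := 2 * k) hmonomial <|
    natDegree_sum_le_of_forall_le _ _ fun i hi =>
      (natDegree_C_mul_X_pow_le _ _).trans ?_).trans_eq (by ring)
  exact Nat.mul_le_mul_left 2 (mem_range_succ_iff.1 hi)

lemma coeff_potential_zero_right : (potential k s 0).coeff (4 * k) = 2 * (4 * k + 1) * s k := by
  rw [potential_zero_right, show 4 * k = 2 * k + 2 * k by ring, mul_assoc, coeff_ofNat_mul,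
    coeff_X_pow_mul, finsetSum_coeff,
    sum_eq_single_of_mem k (self_mem_range_succ k) fun i _ hi => ?_, coeff_C_mul_X_pow, if_pos rfl]
  · ring
  · rw [coeff_C_mul_X_pow, if_neg (by omega)]

lemma degree_potential_zero_right (hs : s k ≠ 0) : (potential k s 0).degree = (4 * k : ℕ) := by
  refine degree_eq_of_le_of_coeff_ne_zero (natDegree_le_iff_degree_le.1
    natDegree_potential_zero_right_le) ?_
  rw [coeff_potential_zero_right]
  exact mul_ne_zero (by positivity) hs

lemma tendsto_eval_potential_zero_right (hk : 0 < k) (hs : 0 < s k) :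
    Tendsto (fun x => (potential k s 0).eval x) atTop atTop := by
  have hdeg := degree_potential_zero_right hs.ne'
  refine tendsto_atTop_of_leadingCoeff_nonneg _ ?_ ?_
  · rw [hdeg]
    exact_mod_cast Nat.mul_pos four_pos hk
  · rw [leadingCoeff, natDegree_eq_of_degree_eq_some hdeg, coeff_potential_zero_right]
    positivity

section Moments

variable {ι : Type*} [Fintype ι] {T : ι → ℝ} {θ : ℝ}

namespace IsNormalizedEquilibrium

lemma antitone_sum_inv_pow (h : IsNormalizedEquilibrium k T θ) :
    Antitone fun n => ∑ j, (T j ^ n)⁻¹ := fun _ _ hmn =>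
  sum_le_sum fun j _ => inv_anti₀ (pow_pos (h.pos j) _) (pow_le_pow_right₀ (h.one_le j) hmn)

lemma sum_inv_pow_mem_Icc (h : IsNormalizedEquilibrium k T θ) (hθ : 0 ≤ θ) (i : ℕ) :
    ∑ j, (T j ^ (k + 1 + i))⁻¹ ∈ Set.Icc (0 : ℝ) 1 := by
  refine ⟨sum_nonneg fun j _ => inv_nonneg.2 (pow_nonneg (h.pos j).le _), ?_⟩
  refine (h.antitone_sum_inv_pow (Nat.le_add_right (k + 1) i)).trans ?_
  simp only
  linarith [h.add_sum_eq_one]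

lemma le_sum_inv_pow (h : IsNormalizedEquilibrium k T θ) :
    2 / (4 * k + 3) * (1 - θ ^ 2) ≤ ∑ j, (T j ^ (k + 1 + k))⁻¹ := by
  refine le_of_eq_of_le ?_ (h.antitone_sum_inv_pow (show k + 1 + k ≤ 2 * k + 2 by omega))
  rw [← h.sum_inv_pow_two_mul_add_two]
  field_simp

end IsNormalizedEquilibrium

end Moments

theorem exists_solution_real_zeros (k : ℕ) :
    ∃ (s : ℕ → ℝ) (W : ℂ → ℂ), 0 < s k ∧ Differentiable ℂ W ∧ W 0 = 1 ∧
      (∀ z, deriv (deriv W) z = -aeval z (potential k s 0) * W z) ∧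
      (∀ x : ℝ, (W x).im = 0) ∧ ∀ z, W z = 0 → z.im = 0 := by
  choose N T θ hθ hθlt h using fun n : ℕ =>
    IsNormalizedEquilibrium.exists_lt k (Nat.one_div_pos_of_nat (α := ℝ) (n := n))
  obtain ⟨s, -, φ, hφ, hs⟩ := (isCompact_univ_pi fun _ => isCompact_Icc).tendsto_subseq
    (x := fun n i => ∑ j, (T n j ^ (k + 1 + i))⁻¹)
    fun n i _ => (h n).sum_inv_pow_mem_Icc (hθ n).le i
  have hθlim : Tendsto (fun n => θ (φ n)) atTop (𝓝 0) :=
    (squeeze_zero (fun n => (hθ n).le) (fun n => (hθlt n).le)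
      tendsto_one_div_add_atTop_nhds_zero_nat).comp hφ.tendsto_atTop
  have hsk : 0 < s k := by
    have hlower := ((hθlim.pow 2).const_sub 1).const_mul (2 / (4 * k + 3) : ℝ)
    exact lt_of_lt_of_le (by norm_num; positivity) <| le_of_tendsto_of_tendsto' hlower
      (tendsto_pi_nhds.1 hs k) fun n => (h (φ n)).le_sum_inv_pow
  set w : ℕ → ℂ → ℂ := fun n => primaryProduct k (T (φ n)) (θ (φ n))
  have hw : ∀ n, Differentiable ℂ (w n) := fun n => differentiable_primaryProduct
  obtain ⟨W, hW, hode, hlim⟩ := exists_tendstoLocallyUniformlyOn_of_deriv_deriv_eq_mul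
    (Polynomial.continuous_aeval _).neg (tendstoLocallyUniformlyOn_potential k hs hθlim).neg hw
    (fun n => (h (φ n)).deriv_deriv_primaryProduct) (fun n => primaryProduct_zero)
    fun n => deriv_primaryProduct_zero fun i => ((h (φ n)).pos i).ne'
  have hpoint : ∀ z, Tendsto (fun n => w n z) atTop (𝓝 (W z)) := fun z =>
    hlim.tendsto_at (Set.mem_univ z)
  have hW0 : W 0 = 1 := tendsto_nhds_unique (hpoint 0) <|
    tendsto_const_nhds.congr fun n => primaryProduct_zero.symm
  refine ⟨s, W, hsk, hW, hW0, hode, fun x => ?_, fun z hz => ?_⟩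
  · exact (isClosed_singleton.preimage continuous_im).mem_of_tendsto (hpoint x)
      (.of_forall fun n => im_primaryProduct_ofReal x)
  · exact im_eq_zero_of_tendstoLocallyUniformlyOn hlim hw
      (fun n y => im_eq_zero_of_primaryProduct_eq_zero (h (φ n)).pos) (hW0 ▸ one_ne_zero) hz

lemma infinite_setOf_eq_zero_of_potential (hk : 0 < k) (hs : 0 < s k) {W : ℂ → ℂ}
    (hW : Differentiable ℂ W) (hreal : ∀ x : ℝ, (W x).im = 0)
    (hode : ∀ z, deriv (deriv W) z = -aeval z (potential k s 0) * W z) :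
    {z : ℂ | W z = 0}.Infinite :=
  infinite_setOf_eq_zero_of_deriv_deriv_eq_neg_mul hW hreal
    ((tendsto_eval_potential_zero_right hk hs).eventually_ge_atTop 1) fun x => by
      rw [hode, ← coe_algebraMap, aeval_algebraMap_apply_eq_algebraMap_eval]

end Conclusion

/-- For every positive natural number `d` divisible by `4`, there exist a real polynomial `P`
of degree `d` and a nonzero entire function `w` satisfying `w'' + P·w = 0` with infinitely
many zeros, all of them real. -/
theorem stmt_1 (d : ℕ) (hd : 0 < d) (hd4 : 4 ∣ d) :
    ∃ (P : Polynomial ℂ) (w : ℂ → ℂ),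
      P.degree = (d : ℕ) ∧
      (∀ n, (P.coeff n).im = 0) ∧
      Differentiable ℂ w ∧
      w ≠ 0 ∧
      (∀ z : ℂ, iteratedDeriv 2 w z + P.eval z * w z = 0) ∧
      {z : ℂ | w z = 0}.Infinite ∧
      (∀ z : ℂ, w z = 0 → z.im = 0) := by
  obtain ⟨k, rfl⟩ := hd4
  obtain ⟨s, w, hs, hw, hw0, hode, hreal, hzeros⟩ := exists_solution_real_zeros k
  refine ⟨(potential k s 0).map (algebraMap ℝ ℂ), w, ?_, fun n => ?_, hw, ?_, fun z => ?_,
    infinite_setOf_eq_zero_of_potential (Nat.pos_of_mul_pos_left hd) hs hw hreal hode, hzeros⟩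
  · rw [degree_map, degree_potential_zero_right hs.ne']
  · rw [coeff_map, coe_algebraMap, ofReal_im]
  · rintro rfl
    exact zero_ne_one hw0
  · rw [iteratedDeriv_succ, iteratedDeriv_one, hode, eval_map_algebraMap]
    ring
end

section
/- Let P be a real polynomial over ℂ whose degree d is odd, and let w be a nonzero entire function satisfying w''(z) + P(z)·w(z) = 0 for all z ∈ ℂ such that every zero of w is real. Then the set {x : ℝ | w(x) = 0} is infinite and lies on a ray, i.e. it is either bounded above or bounded below as a subset of ℝ. -/
open Complex Polynomial

/-!
By Grönwall, an entire solution of `w'' + P w = 0` has finite order. If it had no zeros, then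
Borel–Carathéodory would give `w = exp Q` with `Q` a polynomial, and `P = -(Q'' + Q' ^ 2)` would
have even degree. So `w` has a zero `x₀`, which is real; as `w / w'(x₀)` has real Cauchy data
there, it is real on the real line. The real solution oscillates on the side where `P → +∞`, by
Sturm comparison with a sine, while on a half-line where `P ≤ 0` the square of a solution is
convex, so that a nonzero solution vanishes there at most once.
-/

open Set Filter Metric
open scoped Real Topology

section Gronwall

variable {E : Type*} [NormedAddCommGroup E] [NormedSpace ℝ E]

theorem norm_le_mul_exp_of_norm_deriv2_le {y v v' : ℝ → E} {a b K : ℝ} (hab : a ≤ b)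
    (hy : ∀ t ∈ Icc a b, HasDerivAt y (v t) t) (hv : ∀ t ∈ Icc a b, HasDerivAt v (v' t) t)
    (hK : ∀ t ∈ Icc a b, ‖v' t‖ ≤ K * ‖y t‖) :
    ‖y b‖ ≤ max ‖y a‖ ‖v a‖ * Real.exp (max 1 K * (b - a)) := by
  have hderiv : ∀ t ∈ Icc a b, HasDerivAt (fun t ↦ (y t, v t)) (v t, v' t) t :=
    fun t ht ↦ (hy t ht).prodMk (hv t ht)
  have hbound : ∀ t ∈ Icc a b, ‖(v t, v' t)‖ ≤ max 1 K * ‖(y t, v t)‖ + 0 := by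
    intro t ht
    rw [add_zero]
    refine max_le ?_ ((hK t ht).trans ?_)
    · calc ‖v t‖ = 1 * ‖v t‖ := (one_mul _).symm
        _ ≤ max 1 K * ‖(y t, v t)‖ := by
          gcongr
          exacts [le_max_left _ _, norm_snd_le (y t, v t)]
    · gcongr
      exacts [le_max_right _ _, norm_fst_le (y t, v t)]
  calc ‖y b‖ ≤ ‖(y b, v b)‖ := norm_fst_le (y b, v b)
    _ ≤ gronwallBound ‖(y a, v a)‖ (max 1 K) 0 (b - a) :=
      norm_le_gronwallBound_of_norm_deriv_right_le
        (fun t ht ↦ (hderiv t ht).continuousAt.continuousWithinAt)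
        (fun t ht ↦ (hderiv t (Ico_subset_Icc_self ht)).hasDerivWithinAt) le_rfl
        (fun t ht ↦ hbound t (Ico_subset_Icc_self ht)) b (right_mem_Icc.2 hab)
    _ = max ‖y a‖ ‖v a‖ * Real.exp (max 1 K * (b - a)) := by
      rw [gronwallBound_ε0, Prod.norm_mk]

end Gronwall

/-- `u` is a solution, on all of `𝕜`, of the Schrödinger-type equation `u'' + q u = 0`. -/
structure IsSchrodingerSolution {𝕜 : Type*} [RCLike 𝕜] (q u : 𝕜 → 𝕜) : Prop where
  differentiable : Differentiable 𝕜 u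
  hasDerivAt_deriv : ∀ z, HasDerivAt (deriv u) (-(q z * u z)) z

namespace IsSchrodingerSolution

section RCLike

variable {𝕜 : Type*} [RCLike 𝕜] {q u : 𝕜 → 𝕜}

theorem of_hasDerivAt {v : 𝕜 → 𝕜} (hu : ∀ z, HasDerivAt u (v z) z)
    (hv : ∀ z, HasDerivAt v (-(q z * u z)) z) :
    IsSchrodingerSolution q u where
  differentiable z := (hu z).differentiableAt
  hasDerivAt_deriv z := by rw [deriv_eq hu]; exact hv z

theorem hasDerivAt (h : IsSchrodingerSolution q u) (z : 𝕜) : HasDerivAt u (deriv u z) z :=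
  (h.differentiable z).hasDerivAt

theorem neg (h : IsSchrodingerSolution q u) : IsSchrodingerSolution q (-u) :=
  of_hasDerivAt (fun z ↦ (h.hasDerivAt z).neg)
    (fun z ↦ by simpa only [Pi.neg_apply, mul_neg] using! (h.hasDerivAt_deriv z).neg)

theorem comp_neg (h : IsSchrodingerSolution q u) :
    IsSchrodingerSolution (fun z ↦ q (-z)) (fun z ↦ u (-z)) :=
  of_hasDerivAt (v := fun z ↦ -deriv u (-z))
    (fun z ↦ by simpa using! (h.hasDerivAt (-z)).scomp z (hasDerivAt_neg z))
    (fun z ↦ by simpa using! ((h.hasDerivAt_deriv (-z)).scomp z (hasDerivAt_neg z)).neg)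

theorem norm_le (h : IsSchrodingerSolution q u) (a z : 𝕜) {K : ℝ}
    (hK : ∀ y ∈ segment ℝ a z, ‖q y‖ ≤ K) :
    ‖u z‖ ≤ max ‖u a‖ (‖z - a‖ * ‖deriv u a‖) * Real.exp (max 1 (‖z - a‖ ^ 2 * K)) := by
  set γ : ℝ → 𝕜 := ⇑(AffineMap.lineMap a z : ℝ →ᵃ[ℝ] 𝕜)
  have hγ : ∀ t, HasDerivAt γ (z - a) t := fun t ↦ AffineMap.hasDerivAt_lineMap
  have key := norm_le_mul_exp_of_norm_deriv2_le (K := ‖z - a‖ ^ 2 * K) (zero_le_one' ℝ)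
    (fun t _ ↦ (h.hasDerivAt (γ t)).scomp t (hγ t))
    (fun t _ ↦ ((h.hasDerivAt_deriv (γ t)).scomp t (hγ t)).const_smul (z - a)) fun t ht ↦ ?_
  · simpa [γ] using key
  · have hqt := hK (γ t) (segment_eq_image_lineMap ℝ a z ▸ mem_image_of_mem _ ht)
    calc ‖(z - a) • (z - a) • -(q (γ t) * u (γ t))‖
        = ‖z - a‖ ^ 2 * ‖q (γ t)‖ * ‖u (γ t)‖ := by
          simp only [norm_smul, norm_neg, norm_mul]; ring
      _ ≤ ‖z - a‖ ^ 2 * K * ‖u (γ t)‖ := by gcongr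

theorem eq_zero (h : IsSchrodingerSolution q u) (hq : Continuous q) {a : 𝕜} (ha : u a = 0)
    (ha' : deriv u a = 0) : u = 0 := by
  funext z
  have hcompact : IsCompact (segment ℝ a z) := by
    rw [segment_eq_image_lineMap]
    exact isCompact_Icc.image AffineMap.lineMap_continuous
  obtain ⟨K, hK⟩ := hcompact.exists_bound_of_continuousOn hq.continuousOn
  simpa [ha, ha'] using h.norm_le a z hK

theorem norm_le_exp (h : IsSchrodingerSolution q u) {C : ℝ} {n : ℕ}
    (hq : ∀ z, ‖q z‖ ≤ C * (1 + ‖z‖) ^ n) :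
    ∃ B, ∀ z, ‖u z‖ ≤ Real.exp (B * (1 + ‖z‖) ^ (n + 2)) := by
  have hC : 0 ≤ C := by simpa using (norm_nonneg _).trans (hq 0)
  refine ⟨‖u 0‖ + ‖deriv u 0‖ + 1 + C, fun z ↦ ?_⟩
  set S := ‖u 0‖ + ‖deriv u 0‖
  have hball : ∀ y ∈ segment ℝ 0 z, ‖q y‖ ≤ C * (1 + ‖z‖) ^ n := by
    intro y hy
    have hyz : ‖y‖ ≤ ‖z‖ := by
      simpa using (convex_closedBall (0 : 𝕜) ‖z‖).segment_subset (by simp) (by simp) hy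
    exact (hq y).trans (by gcongr)
  have hinit : max ‖u 0‖ (‖z‖ * ‖deriv u 0‖) ≤ S * (1 + ‖z‖) :=
    max_le (by nlinarith [norm_nonneg z, norm_nonneg (u 0), norm_nonneg (deriv u 0)])
      (by nlinarith [norm_nonneg z, norm_nonneg (u 0), norm_nonneg (deriv u 0)])
  have hrate : max 1 (‖z‖ ^ 2 * (C * (1 + ‖z‖) ^ n)) ≤ 1 + C * (1 + ‖z‖) ^ (n + 2) := by
    refine max_le (by linarith [show 0 ≤ C * (1 + ‖z‖) ^ (n + 2) by positivity]) ?_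
    calc ‖z‖ ^ 2 * (C * (1 + ‖z‖) ^ n) ≤ (1 + ‖z‖) ^ 2 * (C * (1 + ‖z‖) ^ n) := by
          gcongr; linarith
      _ ≤ 1 + C * (1 + ‖z‖) ^ (n + 2) := by rw [pow_add]; linarith
  have hone : 1 ≤ (1 + ‖z‖) ^ (n + 2) := one_le_pow₀ (by linarith [norm_nonneg z])
  have hself : 1 + ‖z‖ ≤ (1 + ‖z‖) ^ (n + 2) :=
    le_self_pow₀ (by linarith [norm_nonneg z]) (by omega)
  calc ‖u z‖ ≤ max ‖u 0‖ (‖z‖ * ‖deriv u 0‖) *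
        Real.exp (max 1 (‖z‖ ^ 2 * (C * (1 + ‖z‖) ^ n))) := by simpa using h.norm_le 0 z hball
    _ ≤ Real.exp (S * (1 + ‖z‖)) * Real.exp (1 + C * (1 + ‖z‖) ^ (n + 2)) := by
      gcongr
      exact hinit.trans (by linarith [Real.add_one_le_exp (S * (1 + ‖z‖))])
    _ ≤ Real.exp ((S + 1 + C) * (1 + ‖z‖) ^ (n + 2)) := by
      rw [← Real.exp_add]
      gcongr
      have : S * (1 + ‖z‖) ≤ S * (1 + ‖z‖) ^ (n + 2) := by gcongr
      linarith

end RCLike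

section Real

variable {q u : ℝ → ℝ}

theorem exists_nonpos_of_sq_le (h : IsSchrodingerSolution q u) {k a : ℝ} (hk : 0 < k)
    (hq : ∀ x ∈ Icc a (a + π / k), k ^ 2 ≤ q x) : ∃ x ∈ Icc a (a + π / k), u x ≤ 0 := by
  by_contra! hpos
  have hab : a ≤ a + π / k := by linarith [div_pos Real.pi_pos hk]
  -- The Wronskian of `u` with the solution `sin (k (x - a))` of the equation `s'' + k² s = 0`.
  set W : ℝ → ℝ := fun x ↦
    deriv u x * Real.sin (k * (x - a)) - u x * (Real.cos (k * (x - a)) * k)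
  have hW : ∀ x, HasDerivAt W ((k ^ 2 - q x) * u x * Real.sin (k * (x - a))) x := by
    intro x
    have hlin : HasDerivAt (fun x ↦ k * (x - a)) k x := by
      simpa using ((hasDerivAt_id x).sub_const a).const_mul k
    convert! ((h.hasDerivAt_deriv x).mul hlin.sin).sub
      ((h.hasDerivAt x).mul (hlin.cos.mul_const k)) using 1
    ring
  have hanti : AntitoneOn W (Icc a (a + π / k)) := by
    refine antitoneOn_of_hasDerivWithinAt_nonpos (convex_Icc _ _)
      (fun x _ ↦ (hW x).continuousAt.continuousWithinAt)
      (fun x _ ↦ (hW x).hasDerivWithinAt) fun x hx ↦ ?_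
    have hx' := interior_subset hx
    have hsin : 0 ≤ Real.sin (k * (x - a)) := by
      refine Real.sin_nonneg_of_nonneg_of_le_pi (mul_nonneg hk.le (by linarith [hx'.1])) ?_
      rw [← le_div_iff₀' hk]
      linarith [hx'.2]
    exact mul_nonpos_of_nonpos_of_nonneg
      (mul_nonpos_of_nonpos_of_nonneg (by linarith [hq x hx']) (hpos x hx').le) hsin
  have hend : u (a + π / k) * k ≤ -(u a * k) := by
    simpa [W, mul_div_cancel₀ π hk.ne'] using
      hanti (left_mem_Icc.2 hab) (right_mem_Icc.2 hab) hab
  have := mul_pos (hpos a (left_mem_Icc.2 hab)) hk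
  have := mul_pos (hpos _ (right_mem_Icc.2 hab)) hk
  linarith

theorem exists_zero_of_sq_le (h : IsSchrodingerSolution q u) {k a : ℝ} (hk : 0 < k)
    (hq : ∀ x ∈ Icc a (a + π / k), k ^ 2 ≤ q x) : ∃ x ∈ Icc a (a + π / k), u x = 0 := by
  obtain ⟨x, hx, hux⟩ := h.exists_nonpos_of_sq_le hk hq
  obtain ⟨y, hy, huy⟩ := h.neg.exists_nonpos_of_sq_le hk hq
  exact isPreconnected_Icc.intermediate_value hx hy h.differentiable.continuous.continuousOn
    ⟨hux, neg_nonpos.1 huy⟩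

theorem not_bddAbove_zeros (h : IsSchrodingerSolution q u) {k : ℝ} (hk : 0 < k)
    (hq : ∀ᶠ x in atTop, k ^ 2 ≤ q x) : ¬BddAbove {x | u x = 0} := by
  rintro ⟨M, hM⟩
  obtain ⟨a, ha⟩ := eventually_atTop.1 hq
  obtain ⟨x, hx, hux⟩ := h.exists_zero_of_sq_le (a := max a (M + 1)) hk
    fun x hx ↦ ha x ((le_max_left _ _).trans hx.1)
  linarith [hM hux, (le_max_right a (M + 1)).trans hx.1]

theorem convexOn_sq (h : IsSchrodingerSolution q u) {D : Set ℝ} (hD : Convex ℝ D)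
    (hq : ∀ x ∈ D, q x ≤ 0) : ConvexOn ℝ D (fun x ↦ u x ^ 2) := by
  have hsq : ∀ x, HasDerivAt (fun x ↦ u x ^ 2) (2 * (u x * deriv u x)) x := by
    intro x
    simpa [mul_assoc] using (h.hasDerivAt x).fun_pow 2
  have hsq' : ∀ x, HasDerivAt (fun x ↦ 2 * (u x * deriv u x))
      (2 * (deriv u x ^ 2 + -q x * u x ^ 2)) x := by
    intro x
    convert! ((h.hasDerivAt x).mul (h.hasDerivAt_deriv x)).const_mul 2 using 1
    ring
  refine convexOn_of_hasDerivWithinAt2_nonneg hD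
    (fun x _ ↦ (hsq x).continuousAt.continuousWithinAt) (fun x _ ↦ (hsq x).hasDerivWithinAt)
    (fun x _ ↦ (hsq' x).hasDerivWithinAt) fun x hx ↦ ?_
  have := neg_nonneg.2 (hq x (interior_subset hx))
  positivity

theorem subsingleton_zeros (h : IsSchrodingerSolution q u) (hcont : Continuous q) (hu : u ≠ 0)
    {D : Set ℝ} (hD : Convex ℝ D) (hq : ∀ x ∈ D, q x ≤ 0) : (D ∩ {x | u x = 0}).Subsingleton := by
  intro x hx y hy
  by_contra! hxy
  wlog hlt : x < y generalizing x y
  · exact this hy hx hxy.symm (hxy.lt_or_gt.resolve_left hlt)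
  have hzero : ∀ t ∈ Icc x y, u t = 0 := by
    intro t ht
    have hle := (h.convexOn_sq hD hq).le_max_of_mem_Icc hx.1 hy.1 ht
    have hx0 : u x = 0 := hx.2
    have hy0 : u y = 0 := hy.2
    have hle' : u t ^ 2 ≤ 0 := by simpa [hx0, hy0] using hle
    exact pow_eq_zero_iff two_ne_zero |>.1 (hle'.antisymm (sq_nonneg _))
  obtain ⟨m, hm⟩ := exists_between hlt
  have hloc : u =ᶠ[𝓝 m] 0 := by
    filter_upwards [Icc_mem_nhds hm.1 hm.2] with t ht using hzero t ht
  exact hu (h.eq_zero hcont hloc.eq_of_nhds (by simpa using hloc.deriv_eq))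

theorem bddBelow_zeros (h : IsSchrodingerSolution q u) (hcont : Continuous q) (hu : u ≠ 0)
    (hq : ∀ᶠ x in atBot, q x ≤ 0) : BddBelow {x | u x = 0} := by
  obtain ⟨b, hb⟩ := eventually_atBot.1 hq
  have hleft := (h.subsingleton_zeros hcont hu (convex_Iic b) hb).finite.bddBelow
  refine (hleft.union (bddBelow_Ici (a := b))).mono fun x hx ↦ ?_
  rcases le_total x b with hxb | hbx
  exacts [Or.inl ⟨hxb, hx⟩, Or.inr hbx]

theorem zeros_infinite_and_bddBelow (h : IsSchrodingerSolution q u) (hcont : Continuous q)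
    (hu : u ≠ 0) (htop : Tendsto q atTop atTop) (hbot : Tendsto q atBot atBot) :
    {x | u x = 0}.Infinite ∧ BddBelow {x | u x = 0} :=
  ⟨fun hfin ↦ h.not_bddAbove_zeros one_pos (htop.eventually_ge_atTop _) hfin.bddAbove,
    h.bddBelow_zeros hcont hu (hbot.eventually_le_atBot 0)⟩

end Real

end IsSchrodingerSolution

section EntireFunctions

theorem exists_differentiable_exp_eq {w : ℂ → ℂ} (hw : Differentiable ℂ w) (hne : ∀ z, w z ≠ 0) :
    ∃ g : ℂ → ℂ, Differentiable ℂ g ∧ ∀ z, exp (g z) = w z := by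
  obtain ⟨g, hg0, hg⟩ := (hw.deriv.div hw hne).isExactOn_univ.with_val_at 0 (log (w 0))
  have hg' : ∀ z, HasDerivAt g (deriv w z / w z) z := fun z ↦ hg z (mem_univ z)
  refine ⟨g, fun z ↦ (hg' z).differentiableAt, fun z ↦ ?_⟩
  have hquot : ∀ z, HasDerivAt (fun z ↦ exp (g z) / w z) 0 z := by
    intro z
    convert! (hg' z).cexp.div (hw z).hasDerivAt (hne z) using 1
    field_simp [hne z]
    ring
  have hconst := is_const_of_deriv_eq_zero (fun z ↦ (hquot z).differentiableAt)
    (fun z ↦ (hquot z).deriv) z 0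
  rwa [hg0, exp_log (hne 0), div_self (hne 0), div_eq_one_iff_eq (hne z)] at hconst

theorem iteratedDeriv_zero_eq_zero_of_norm_le {E : Type*} [NormedAddCommGroup E] [NormedSpace ℂ E]
    [CompleteSpace E] {g : ℂ → E} (hg : Differentiable ℂ g) {C : ℝ} {N n : ℕ}
    (hC : ∀ z, ‖g z‖ ≤ C * (1 + ‖z‖) ^ N) (hn : N < n) : iteratedDeriv n g 0 = 0 := by
  have hC0 : 0 ≤ C := by simpa using (norm_nonneg _).trans (hC 0)
  have hcauchy : ∀ r : ℝ, 1 ≤ r → ‖iteratedDeriv n g 0‖ ≤ n.factorial * (C * 2 ^ N) / r := by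
    intro r hr
    have hr0 : 0 < r := by linarith
    have hsphere : ∀ z ∈ sphere (0 : ℂ) r, ‖g z‖ ≤ C * (2 * r) ^ N := by
      intro z hz
      refine (hC z).trans ?_
      rw [mem_sphere_zero_iff_norm.1 hz]
      gcongr
      linarith
    calc ‖iteratedDeriv n g 0‖ ≤ n.factorial * (C * (2 * r) ^ N) / r ^ n :=
          norm_iteratedDeriv_le_of_forall_mem_sphere_norm_le n hr0 hg.diffContOnCl hsphere
      _ ≤ n.factorial * (C * (2 * r) ^ N) / r ^ (N + 1) := by
          gcongr
          exact hn
      _ = n.factorial * (C * 2 ^ N) / r := by rw [mul_pow, pow_succ]; field_simp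
  have hlim : Tendsto (fun r : ℝ ↦ n.factorial * (C * 2 ^ N) / r) atTop (𝓝 0) :=
    tendsto_const_nhds.div_atTop tendsto_id
  exact norm_le_zero_iff.1 (ge_of_tendsto hlim ((eventually_ge_atTop 1).mono hcauchy))

theorem exists_polynomial_of_norm_le {g : ℂ → ℂ} (hg : Differentiable ℂ g) {C : ℝ} {N : ℕ}
    (hC : ∀ z, ‖g z‖ ≤ C * (1 + ‖z‖) ^ N) : ∃ Q : ℂ[X], ∀ z, g z = Q.eval z := by
  refine ⟨∑ n ∈ Finset.range (N + 1),
    Polynomial.C ((n.factorial : ℂ)⁻¹ * iteratedDeriv n g 0) * X ^ n, fun z ↦ ?_⟩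
  rw [← taylorSeries_eq_of_entire' 0 z hg, tsum_eq_sum (s := Finset.range (N + 1)), eval_finsetSum]
  · simp
  · intro n hn
    rw [iteratedDeriv_zero_eq_zero_of_norm_le hg hC (by simpa using hn), mul_zero, zero_mul]

theorem norm_le_of_re_le {g : ℂ → ℂ} (hg : Differentiable ℂ g) {B : ℝ} (hB : 0 < B) {N : ℕ}
    (hre : ∀ z, (g z).re ≤ B * (1 + ‖z‖) ^ N) (z : ℂ) :
    ‖g z‖ ≤ (2 * B * 2 ^ N + 3 * ‖g 0‖) * (1 + ‖z‖) ^ N := by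
  set r := ‖z‖
  have hr : 0 ≤ r := norm_nonneg z
  -- The radius `2 r + 1` keeps the quotients of the Borel–Carathéodory bound below `1` and `3`.
  have hmaps : MapsTo g (ball 0 (2 * r + 1)) {z | z.re ≤ B * (2 * (1 + r)) ^ N} := by
    intro y hy
    refine (hre y).trans ?_
    gcongr
    linarith [mem_ball_zero_iff.1 hy]
  have hquot₁ : r / (2 * r + 1 - r) ≤ 1 := (div_le_one (by linarith)).2 (by linarith)
  have hquot₂ : (2 * r + 1 + r) / (2 * r + 1 - r) ≤ 3 :=
    (div_le_iff₀ (by linarith)).2 (by linarith)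
  calc ‖g z‖ ≤ 2 * (B * (2 * (1 + r)) ^ N) * r / (2 * r + 1 - r) +
        ‖g 0‖ * (2 * r + 1 + r) / (2 * r + 1 - r) :=
        borelCaratheodory (by positivity) hg.differentiableOn hmaps (by linarith)
          (mem_ball_zero_iff.2 (by linarith))
    _ ≤ 2 * (B * (2 * (1 + r)) ^ N) * 1 + ‖g 0‖ * 3 := by
      rw [mul_div_assoc, mul_div_assoc]
      gcongr
    _ = 2 * B * 2 ^ N * (1 + r) ^ N + 3 * ‖g 0‖ * 1 := by rw [mul_pow]; ring
    _ ≤ 2 * B * 2 ^ N * (1 + r) ^ N + 3 * ‖g 0‖ * (1 + r) ^ N := by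
      gcongr
      exact one_le_pow₀ (by linarith)
    _ = (2 * B * 2 ^ N + 3 * ‖g 0‖) * (1 + r) ^ N := by ring

theorem exists_exp_polynomial_eq {w : ℂ → ℂ} (hw : Differentiable ℂ w) (hne : ∀ z, w z ≠ 0)
    {B : ℝ} {N : ℕ} (hB : ∀ z, ‖w z‖ ≤ Real.exp (B * (1 + ‖z‖) ^ N)) :
    ∃ Q : ℂ[X], w = fun z ↦ exp (Q.eval z) := by
  obtain ⟨g, hg, hexp⟩ := exists_differentiable_exp_eq hw hne
  have hre : ∀ z, (g z).re ≤ (|B| + 1) * (1 + ‖z‖) ^ N := by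
    intro z
    have hreB : (g z).re ≤ B * (1 + ‖z‖) ^ N := by
      rw [← Real.exp_le_exp, ← norm_exp, hexp]
      exact hB z
    refine hreB.trans ?_
    gcongr
    linarith [le_abs_self B]
  obtain ⟨Q, hQ⟩ := exists_polynomial_of_norm_le hg (norm_le_of_re_le hg (by positivity) hre)
  exact ⟨Q, funext fun z ↦ by rw [← hexp, hQ]⟩

end EntireFunctions

section Polynomials

theorem exists_norm_eval_le {R : Type*} [NormedRing R] [NormOneClass R] (P : R[X]) :
    ∃ C : ℝ, ∀ z, ‖P.eval z‖ ≤ C * (1 + ‖z‖) ^ P.natDegree := by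
  refine ⟨∑ i ∈ Finset.range (P.natDegree + 1), ‖P.coeff i‖, fun z ↦ ?_⟩
  rw [eval_eq_sum_range, Finset.sum_mul]
  refine (norm_sum_le _ _).trans (Finset.sum_le_sum fun i hi ↦ ?_)
  have hz : 1 ≤ 1 + ‖z‖ := by linarith [norm_nonneg z]
  calc ‖P.coeff i * z ^ i‖ ≤ ‖P.coeff i‖ * ‖z‖ ^ i :=
        (norm_mul_le _ _).trans (by gcongr; exact norm_pow_le z i)
    _ ≤ ‖P.coeff i‖ * (1 + ‖z‖) ^ i := by gcongr; linarith
    _ ≤ ‖P.coeff i‖ * (1 + ‖z‖) ^ P.natDegree := by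
      gcongr
      exact Finset.mem_range_succ_iff.1 hi

theorem natDegree_derivative_add_sq {R : Type*} [Semiring R] [NoZeroDivisors R] (p : R[X]) :
    (derivative p + p ^ 2).natDegree = 2 * p.natDegree := by
  rcases eq_or_ne p.natDegree 0 with hp | hp
  · rw [derivative_of_natDegree_zero hp, zero_add, natDegree_pow]
  · have hlt : (derivative p).natDegree < (p ^ 2).natDegree := by
      rw [natDegree_pow]
      linarith [natDegree_derivative_lt hp]
    rw [natDegree_add_eq_right_of_natDegree_lt hlt, natDegree_pow]

theorem exists_map_ofRealHom_eq {P : ℂ[X]} (hP : ∀ n, (P.coeff n).im = 0) :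
    ∃ Q : ℝ[X], Q.map ofRealHom = P :=
  (mem_lifts P).1 <| (lifts_iff_coeff_lifts P).2 fun n ↦
    ⟨(P.coeff n).re, Complex.ext rfl (hP n).symm⟩

section Tendsto

variable {𝕜 : Type*} [NormedField 𝕜] [LinearOrder 𝕜] [IsStrictOrderedRing 𝕜] [OrderTopology 𝕜]

theorem tendsto_eval_atBot_atBot_of_odd {Q : 𝕜[X]} (hQ : Odd Q.natDegree)
    (hlead : 0 ≤ Q.leadingCoeff) : Tendsto (fun x ↦ Q.eval x) atBot atBot := by
  have hdeg : 0 < (Q.comp (-X)).degree :=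
    natDegree_pos_iff_degree_pos.1 (by simpa [natDegree_comp] using hQ.pos)
  have hcomp := (Q.comp (-X)).tendsto_atBot_of_leadingCoeff_nonpos hdeg (by
    rw [comp_neg_X_leadingCoeff_eq, hQ.neg_one_pow]
    simpa using hlead)
  simpa [Function.comp_def] using hcomp.comp tendsto_neg_atBot_atTop

end Tendsto

end Polynomials

namespace IsSchrodingerSolution

theorem even_natDegree_of_exp {P Q : ℂ[X]}
    (h : IsSchrodingerSolution P.eval fun z ↦ exp (Q.eval z)) : Even P.natDegree := by
  have hderiv : deriv (fun z ↦ exp (Q.eval z)) =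
      fun z ↦ exp (Q.eval z) * (derivative Q).eval z :=
    deriv_eq fun z ↦ (Q.hasDerivAt z).cexp
  have hP : -P = derivative (derivative Q) + derivative Q ^ 2 := by
    refine Polynomial.funext fun z ↦ mul_left_cancel₀ (exp_ne_zero (Q.eval z)) ?_
    have h₁ := h.hasDerivAt_deriv z
    rw [hderiv] at h₁
    have := h₁.unique ((Q.hasDerivAt z).cexp.mul ((derivative Q).hasDerivAt z))
    simp only [eval_neg, eval_add, eval_pow]
    linear_combination this
  rw [← natDegree_neg, hP, natDegree_derivative_add_sq]
  exact even_two_mul _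

theorem exists_zero_of_odd_natDegree {P : ℂ[X]} {w : ℂ → ℂ}
    (h : IsSchrodingerSolution P.eval w) (hP : Odd P.natDegree) : ∃ z, w z = 0 := by
  by_contra! hne
  obtain ⟨C, hC⟩ := exists_norm_eval_le P
  obtain ⟨B, hB⟩ := h.norm_le_exp hC
  obtain ⟨Q, rfl⟩ := exists_exp_polynomial_eq h.differentiable hne hB
  exact Nat.not_even_iff_odd.2 hP h.even_natDegree_of_exp

theorem clm_comp_ofReal {q w : ℂ → ℂ} {r : ℝ → ℝ} (h : IsSchrodingerSolution q w)
    (hr : ∀ x : ℝ, q x = r x) (L : ℂ →L[ℝ] ℝ) : IsSchrodingerSolution r fun x ↦ L (w x) := by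
  refine of_hasDerivAt (v := fun x ↦ L (deriv w x))
    (fun x ↦ L.hasFDerivAt.comp_hasDerivAt x (h.hasDerivAt x).comp_ofReal) fun x ↦ ?_
  have hL : L (-(q x * w x)) = -(r x * L (w x)) := by
    rw [map_neg, hr, ← real_smul, map_smul, smul_eq_mul]
  exact hL ▸ L.hasFDerivAt.comp_hasDerivAt x (h.hasDerivAt_deriv x).comp_ofReal

theorem exists_eq_mul_ofReal {q w : ℂ → ℂ} {r : ℝ → ℝ} (h : IsSchrodingerSolution q w)
    (hq : Continuous q) (hr : ∀ x : ℝ, q x = r x) (hw : w ≠ 0) {x₀ : ℝ} (hx₀ : w x₀ = 0) :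
    ∃ (c : ℂ) (u : ℝ → ℝ), c ≠ 0 ∧ u ≠ 0 ∧ IsSchrodingerSolution r u ∧
      ∀ x : ℝ, w x = c * u x := by
  set c := deriv w x₀
  have hc : c ≠ 0 := fun hc ↦ hw (h.eq_zero hq hx₀ hc)
  set L : ℂ →L[ℝ] ℂ := (ContinuousLinearMap.mul ℝ ℂ) c⁻¹
  have hderiv (M : ℂ →L[ℝ] ℝ) : deriv (fun x : ℝ ↦ M (w x)) x₀ = M c :=
    (M.hasFDerivAt.comp_hasDerivAt x₀ (h.hasDerivAt x₀).comp_ofReal).deriv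
  have hrcont : Continuous r := by
    simpa [Function.comp_def, hr] using continuous_re.comp (hq.comp continuous_ofReal)
  have him : (fun x : ℝ ↦ (imCLM ∘L L) (w x)) = 0 := by
    refine (h.clm_comp_ofReal hr (imCLM ∘L L)).eq_zero hrcont (a := x₀) (by simp [hx₀]) ?_
    rw [hderiv]
    simp [L, hc]
  refine ⟨c, fun x ↦ (reCLM ∘L L) (w x), hc, fun hu ↦ ?_, h.clm_comp_ofReal hr _, fun x ↦ ?_⟩
  · have hone := hderiv (reCLM ∘L L)
    rw [hu] at hone
    simp [L, hc] at hone
  · have hreal : (((c⁻¹ * w x).re : ℝ) : ℂ) = c⁻¹ * w x :=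
      Complex.ext (ofReal_re _) (congrFun him x).symm
    change w x = c * ((c⁻¹ * w x).re : ℝ)
    rw [hreal, mul_inv_cancel_left₀ hc]

theorem zeros_infinite_and_bddAbove_or_bddBelow {Q : ℝ[X]} {u : ℝ → ℝ}
    (h : IsSchrodingerSolution Q.eval u) (hQ : Odd Q.natDegree) (hu : u ≠ 0) :
    {x | u x = 0}.Infinite ∧ (BddAbove {x | u x = 0} ∨ BddBelow {x | u x = 0}) := by
  wlog hlead : 0 ≤ Q.leadingCoeff generalizing Q u
  · have hrefl : IsSchrodingerSolution (Q.comp (-X)).eval fun x ↦ u (-x) := by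
      simpa using! h.comp_neg
    obtain ⟨hinf, hbdd⟩ := this hrefl (by simpa [natDegree_comp] using hQ)
      (fun h0 ↦ hu (funext fun x ↦ by simpa using congrFun h0 (-x)))
      (by rw [comp_neg_X_leadingCoeff_eq, hQ.neg_one_pow]; linarith)
    rw [show {x | u (-x) = 0} = -{x | u x = 0} from rfl] at hinf hbdd
    exact ⟨infinite_neg.1 hinf, by rwa [bddAbove_neg, bddBelow_neg, or_comm] at hbdd⟩
  have hdeg : 0 < Q.degree := natDegree_pos_iff_degree_pos.1 hQ.pos
  obtain ⟨hinf, hbdd⟩ := h.zeros_infinite_and_bddBelow Q.continuous hu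
    (Q.tendsto_atTop_of_leadingCoeff_nonneg hdeg hlead)
    (tendsto_eval_atBot_atBot_of_odd hQ hlead)
  exact ⟨hinf, Or.inr hbdd⟩

theorem of_iteratedDeriv_two {q w : ℂ → ℂ} (hw : Differentiable ℂ w)
    (hde : ∀ z, iteratedDeriv 2 w z + q z * w z = 0) : IsSchrodingerSolution q w where
  differentiable := hw
  hasDerivAt_deriv z := by
    have hderiv2 : deriv (deriv w) z = -(q z * w z) := by
      rw [← eq_neg_of_add_eq_zero_left (hde z), iteratedDeriv_succ, iteratedDeriv_one]
    exact hderiv2 ▸ (hw.deriv z).hasDerivAt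

end IsSchrodingerSolution

theorem stmt_4_general (P : Polynomial ℂ) (hP : Odd P.natDegree)
    (hreal : ∀ n, (P.coeff n).im = 0)
    (w : ℂ → ℂ) (hw : Differentiable ℂ w) (hw0 : w ≠ 0)
    (hde : ∀ z : ℂ, iteratedDeriv 2 w z + P.eval z * w z = 0)
    (hzero : ∃ x : ℝ, w x = 0) :
    {x : ℝ | w x = 0}.Infinite ∧
      (BddAbove {x : ℝ | w x = 0} ∨ BddBelow {x : ℝ | w x = 0}) := by
  obtain ⟨x₀, hx₀⟩ := hzero
  obtain ⟨Q, rfl⟩ := exists_map_ofRealHom_eq hreal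
  have hsol := IsSchrodingerSolution.of_iteratedDeriv_two hw hde
  obtain ⟨c, u, hc, hu, husol, hwu⟩ := hsol.exists_eq_mul_ofReal (r := Q.eval)
    (Polynomial.continuous _) (eval_map_apply (f := ofRealHom)) hw0 hx₀
  have hset : {x : ℝ | w x = 0} = {x | u x = 0} := by ext x; simp [hwu, hc]
  rw [hset]
  exact husol.zeros_infinite_and_bddAbove_or_bddBelow (by rwa [natDegree_map] at hP) hu

/-- If `P` is a real polynomial of odd degree and `w` is a nonzero entire solution of
`w'' + P·w = 0` all of whose zeros are real, then the set of real zeros of `w` is infinite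
and lies on a ray (bounded above or bounded below). -/
theorem stmt_4 (P : Polynomial ℂ) (hP : Odd P.natDegree)
    (hreal : ∀ n, (P.coeff n).im = 0)
    (w : ℂ → ℂ) (hw : Differentiable ℂ w) (hw0 : w ≠ 0)
    (hde : ∀ z : ℂ, iteratedDeriv 2 w z + P.eval z * w z = 0)
    (hzeros : ∀ z : ℂ, w z = 0 → z.im = 0) :
    {x : ℝ | w x = 0}.Infinite ∧
      (BddAbove {x : ℝ | w x = 0} ∨ BddBelow {x : ℝ | w x = 0}) := by
  obtain ⟨z, hz⟩ :=
    (IsSchrodingerSolution.of_iteratedDeriv_two hw hde).exists_zero_of_odd_natDegree hP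
  exact stmt_4_general P hP hreal w hw hw0 hde
    ⟨z.re, by rwa [conj_eq_iff_re.1 (conj_eq_iff_im.2 (hzeros z hz))]⟩
end

section
/- Let P be a real polynomial over ℂ whose degree d is odd, and let w be a nonzero entire function satisfying w''(z) + P(z)·w(z) = 0 for all z ∈ ℂ such that all but finitely many zeros of w are real (i.e. the set {z : ℂ | w(z) = 0 and Im(z) ≠ 0} is finite). Then the set of zeros of w is infinite and the set {x : ℝ | w(x) = 0} is either bounded above or bounded below as a subset of ℝ. -/
open Complex Polynomial

/-! A solution of `w'' + P w = 0` has finite order by Grönwall's inequality. If it had only finitely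
many zeros, it would therefore be `Q * exp G` with polynomials `Q` and `G`, and comparing degrees in
`Q'' + 2 Q' G' + Q G'' + Q G' ^ 2 + P Q = 0` would give `deg P = 2 deg G'`, which is even.

For the real zeros, choose `c` with `0 < re c` and `re (c * P.leadingCoeff) ≠ 0`. As `deg P` is odd,
`re (c * P) ≤ 0` near `+∞` or near `-∞`. There `re (c * conj w * w')`, whose derivative is
`re c * |w'| ^ 2 - re (c * P) * |w| ^ 2`, is monotone; since it vanishes at every zero of `w`, two
zeros would force `w` to vanish between them. -/

section

open Filter Bornology Metric Asymptotics
open scoped ComplexConjugate Topology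

theorem eventually_cobounded_iff_eventually_atTop {E : Type*} [SeminormedAddGroup E]
    {p : E → Prop} :
    (∀ᶠ z in cobounded E, p z) ↔ ∀ᶠ R : ℝ in atTop, ∀ z, ‖z‖ = R → p z := by
  rw [← comap_norm_atTop, eventually_comap]

theorem eventually_forall_closedBall_norm_le {E : Type*} [NormedAddCommGroup E] [NormedSpace ℂ E]
    {f : ℂ → E} (hf : Differentiable ℂ f) {φ : ℝ → ℝ}
    (h : ∀ᶠ z in cobounded ℂ, ‖f z‖ ≤ φ ‖z‖) :
    ∀ᶠ R : ℝ in atTop, ∀ z ∈ closedBall (0 : ℂ) R, ‖f z‖ ≤ φ R := by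
  filter_upwards [eventually_cobounded_iff_eventually_atTop.1 h, eventually_gt_atTop 0]
    with R hR hR0 z hz
  refine norm_le_of_forall_mem_frontier_norm_le isBounded_ball hf.diffContOnCl (fun ζ hζ => ?_)
    (closure_ball (0 : ℂ) hR0.ne' ▸ hz)
  have hζR : ‖ζ‖ = R := by simpa [frontier_ball (0 : ℂ) hR0.ne'] using hζ
  exact hζR ▸ hR ζ hζR

/-! ### Growth of entire functions -/

theorem iteratedDeriv_eq_zero_of_isBigO_pow {E : Type*} [NormedAddCommGroup E] [NormedSpace ℂ E]
    [CompleteSpace E] {g : ℂ → E} (hg : Differentiable ℂ g) {N n : ℕ}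
    (h : g =O[cobounded ℂ] fun z => ‖z‖ ^ N) (hn : N < n) : iteratedDeriv n g 0 = 0 := by
  obtain ⟨A, hA⟩ := h.bound
  have cauchy : ∀ᶠ R : ℝ in atTop, ‖iteratedDeriv n g 0‖ ≤ n.factorial * A * (R ^ N / R ^ n) := by
    filter_upwards [eventually_cobounded_iff_eventually_atTop.1 hA, eventually_gt_atTop 0]
      with R hR hR0
    have norm_le : ∀ z ∈ sphere (0 : ℂ) R, ‖g z‖ ≤ A * R ^ N := fun z hz => by
      have hzR : ‖z‖ = R := by simpa using hz
      simpa [hzR, abs_of_pos hR0] using hR z hzR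
    exact (norm_iteratedDeriv_le_of_forall_mem_sphere_norm_le n hR0 hg.diffContOnCl
      norm_le).trans_eq (by ring)
  have tendsto_bound := (tendsto_pow_div_pow_atTop_zero (𝕜 := ℝ) hn).const_mul (n.factorial * A)
  rw [mul_zero] at tendsto_bound
  exact norm_le_zero_iff.1 (ge_of_tendsto tendsto_bound cauchy)

theorem exists_polynomial_of_isBigO_pow {g : ℂ → ℂ} (hg : Differentiable ℂ g) {N : ℕ}
    (h : g =O[cobounded ℂ] fun z => ‖z‖ ^ N) : ∃ G : ℂ[X], ∀ z, g z = G.eval z := by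
  refine ⟨∑ n ∈ Finset.range (N + 1), C ((n.factorial : ℂ)⁻¹ * iteratedDeriv n g 0) * X ^ n,
    fun z => ?_⟩
  rw [← taylorSeries_eq_of_entire' (c := 0) z hg, tsum_eq_sum (s := Finset.range (N + 1))]
  · simp [eval_finsetSum]
  · intro n hn
    have hNn : N < n := by simpa [Nat.lt_succ_iff] using hn
    simp [iteratedDeriv_eq_zero_of_isBigO_pow hg h hNn]

/-- `f` is of finite order (of growth) in the sense of entire function theory: `‖f z‖` is at most
`exp (‖z‖ ^ N)` for large `z`. Taking the exponent `N` to be a natural number and omitting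
multiplicative constants does not change the notion. -/
def HasFiniteOrder (f : ℂ → ℂ) : Prop :=
  ∃ N : ℕ, ∀ᶠ z in cobounded ℂ, ‖f z‖ ≤ Real.exp (‖z‖ ^ N)

theorem HasFiniteOrder.mono {f g : ℂ → ℂ} (hf : HasFiniteOrder f)
    (h : ∀ᶠ z in cobounded ℂ, ‖g z‖ ≤ ‖f z‖) : HasFiniteOrder g := by
  obtain ⟨N, hN⟩ := hf
  exact ⟨N, by filter_upwards [h, hN] with z h₁ h₂ using h₁.trans h₂⟩

theorem exists_polynomial_of_hasFiniteOrder_exp {g : ℂ → ℂ} (hg : Differentiable ℂ g)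
    (h : HasFiniteOrder fun z => exp (g z)) : ∃ G : ℂ[X], ∀ z, g z = G.eval z := by
  obtain ⟨N, hN⟩ := h
  have re_le : ∀ᶠ R : ℝ in atTop, ∀ z ∈ closedBall (0 : ℂ) R, (g z).re ≤ R ^ N := by
    simpa only [norm_exp, Real.exp_le_exp] using
      eventually_forall_closedBall_norm_le (φ := fun R => Real.exp (R ^ N)) hg.cexp hN
  refine exists_polynomial_of_isBigO_pow hg (N := N) (.of_bound (2 * 2 ^ N + 3 * ‖g 0‖) ?_)
  refine eventually_cobounded_iff_eventually_atTop.2 ?_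
  filter_upwards [(tendsto_id.const_mul_atTop two_pos).eventually re_le, eventually_ge_atTop 1]
    with R hR hR1 z hz
  have one_le : 1 ≤ R ^ N := one_le_pow₀ hR1
  calc ‖g z‖
    _ ≤ 2 * (2 * R) ^ N * R / (2 * R - R) + ‖g 0‖ * (2 * R + R) / (2 * R - R) := by
        rw [← hz]
        exact borelCaratheodory (by rw [hz]; positivity) hg.differentiableOn
          (fun ζ hζ => by rw [hz] at hζ ⊢; exact hR ζ (ball_subset_closedBall hζ))
          (by linarith) (by rw [mem_ball_zero_iff]; linarith)
    _ = 2 * 2 ^ N * R ^ N + 3 * ‖g 0‖ := by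
        rw [show 2 * R - R = R by ring]
        field_simp
        ring
    _ ≤ 2 * 2 ^ N * R ^ N + 3 * ‖g 0‖ * R ^ N := by
        exact add_le_add le_rfl (le_mul_of_one_le_right (by positivity) one_le)
    _ = (2 * 2 ^ N + 3 * ‖g 0‖) * ‖‖z‖ ^ N‖ := by
        rw [norm_pow, norm_norm, hz]
        ring

/-! ### Entire functions with finitely many zeros -/

theorem exists_entire_exp_eq {f : ℂ → ℂ} (hf : Differentiable ℂ f) (h0 : ∀ z, f z ≠ 0) :
    ∃ g : ℂ → ℂ, Differentiable ℂ g ∧ ∀ z, f z = exp (g z) := by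
  obtain ⟨g, hg0, hg⟩ := (hf.deriv.div hf h0).isExactOn_univ.with_val_at 0 (log (f 0))
  replace hg : ∀ z, HasDerivAt g (deriv f z / f z) z := fun z => hg z (Set.mem_univ z)
  refine ⟨g, fun z => (hg z).differentiableAt, fun z => ?_⟩
  have quotient_deriv : ∀ ζ, HasDerivAt (fun z => f z * exp (-g z)) 0 ζ := fun ζ => by
    refine ((hf ζ).hasDerivAt.mul (hg ζ).neg.cexp).congr_deriv ?_
    have := h0 ζ
    field_simp
    ring
  have quotient_eq := is_const_of_deriv_eq_zero (fun ζ => (quotient_deriv ζ).differentiableAt)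
    (fun ζ => (quotient_deriv ζ).deriv) z 0
  simp only [hg0, exp_neg, exp_log (h0 0), mul_inv_cancel₀ (h0 0)] at quotient_eq
  exact (mul_inv_eq_one₀ (exp_ne_zero _)).1 quotient_eq

theorem exists_eq_pow_mul_of_analyticOrderAt_eq {a : ℂ} {n : ℕ} {f : ℂ → ℂ}
    (hf : Differentiable ℂ f) (hn : analyticOrderAt f a = n) :
    ∃ g : ℂ → ℂ, Differentiable ℂ g ∧ g a ≠ 0 ∧ ∀ z, f z = (z - a) ^ n * g z := by
  induction n generalizing f with
  | zero => exact ⟨f, hf, ((hf.analyticAt a).analyticOrderAt_eq_zero).1 hn, by simp⟩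
  | succ n ih =>
    have ha : f a = 0 := apply_eq_zero_of_analyticOrderAt_ne_zero (by simp [hn])
    have hd : Differentiable ℂ (dslope f a) := by
      rw [← differentiableOn_univ, differentiableOn_dslope univ_mem]
      exact hf.differentiableOn
    have hfd : ∀ z, f z = (z - a) * dslope f a z := fun z =>
      (sub_smul_dslope_of_zero ha z).symm
    have order_dslope : analyticOrderAt (dslope f a) a = n := by
      have hmul := analyticOrderAt_mul (f := (· - a)) (by fun_prop) (hd.analyticAt a)
      rw [← show f = (· - a) * dslope f a from funext hfd, hn, analyticOrderAt_id_sub_const_self,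
        Nat.cast_succ, add_comm] at hmul
      exact (ENat.add_right_injective_of_ne_top ENat.one_ne_top hmul).symm
    obtain ⟨g, hg, hga, hdg⟩ := ih hd order_dslope
    exact ⟨g, hg, hga, fun z => by rw [hfd, hdg, pow_succ']; ring⟩

theorem exists_monic_mul_of_finite_zeros {f : ℂ → ℂ} (hf : Differentiable ℂ f)
    (hfin : {z | f z = 0}.Finite) :
    ∃ Q : ℂ[X], Q.Monic ∧ ∃ g : ℂ → ℂ, Differentiable ℂ g ∧ (∀ z, g z ≠ 0) ∧
      ∀ z, f z = Q.eval z * g z := by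
  induction hZ : hfin.toFinset using Finset.strongInduction generalizing f with
  | H Z ih =>
    by_cases h0 : ∀ z, f z ≠ 0
    · exact ⟨1, monic_one, f, hf, h0, by simp⟩
    push Not at h0
    obtain ⟨a, ha⟩ := h0
    have order_ne_top : analyticOrderAt f a ≠ ⊤ := fun h =>
      infinite_of_mem_nhds a (analyticOrderAt_eq_top.1 h) hfin
    obtain ⟨n, hn⟩ := ENat.ne_top_iff_exists.1 order_ne_top
    obtain ⟨g, hg, hga, hfg⟩ := exists_eq_pow_mul_of_analyticOrderAt_eq hf hn.symm
    have zeros_subset : {z | g z = 0} ⊂ {z | f z = 0} :=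
      Set.ssubset_iff_of_subset (fun z (hz : g z = 0) => by simp [hfg, hz]) |>.2 ⟨a, ha, hga⟩
    have gfin := hfin.subset zeros_subset.subset
    obtain ⟨Q, hQ, k, hk, hk0, hgk⟩ :=
      ih gfin.toFinset (hZ ▸ Set.Finite.toFinset_ssubset_toFinset.2 zeros_subset) hg gfin rfl
    exact ⟨(X - C a) ^ n * Q, ((monic_X_sub_C a).pow n).mul hQ, k, hk, hk0, fun z => by
      simp [hfg, hgk, mul_assoc]⟩

theorem eventually_one_le_norm_eval_of_monic {𝕜 : Type*} [NormedField 𝕜] {Q : 𝕜[X]}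
    (hQ : Q.Monic) : ∀ᶠ z in cobounded 𝕜, 1 ≤ ‖Q.eval z‖ := by
  rcases eq_or_ne Q 1 with rfl | hQ1
  · simp
  · exact (Q.tendsto_norm_atTop (hQ.degree_pos.2 hQ1)
      tendsto_norm_cobounded_atTop).eventually_ge_atTop 1

theorem exists_polynomial_mul_exp_of_finite_zeros {f : ℂ → ℂ} (hf : Differentiable ℂ f)
    (hord : HasFiniteOrder f) (hfin : {z | f z = 0}.Finite) :
    ∃ Q G : ℂ[X], Q ≠ 0 ∧ ∀ z, f z = Q.eval z * exp (G.eval z) := by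
  obtain ⟨Q, hQ, k, hk, hk0, hfk⟩ := exists_monic_mul_of_finite_zeros hf hfin
  obtain ⟨g, hg, hkg⟩ := exists_entire_exp_eq hk hk0
  have exp_order : HasFiniteOrder fun z => exp (g z) := hord.mono <| by
    filter_upwards [eventually_one_le_norm_eval_of_monic hQ] with z hz
    rw [hfk, norm_mul, ← hkg]
    exact le_mul_of_one_le_left (norm_nonneg _) hz
  obtain ⟨G, hG⟩ := exists_polynomial_of_hasFiniteOrder_exp hg exp_order
  exact ⟨Q, G, hQ.ne_zero, fun z => by rw [hfk, hkg, hG]⟩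

/-! ### Solutions of `w'' + q w = 0` -/

theorem norm_le_mul_exp_of_norm_deriv_le {E : Type*} [NormedAddCommGroup E] [NormedSpace ℂ E]
    {f f' : ℂ → E} (hf : ∀ z, HasDerivAt f (f' z) z) {a z : ℂ} {K : ℝ}
    (hK : ∀ ζ ∈ segment ℝ a z, ‖f' ζ‖ ≤ K * ‖f ζ‖) :
    ‖f z‖ ≤ ‖f a‖ * Real.exp (K * ‖z - a‖) := by
  let γ : ℝ → ℂ := AffineMap.lineMap a z
  have hγ : ∀ t, HasDerivAt (f ∘ γ) ((z - a) • f' (γ t)) t := fun t =>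
    (hf (γ t)).scomp t AffineMap.hasDerivAt_lineMap
  have bound : ∀ t ∈ Set.Ico (0 : ℝ) 1, ‖(z - a) • f' (γ t)‖ ≤ K * ‖z - a‖ * ‖(f ∘ γ) t‖ + 0 := by
    intro t ht
    have := hK (γ t) (segment_eq_image_lineMap ℝ a z ▸ ⟨t, ⟨ht.1, ht.2.le⟩, rfl⟩)
    calc ‖(z - a) • f' (γ t)‖ = ‖z - a‖ * ‖f' (γ t)‖ := norm_smul _ _
      _ ≤ ‖z - a‖ * (K * ‖f (γ t)‖) := by gcongr
      _ = K * ‖z - a‖ * ‖(f ∘ γ) t‖ + 0 := by rw [Function.comp_apply]; ring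
  have := norm_le_gronwallBound_of_norm_deriv_right_le (a := 0) (b := 1)
    (fun t _ => (hγ t).continuousAt.continuousWithinAt) (fun t _ => (hγ t).hasDerivWithinAt)
    le_rfl bound 1 (by simp)
  simpa [γ, gronwallBound_ε0] using this

theorem hasDerivAt_deriv_of_ode {q w : ℂ → ℂ} (hw : Differentiable ℂ w)
    (hde : ∀ z, iteratedDeriv 2 w z + q z * w z = 0) (z : ℂ) :
    HasDerivAt (deriv w) (-(q z * w z)) z := by
  have h := hde z
  rw [iteratedDeriv_succ, iteratedDeriv_one] at h
  exact eq_neg_of_add_eq_zero_left h ▸ (hw.deriv z).hasDerivAt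

theorem norm_le_mul_exp_of_ode {q w : ℂ → ℂ} (hw : Differentiable ℂ w)
    (hde : ∀ z, iteratedDeriv 2 w z + q z * w z = 0) {a z : ℂ} {K : ℝ} (hK1 : 1 ≤ K)
    (hK : ∀ ζ ∈ segment ℝ a z, ‖q ζ‖ ≤ K) :
    ‖w z‖ ≤ max ‖w a‖ ‖deriv w a‖ * Real.exp (K * ‖z - a‖) := by
  have hsystem : ∀ ζ, HasDerivAt (fun ζ => (w ζ, deriv w ζ)) (deriv w ζ, -(q ζ * w ζ)) ζ :=
    fun ζ => (hw ζ).hasDerivAt.prodMk (hasDerivAt_deriv_of_ode hw hde ζ)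
  refine (le_max_left _ _).trans (norm_le_mul_exp_of_norm_deriv_le hsystem fun ζ hζ => ?_)
  simp only [Prod.norm_mk, norm_neg, norm_mul]
  refine max_le ?_ ?_
  · exact (le_max_right _ _).trans (le_mul_of_one_le_left (by positivity) hK1)
  · gcongr
    exacts [hK ζ hζ, le_max_left _ _]

theorem eventually_norm_eval_le_pow (P : ℂ[X]) :
    ∀ᶠ R : ℝ in atTop, ∀ z ∈ closedBall (0 : ℂ) R, ‖P.eval z‖ ≤ R ^ (P.natDegree + 1) := by
  refine eventually_forall_closedBall_norm_le (φ := (· ^ (P.natDegree + 1))) P.differentiable ?_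
  have degree_lt : P.degree < (X ^ (P.natDegree + 1) : ℂ[X]).degree := by
    rw [degree_X_pow]
    exact degree_le_natDegree.trans_lt (by exact_mod_cast P.natDegree.lt_succ_self)
  simpa using (isLittleO_cobounded_of_degree_lt degree_lt).bound one_pos

theorem hasFiniteOrder_of_ode {P : ℂ[X]} {w : ℂ → ℂ} (hw : Differentiable ℂ w)
    (hde : ∀ z, iteratedDeriv 2 w z + P.eval z * w z = 0) : HasFiniteOrder w := by
  set M := max ‖w 0‖ ‖deriv w 0‖
  set d := P.natDegree
  refine ⟨d + 3, eventually_cobounded_iff_eventually_atTop.2 ?_⟩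
  filter_upwards [eventually_norm_eval_le_pow P, eventually_ge_atTop 2, eventually_ge_atTop M]
    with R hPR hR2 hRM z hz
  have one_le : 1 ≤ R := by linarith
  have hPz : ∀ ζ ∈ segment ℝ 0 z, ‖P.eval ζ‖ ≤ R ^ (d + 1) := fun ζ hζ =>
    hPR ζ ((convex_closedBall 0 R).segment_subset (mem_closedBall_self (by linarith))
      (by simp [hz]) hζ)
  have exponent_le : R + R ^ (d + 1) * R ≤ R ^ (d + 3) :=
    calc R + R ^ (d + 1) * R ≤ R ^ (d + 2) + R ^ (d + 2) := by
          gcongr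
          · exact le_self_pow₀ one_le (by lia)
          · exact (pow_succ R (d + 1)).ge
      _ = 2 * R ^ (d + 2) := (two_mul _).symm
      _ ≤ R * R ^ (d + 2) := by gcongr
      _ = R ^ (d + 3) := (pow_succ' R (d + 2)).symm
  calc ‖w z‖ ≤ M * Real.exp (R ^ (d + 1) * ‖z - 0‖) :=
        norm_le_mul_exp_of_ode hw hde (one_le_pow₀ one_le) hPz
    _ ≤ Real.exp R * Real.exp (R ^ (d + 1) * R) := by
        rw [sub_zero, hz]
        gcongr
        linarith [Real.add_one_le_exp R]
    _ ≤ Real.exp (‖z‖ ^ (d + 3)) := by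
        rw [← Real.exp_add, hz]
        gcongr

theorem natDegree_eq_two_mul_of_riccati {R : Type*} [CommRing R] [IsDomain R] {P Q H : R[X]}
    (hQ : Q ≠ 0)
    (h : derivative (derivative Q) + 2 * derivative Q * H + Q * derivative H
      + Q * H ^ 2 + P * Q = 0) : P.natDegree = 2 * H.natDegree := by
  by_contra hne
  have natDegree_sum : (H ^ 2 + P).natDegree = max (2 * H.natDegree) P.natDegree := by
    rw [← natDegree_pow] at hne ⊢
    rcases lt_or_gt_of_ne hne with hlt | hlt
    · rw [natDegree_add_eq_left_of_natDegree_lt hlt, max_eq_left hlt.le]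
    · rw [natDegree_add_eq_right_of_natDegree_lt hlt, max_eq_right hlt.le]
  have sum_ne_zero : H ^ 2 + P ≠ 0 := fun h0 => by
    rw [h0, natDegree_zero] at natDegree_sum
    lia
  have natDegree_left : (Q * (H ^ 2 + P)).natDegree
      = Q.natDegree + max (2 * H.natDegree) P.natDegree := by
    rw [natDegree_mul hQ sum_ne_zero, natDegree_sum]
  have natDegree_right : (Q * (H ^ 2 + P)).natDegree ≤ Q.natDegree + H.natDegree := by
    have hQ' := natDegree_derivative_le Q
    have hQ'' := natDegree_derivative_le (derivative Q)
    have hH' := natDegree_derivative_le H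
    have h2Q' : (2 * derivative Q).natDegree ≤ (derivative Q).natDegree :=
      natDegree_mul_le.trans (by simp)
    rw [show Q * (H ^ 2 + P)
      = -(derivative (derivative Q) + 2 * derivative Q * H + Q * derivative H) by
        linear_combination h, natDegree_neg]
    refine natDegree_add_le_of_degree_le (natDegree_add_le_of_degree_le ?_ ?_) ?_
    · lia
    · exact natDegree_mul_le.trans (by lia)
    · exact natDegree_mul_le.trans (by lia)
  lia

theorem hasDerivAt_eval_mul_exp_eval (A G : ℂ[X]) (z : ℂ) :
    HasDerivAt (fun z => A.eval z * exp (G.eval z))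
      ((derivative A + A * derivative G).eval z * exp (G.eval z)) z := by
  refine ((A.hasDerivAt z).mul (G.hasDerivAt z).cexp).congr_deriv ?_
  simp only [eval_add, eval_mul]
  ring

theorem natDegree_eq_two_mul_of_ode {P Q G : ℂ[X]} (hQ : Q ≠ 0)
    (hde : ∀ z, iteratedDeriv 2 (fun z => Q.eval z * exp (G.eval z)) z
      + P.eval z * (Q.eval z * exp (G.eval z)) = 0) :
    P.natDegree = 2 * (derivative G).natDegree := by
  refine natDegree_eq_two_mul_of_riccati hQ (Polynomial.funext fun z => ?_)
  have hz := hde z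
  simp only [iteratedDeriv_succ, iteratedDeriv_zero,
    fun A => funext fun z => (hasDerivAt_eval_mul_exp_eval A G z).deriv] at hz
  apply mul_right_cancel₀ (exp_ne_zero (G.eval z))
  simp only [derivative_add, derivative_mul, eval_add, eval_mul] at hz
  simp only [eval_add, eval_mul, eval_pow, eval_ofNat, eval_zero]
  linear_combination hz

theorem even_natDegree_of_finite_zeros {P : ℂ[X]} {w : ℂ → ℂ} (hw : Differentiable ℂ w)
    (hde : ∀ z, iteratedDeriv 2 w z + P.eval z * w z = 0) (hfin : {z | w z = 0}.Finite) :
    Even P.natDegree := by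
  obtain ⟨Q, G, hQ, hwQ⟩ :=
    exists_polynomial_mul_exp_of_finite_zeros hw (hasFiniteOrder_of_ode hw hde) hfin
  obtain rfl : w = fun z => Q.eval z * exp (G.eval z) := funext hwQ
  exact natDegree_eq_two_mul_of_ode hQ hde ▸ even_two_mul _

/-! ### Real zeros -/

theorem hasDerivWithinAt_re_mul_conj_mul_of_ode {u v : ℝ → ℂ} {q : ℂ} {s : Set ℝ} {t : ℝ}
    (hu : HasDerivWithinAt u (v t) s t) (hv : HasDerivWithinAt v (-(q * u t)) s t) (c : ℂ) :
    HasDerivWithinAt (fun t => (c * (conj (u t) * v t)).re)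
      (c.re * normSq (v t) - (c * q).re * normSq (u t)) s t := by
  have hconj : HasDerivWithinAt (fun t => conj (u t)) (conj (v t)) s t :=
    conjCLE.hasFDerivAt.comp_hasDerivWithinAt t hu
  refine (reCLM.hasFDerivAt.comp_hasDerivWithinAt t
    ((hconj.mul hv).const_mul c)).congr_deriv ?_
  simp only [reCLM_apply, normSq_apply, mul_re, mul_im, add_re, add_im, neg_re, neg_im, conj_re,
    conj_im]
  ring

theorem eqOn_zero_of_ode_of_re_nonpos {u v q : ℝ → ℂ} {a b : ℝ} {c : ℂ}
    (hu : ∀ t ∈ Set.Icc a b, HasDerivWithinAt u (v t) (Set.Icc a b) t)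
    (hv : ∀ t ∈ Set.Icc a b, HasDerivWithinAt v (-(q t * u t)) (Set.Icc a b) t)
    (hc : 0 < c.re) (hq : ∀ t ∈ Set.Icc a b, (c * q t).re ≤ 0) (ha : u a = 0) (hb : u b = 0) :
    Set.EqOn u 0 (Set.Icc a b) := by
  rcases lt_or_ge a b with hab | hba
  swap
  · intro t ht
    rw [le_antisymm (ht.2.trans hba) ht.1, ha, Pi.zero_apply]
  let ψ : ℝ → ℝ := fun t => (c * (conj (u t) * v t)).re
  have hψ : ∀ t ∈ Set.Icc a b,
      HasDerivWithinAt ψ (c.re * normSq (v t) - (c * q t).re * normSq (u t)) (Set.Icc a b) t :=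
    fun t ht => hasDerivWithinAt_re_mul_conj_mul_of_ode (hu t ht) (hv t ht) c
  have re_term_nonneg : ∀ t ∈ Set.Icc a b, 0 ≤ -((c * q t).re * normSq (u t)) := fun t ht =>
    neg_nonneg.2 (mul_nonpos_of_nonpos_of_nonneg (hq t ht) (normSq_nonneg _))
  have ψ_mono : MonotoneOn ψ (Set.Icc a b) := by
    refine monotoneOn_of_hasDerivWithinAt_nonneg (convex_Icc a b)
      (fun t ht => (hψ t ht).continuousWithinAt)
      (fun t ht => (hψ t (interior_subset ht)).mono interior_subset) fun t ht => ?_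
    linarith [re_term_nonneg t (interior_subset ht), mul_nonneg hc.le (normSq_nonneg (v t))]
  have ψ_eq_zero : ∀ t ∈ Set.Icc a b, ψ t = 0 := fun t ht => le_antisymm
    ((ψ_mono ht (Set.right_mem_Icc.2 hab.le) ht.2).trans (by simp [ψ, hb]))
    (le_trans (by simp [ψ, ha]) (ψ_mono (Set.left_mem_Icc.2 hab.le) ht ht.1))
  have v_eq_zero : ∀ t ∈ Set.Icc a b, v t = 0 := by
    intro t ht
    have hderiv := (uniqueDiffOn_Icc hab t ht).eq_deriv _ (hψ t ht)
      ((hasDerivWithinAt_const t _ (0 : ℝ)).congr ψ_eq_zero (ψ_eq_zero t ht))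
    have : normSq (v t) ≤ 0 := by
      refine nonpos_of_mul_nonpos_right ?_ hc
      linarith [re_term_nonneg t ht]
    exact normSq_eq_zero.1 (this.antisymm (normSq_nonneg _))
  intro t ht
  rw [Pi.zero_apply, ← ha]
  refine constant_of_derivWithin_zero (fun s hs => (hu s hs).differentiableWithinAt)
    (fun s hs => ?_) t ht
  have hs := Set.Ico_subset_Icc_self hs
  rw [(hu s hs).derivWithin (uniqueDiffOn_Icc hab s hs), v_eq_zero s hs]

theorem eq_zero_of_forall_mem_Icc {E : Type*} [NormedAddCommGroup E] [NormedSpace ℂ E]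
    [CompleteSpace E] {w : ℂ → E} (hw : Differentiable ℂ w) {a b : ℝ} (hab : a < b)
    (h : ∀ t ∈ Set.Icc a b, w (t : ℂ) = 0) : w = 0 := by
  have tendsto_ofReal : Tendsto ofReal (𝓝[>] a) (𝓝[≠] (a : ℂ)) :=
    continuous_ofReal.continuousWithinAt.tendsto_nhdsWithin fun t ht =>
      ofReal_injective.ne (ne_of_gt ht)
  have eventually_zero : ∀ᶠ t : ℝ in 𝓝[>] a, w t = 0 :=
    mem_of_superset (Icc_mem_nhdsGT hab) h
  have hana : AnalyticOnNhd ℂ w Set.univ := fun z _ => hw.analyticAt z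
  exact hana.eq_of_frequently_eq analyticOnNhd_const
    (tendsto_ofReal.frequently eventually_zero.frequently)

theorem subsingleton_real_zeros_of_ode {q w : ℂ → ℂ} (hw : Differentiable ℂ w) (hw0 : w ≠ 0)
    (hde : ∀ z, iteratedDeriv 2 w z + q z * w z = 0) {c : ℂ} (hc : 0 < c.re) {s : Set ℝ}
    (hs : s.OrdConnected) (hq : ∀ x ∈ s, (c * q x).re ≤ 0) :
    {x ∈ s | w (x : ℂ) = 0}.Subsingleton := by
  rintro a ⟨has, ha⟩ b ⟨hbs, hb⟩
  wlog hab : a ≤ b generalizing a b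
  · exact (this hbs hb has ha (le_of_not_ge hab)).symm
  by_contra hne
  have hIcc : Set.Icc a b ⊆ s := hs.out has hbs
  exact hw0 <| eq_zero_of_forall_mem_Icc hw (lt_of_le_of_ne hab hne) <|
    eqOn_zero_of_ode_of_re_nonpos (u := fun t => w t) (v := fun t => deriv w t)
      (fun t _ => (hw t).hasDerivAt.comp_ofReal.hasDerivWithinAt)
      (fun t _ => (hasDerivAt_deriv_of_ode hw hde t).comp_ofReal.hasDerivWithinAt) hc
      (fun t ht => hq t (hIcc ht)) ha hb

theorem tendsto_eval_div_pow_natDegree {𝕜 : Type*} [NormedField 𝕜] (P : 𝕜[X]) :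
    Tendsto (fun z => P.eval z / z ^ P.natDegree) (cobounded 𝕜) (𝓝 P.leadingCoeff) := by
  have hequiv := (isEquivalent_cobounded_leading_monomial (P := P)).div
    (IsEquivalent.refl (u := fun z : 𝕜 => z ^ P.natDegree))
  refine hequiv.symm.tendsto_nhds (tendsto_const_nhds.congr' ?_)
  filter_upwards [eventually_ne_cobounded 0] with z hz
  rw [Pi.div_apply, mul_div_cancel_right₀ _ (pow_ne_zero _ hz)]

theorem exists_re_pos_and_re_mul_ne_zero {a : ℂ} (ha : a ≠ 0) :
    ∃ c : ℂ, 0 < c.re ∧ (c * a).re ≠ 0 := by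
  by_cases hre : a.re = 0
  · exact ⟨1 + I, by simp, fun h => ha (Complex.ext hre (by simpa [hre] using h))⟩
  · exact ⟨1, by simp, by simpa using hre⟩

theorem eventually_re_mul_eval_nonpos_of_odd {P : ℂ[X]} (hP : Odd P.natDegree) {c : ℂ}
    (hc : (c * P.leadingCoeff).re ≠ 0) :
    (∀ᶠ x : ℝ in atTop, (c * P.eval (x : ℂ)).re ≤ 0) ∨
      ∀ᶠ x : ℝ in atBot, (c * P.eval (x : ℂ)).re ≤ 0 := by
  have re_div : ∀ x : ℝ, (c * (P.eval (x : ℂ) / (x : ℂ) ^ P.natDegree)).re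
      = (c * P.eval (x : ℂ)).re / x ^ P.natDegree := fun x => by
    rw [← mul_div_assoc, ← ofReal_pow, div_ofReal_re]
  have tendsto_quotient := (continuous_re.tendsto _).comp
    ((tendsto_eval_div_pow_natDegree P).const_mul c)
  rcases hc.lt_or_gt with hneg | hpos
  · left
    filter_upwards [eventually_gt_atTop 0, (tendsto_quotient.comp
      (RCLike.tendsto_ofReal_atTop_cobounded ℂ)).eventually_lt_const hneg] with x hx hlt
    by_contra! hre
    exact (div_pos hre (pow_pos hx _)).not_gt ((re_div x).symm.trans_lt hlt)
  · right
    filter_upwards [eventually_lt_atBot 0, (tendsto_quotient.comp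
      (RCLike.tendsto_ofReal_atBot_cobounded ℂ)).eventually_const_lt hpos] with x hx hlt
    by_contra! hre
    exact (div_neg_of_pos_of_neg hre (hP.pow_neg hx)).not_gt (hlt.trans_eq (re_div x))

theorem bddAbove_or_bddBelow_real_zeros_of_ode {P : ℂ[X]} (hP : Odd P.natDegree) {w : ℂ → ℂ}
    (hw : Differentiable ℂ w) (hw0 : w ≠ 0)
    (hde : ∀ z, iteratedDeriv 2 w z + P.eval z * w z = 0) :
    BddAbove {x : ℝ | w x = 0} ∨ BddBelow {x : ℝ | w x = 0} := by
  have hP0 : P ≠ 0 := fun h => by simp [h] at hP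
  obtain ⟨c, hc, hcP⟩ := exists_re_pos_and_re_mul_ne_zero (leadingCoeff_ne_zero.2 hP0)
  refine (eventually_re_mul_eval_nonpos_of_odd hP hcP).imp (fun h => ?_) fun h => ?_
  · obtain ⟨x₀, hx₀⟩ := eventually_atTop.1 h
    have := subsingleton_real_zeros_of_ode hw hw0 hde hc Set.ordConnected_Ici hx₀
    refine ((bddAbove_Iic (a := x₀)).union this.finite.bddAbove).mono fun x hx => ?_
    exact (le_total x x₀).imp_right fun h => ⟨h, hx⟩
  · obtain ⟨x₀, hx₀⟩ := eventually_atBot.1 h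
    have := subsingleton_real_zeros_of_ode hw hw0 hde hc Set.ordConnected_Iic hx₀
    refine ((bddBelow_Ici (a := x₀)).union this.finite.bddBelow).mono fun x hx => ?_
    exact (le_total x₀ x).imp_right fun h => ⟨h, hx⟩

end

theorem stmt_6_general (P : Polynomial ℂ) (hP : Odd P.natDegree)
    (w : ℂ → ℂ) (hw : Differentiable ℂ w) (hw0 : w ≠ 0)
    (hde : ∀ z : ℂ, iteratedDeriv 2 w z + P.eval z * w z = 0) :
    {z : ℂ | w z = 0}.Infinite ∧
      (BddAbove {x : ℝ | w x = 0} ∨ BddBelow {x : ℝ | w x = 0}) :=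
  ⟨fun hfin => Nat.not_even_iff_odd.2 hP (even_natDegree_of_finite_zeros hw hde hfin),
    bddAbove_or_bddBelow_real_zeros_of_ode hP hw hw0 hde⟩

/-- If `P` is a real polynomial of odd degree and `w` is a nonzero entire solution of
`w'' + P·w = 0` with all but finitely many zeros real, then the set of zeros of `w` is
infinite and the set of real zeros is bounded above or bounded below. -/
theorem stmt_6 (P : Polynomial ℂ) (hP : Odd P.natDegree)
    (hreal : ∀ n, (P.coeff n).im = 0)
    (w : ℂ → ℂ) (hw : Differentiable ℂ w) (hw0 : w ≠ 0)
    (hde : ∀ z : ℂ, iteratedDeriv 2 w z + P.eval z * w z = 0)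
    (hzeros : {z : ℂ | w z = 0 ∧ z.im ≠ 0}.Finite) :
    {z : ℂ | w z = 0}.Infinite ∧
      (BddAbove {x : ℝ | w x = 0} ∨ BddBelow {x : ℝ | w x = 0}) :=
  stmt_6_general P hP w hw hw0 hde
end

section
/- Let P be a polynomial over ℂ whose degree d satisfies d ≡ 2 (mod 4), and let w be a nonzero entire function satisfying w''(z) + P(z)·w(z) = 0 for all z ∈ ℂ such that all but finitely many zeros of w are real (i.e. the set {z : ℂ | w(z) = 0 and Im(z) ≠ 0} is finite). Then w has only finitely many zeros, i.e. the set {z : ℂ | w(z) = 0} is finite. -/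
open Complex Polynomial
open Filter Set Metric Bornology Asymptotics Topology ComplexConjugate

/-! Suppose `w` has infinitely many real zeros. Between consecutive real zeros Rolle's theorem
applies to the real and imaginary parts of `w' * conj w`, whose derivatives on the real line are
`|w'| ^ 2 - re P * |w| ^ 2` and `-im P * |w| ^ 2`. Hence `P` is real on the real line,
`w' * conj w` has zero imaginary part there, and the leading coefficient `a` of `P` is positive.
Integrating upwards from the real line, `im (w' / w) ≤ 0` at points slightly above it, far out in
both directions.

In sectors around the positive imaginary axis `w` has no zeros far out, and `u = w' / w` solves
the Riccati equation `u' + u ^ 2 = -P`. This forces `u' = o(z ^ d)`, so `u ^ 2 ~ -a * z ^ d`. With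
`d = 2 * k`, the quotient `u / (i * √a * z ^ k)` therefore stays near `1` or stays near `-1` along
a path from one end of the sector to the other. At both ends the sign of `im u` decides which: if
`k` is odd, `z ^ k` has opposite signs there, so the quotient would have to change sign. -/

section Riccati

variable {u : ℂ → ℂ} {c z : ℂ} {r A M : ℝ}

lemma norm_deriv_mul_sq_le_of_norm_mul_le (hu : DifferentiableOn ℂ u (closedBall c r))
    (hA : ∀ y ∈ closedBall c r, ‖u y‖ * (r - dist y c) ≤ A) (hz : z ∈ closedBall c r) :
    ‖deriv u z‖ * (r - dist z c) ^ 2 ≤ 4 * A := by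
  have hρ : 0 ≤ r - dist z c := sub_nonneg.2 hz
  obtain hρ | hρ := hρ.eq_or_lt
  · have hA₀ := hA z hz
    rw [← hρ, mul_zero] at hA₀
    rw [← hρ]
    linarith
  set ρ := r - dist z c with hρ_def
  have hdist {y : ℂ} (hy : y ∈ closedBall z (ρ / 2)) : dist y c ≤ r - ρ / 2 := by
    linarith [hρ_def, dist_triangle y z c, mem_closedBall.1 hy]
  have hsub : closedBall z (ρ / 2) ⊆ closedBall c r := fun y hy =>
    mem_closedBall.2 (by linarith [hdist hy])
  have hcauchy : ‖deriv u z‖ ≤ 2 * A / ρ / (ρ / 2) := by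
    refine norm_deriv_le_of_forall_mem_sphere_norm_le (by positivity)
      (hu.mono (closure_ball_subset_closedBall.trans hsub)).diffContOnCl fun y hy => ?_
    have hy := sphere_subset_closedBall hy
    have := mul_le_mul_of_nonneg_left (a := ‖u y‖) (by linarith [hdist hy] : ρ / 2 ≤ r - dist y c)
      (norm_nonneg _)
    rw [le_div_iff₀ hρ]
    linarith [hA y (hsub hy)]
  calc ‖deriv u z‖ * ρ ^ 2 ≤ 2 * A / ρ / (ρ / 2) * ρ ^ 2 := by gcongr
    _ = 4 * A := by field_simp; ring

-- Apply the Cauchy estimate at a maximum point of the weight `‖u y‖ * (r - dist y c)`: there the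
-- Riccati expression bounds `‖u‖ ^ 2` by `‖deriv u‖`, which is only linear in `‖u‖`.
lemma norm_mul_le_of_riccati (hM : 0 ≤ M) (hu : DifferentiableOn ℂ u (closedBall c r))
    (hric : ∀ y ∈ closedBall c r, ‖deriv u y + u y ^ 2‖ ≤ M ^ 2) (hz : z ∈ closedBall c r) :
    ‖u z‖ * (r - dist z c) ≤ 4 + M * r := by
  have hcont : ContinuousOn (fun y => ‖u y‖ * (r - dist y c)) (closedBall c r) := by
    have := hu.continuousOn
    fun_prop
  obtain ⟨m, hm, hmax⟩ := (isCompact_closedBall c r).exists_isMaxOn ⟨z, hz⟩ hcont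
  refine (hmax hz).trans ?_
  set ρ := r - dist m c
  have hρ₀ : 0 ≤ ρ := sub_nonneg.2 hm
  have hρr : ρ ≤ r := sub_le_self _ dist_nonneg
  have hderiv : ‖deriv u m‖ * ρ ^ 2 ≤ 4 * (‖u m‖ * ρ) :=
    norm_deriv_mul_sq_le_of_norm_mul_le hu hmax hm
  have hsq : ‖u m‖ ^ 2 ≤ M ^ 2 + ‖deriv u m‖ := by
    calc ‖u m‖ ^ 2 = ‖(deriv u m + u m ^ 2) - deriv u m‖ := by rw [add_sub_cancel_left, norm_pow]
      _ ≤ M ^ 2 + ‖deriv u m‖ := (norm_sub_le _ _).trans (by gcongr; exact hric m hm)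
  have hquad : (‖u m‖ * ρ) ^ 2 ≤ 4 * (‖u m‖ * ρ) + (M * r) ^ 2 := by
    calc (‖u m‖ * ρ) ^ 2 = ‖u m‖ ^ 2 * ρ ^ 2 := mul_pow _ _ _
      _ ≤ (M ^ 2 + ‖deriv u m‖) * ρ ^ 2 := by gcongr
      _ = ‖deriv u m‖ * ρ ^ 2 + (M * ρ) ^ 2 := by ring
      _ ≤ 4 * (‖u m‖ * ρ) + (M * r) ^ 2 := by gcongr
  change ‖u m‖ * ρ ≤ 4 + M * r
  have hMr : 0 ≤ M * r := mul_nonneg hM (hρ₀.trans hρr)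
  by_contra! hlt
  nlinarith

lemma norm_deriv_le_of_riccati (hr : 0 < r) (hM : 0 ≤ M)
    (hu : DifferentiableOn ℂ u (closedBall c r))
    (hric : ∀ y ∈ closedBall c r, ‖deriv u y + u y ^ 2‖ ≤ M ^ 2) :
    ‖deriv u c‖ ≤ 4 * (4 + M * r) / r ^ 2 := by
  have h := norm_deriv_mul_sq_le_of_norm_mul_le hu
    (fun y hy => norm_mul_le_of_riccati hM hu hric hy) (mem_closedBall_self hr.le)
  rw [dist_self, sub_zero] at h
  rwa [le_div_iff₀ (by positivity)]

end Riccati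

section UpperSector

/-- The filter of points tending to infinity inside the sector `ε * ‖z‖ < im z`, which for
`0 < ε < 1` is an open sector around the positive imaginary axis. -/
noncomputable def atUpperSector (ε : ℝ) : Filter ℂ := cobounded ℂ ⊓ 𝓟 {z | ε * ‖z‖ < z.im}

variable {ε : ℝ} {p : ℂ → Prop}

lemma eventually_atUpperSector :
    (∀ᶠ z in atUpperSector ε, p z) ↔ ∃ R, ∀ z : ℂ, R ≤ ‖z‖ → ε * ‖z‖ < z.im → p z := by
  rw [atUpperSector, eventually_inf_principal, hasBasis_cobounded_norm.eventually_iff]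
  simp

lemma exists_of_eventually_atUpperSector (hε : ε < 1) (hp : ∀ᶠ z in atUpperSector ε, p z) :
    ∃ z, p z := by
  obtain ⟨R, hR⟩ := eventually_atUpperSector.1 hp
  have hpos : 0 < max R 1 := lt_max_of_lt_right one_pos
  set z : ℂ := (max R 1 : ℝ) * I
  have hnorm : ‖z‖ = max R 1 := by
    rw [norm_mul, norm_I, mul_one, norm_real, Real.norm_of_nonneg hpos.le]
  have him : z.im = max R 1 := by rw [im_ofReal_mul, I_im, mul_one]
  refine ⟨z, hR z (hnorm ▸ le_max_left R 1) ?_⟩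
  rw [hnorm, him]
  exact mul_lt_of_lt_one_left hpos hε

lemma lt_im_and_le_norm_and_norm_le_of_mem_closedBall {y z : ℂ} (hε : 0 < ε) (hz : ε * ‖z‖ < z.im)
    (hy : y ∈ closedBall z (ε / 4 * ‖z‖)) :
    ε / 2 * ‖y‖ < y.im ∧ ‖z‖ / 2 ≤ ‖y‖ ∧ ‖y‖ ≤ 2 * ‖z‖ := by
  have hdist : ‖y - z‖ ≤ ε / 4 * ‖z‖ := mem_closedBall_iff_norm.1 hy
  have hz₀ : 0 < ‖z‖ := norm_pos_iff.2 (by rintro rfl; simp at hz)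
  have hε₁ : ε < 1 := by
    by_contra! h
    nlinarith [im_le_norm z]
  have him : z.im - y.im ≤ ε / 4 * ‖z‖ := by
    rw [← sub_im]
    exact (im_le_norm _).trans (norm_sub_rev y z ▸ hdist)
  have hupper : ‖y‖ ≤ ‖z‖ + ε / 4 * ‖z‖ := (norm_le_norm_add_norm_sub' y z).trans (by gcongr)
  have hlower : ‖z‖ ≤ ‖y‖ + ε / 4 * ‖z‖ := (norm_le_norm_add_norm_sub y z).trans (by gcongr)
  refine ⟨?_, ?_, ?_⟩ <;> nlinarith [mul_pos hε hz₀]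

lemma eventually_forall_mem_closedBall (hε : 0 < ε)
    (hp : ∀ᶠ z in atUpperSector (ε / 2), p z) :
    ∀ᶠ z in atUpperSector ε, ∀ y ∈ closedBall z (ε / 4 * ‖z‖), p y := by
  obtain ⟨R, hR⟩ := eventually_atUpperSector.1 hp
  refine eventually_atUpperSector.2 ⟨2 * R, fun z hz him y hy => ?_⟩
  obtain ⟨hy_im, hy_norm, -⟩ := lt_im_and_le_norm_and_norm_le_of_mem_closedBall hε him hy
  exact hR y (by linarith) hy_im

lemma eventually_forall_mem_Icc_of_atUpperSector {η : ℝ} (hη₀ : 0 < η) (hη₁ : η ≤ 1)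
    (hp : ∀ᶠ z in atUpperSector (η / 3), p z) :
    ∀ᶠ R : ℝ in atTop, ∀ x ∈ Icc (-R) R, p (x + (η * R : ℝ) * I) := by
  obtain ⟨R₀, hR₀⟩ := eventually_atUpperSector.1 hp
  filter_upwards [eventually_ge_atTop (R₀ / η), eventually_gt_atTop 0] with R hR hR' x hx
  set z : ℂ := x + (η * R : ℝ) * I with hz
  have him : z.im = η * R := by simp [hz]
  have hre : |z.re| ≤ R := by simpa [hz] using abs_le.2 hx
  have hnorm : ‖z‖ ≤ 2 * R := by
    have := norm_le_abs_re_add_abs_im z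
    rw [him, abs_of_pos (mul_pos hη₀ hR')] at this
    nlinarith
  refine hR₀ z (((div_le_iff₀' hη₀).1 hR).trans (him ▸ im_le_norm z)) ?_
  rw [him]
  nlinarith [mul_pos hη₀ hR']

lemma deriv_isBigO_inv_mul_pow_of_riccati {u : ℂ → ℂ} {n : ℕ} (hε : 0 < ε)
    (hu : ∀ᶠ z in atUpperSector (ε / 2), DifferentiableAt ℂ u z)
    (hric : (fun z => deriv u z + u z ^ 2) =O[atUpperSector (ε / 2)] fun z => z ^ n) :
    deriv u =O[atUpperSector ε] fun z => z⁻¹ * z ^ n := by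
  obtain ⟨K, hK, hric⟩ := hric.exists_pos
  refine IsBigO.of_bound (16 * (16 / ε + 1) * (1 + 2 ^ n * K) / ε) ?_
  have hlarge : ∀ᶠ z in atUpperSector ε, 1 ≤ ‖z‖ ∧ ε * ‖z‖ < z.im :=
    eventually_atUpperSector.2 ⟨1, fun z hz him => ⟨hz, him⟩⟩
  filter_upwards [hlarge, eventually_forall_mem_closedBall hε hu,
    eventually_forall_mem_closedBall hε hric.bound] with z ⟨hz, him⟩ hdiff hbound
  have : 0 < ‖z‖ := by linarith
  set M := (1 + 2 ^ n * K) * ‖z‖ ^ n with hM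
  have hM₁ : 1 ≤ M := one_le_mul_of_one_le_of_one_le
    (le_add_of_nonneg_right (by positivity)) (one_le_pow₀ hz)
  have hricM : ∀ y ∈ closedBall z (ε / 4 * ‖z‖), ‖deriv u y + u y ^ 2‖ ≤ M ^ 2 := by
    intro y hy
    calc ‖deriv u y + u y ^ 2‖ ≤ K * ‖y‖ ^ n := by rw [← norm_pow]; exact hbound y hy
      _ ≤ K * (2 * ‖z‖) ^ n := by
        gcongr
        exact (lt_im_and_le_norm_and_norm_le_of_mem_closedBall hε him hy).2.2
      _ = M - ‖z‖ ^ n := by rw [hM]; ring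
      _ ≤ M := sub_le_self _ (by positivity)
      _ ≤ M ^ 2 := le_self_pow₀ hM₁ two_ne_zero
  have hderiv := norm_deriv_le_of_riccati (by positivity) (by positivity)
    (fun y hy => (hdiff y hy).differentiableWithinAt) hricM
  calc ‖deriv u z‖ ≤ 4 * (4 + M * (ε / 4 * ‖z‖)) / (ε / 4 * ‖z‖) ^ 2 := hderiv
    _ ≤ 4 * (4 * (M * ‖z‖) + M * (ε / 4 * ‖z‖)) / (ε / 4 * ‖z‖) ^ 2 := by
      gcongr
      exact le_mul_of_one_le_right (by norm_num) (one_le_mul_of_one_le_of_one_le hM₁ hz)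
    _ = 16 * (16 / ε + 1) * (1 + 2 ^ n * K) / ε * ‖z⁻¹ * z ^ n‖ := by
      rw [hM, norm_mul, norm_inv, norm_pow]
      field_simp
      ring

lemma deriv_isLittleO_pow_of_riccati {u : ℂ → ℂ} {n : ℕ} (hε : 0 < ε)
    (hu : ∀ᶠ z in atUpperSector (ε / 2), DifferentiableAt ℂ u z)
    (hric : (fun z => deriv u z + u z ^ 2) =O[atUpperSector (ε / 2)] fun z => z ^ n) :
    deriv u =o[atUpperSector ε] fun z => z ^ n := by
  refine (deriv_isBigO_inv_mul_pow_of_riccati hε hu hric).trans_isLittleO ?_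
  have hinv : (fun z : ℂ => z⁻¹) =o[atUpperSector ε] fun _ => (1 : ℂ) :=
    (isLittleO_one_iff ℂ).2 (tendsto_inv₀_cobounded.mono_left inf_le_left)
  simpa using hinv.mul_isBigO (isBigO_refl (fun z => z ^ n) _)

end UpperSector

section Signs

variable {g q u : ℂ} {b s x : ℝ} {k : ℕ}

lemma re_mul_pos_of_norm_sub_one_le (hg : ‖g - 1‖ ≤ 1 / 4) (hq : ‖q - 1‖ ≤ 1 / 4) :
    0 < (g * q).re := by
  have hdist : ‖g * q - 1‖ < 1 := by
    calc ‖g * q - 1‖ = ‖(g - 1) + (q - 1) + (g - 1) * (q - 1)‖ := by congr 1; ring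
      _ ≤ ‖g - 1‖ + ‖q - 1‖ + ‖g - 1‖ * ‖q - 1‖ := by
        rw [← norm_mul]
        exact norm_add₃_le
      _ ≤ 1 / 4 + 1 / 4 + 1 / 4 * (1 / 4) := by gcongr
      _ < 1 := by norm_num
  have hre := (abs_re_le_norm (g * q - 1)).trans_lt hdist
  rw [sub_re, one_re, abs_lt] at hre
  linarith

lemma norm_sub_one_le_norm_sq_sub_one (hg : 0 ≤ g.re) : ‖g - 1‖ ≤ ‖g ^ 2 - 1‖ := by
  have hadd : 1 ≤ ‖g + 1‖ := by
    refine le_trans ?_ (re_le_norm _)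
    simpa using hg
  calc ‖g - 1‖ ≤ ‖g + 1‖ * ‖g - 1‖ := le_mul_of_one_le_left (norm_nonneg _) hadd
    _ = ‖g ^ 2 - 1‖ := by rw [← norm_mul]; ring_nf

lemma re_neg_of_re_mul_nonpos (hg : ‖g ^ 2 - 1‖ ≤ 1 / 4) (hq : ‖q - 1‖ ≤ 1 / 4)
    (hgq : (g * q).re ≤ 0) : g.re < 0 := by
  by_contra! hre
  exact hgq.not_gt
    (re_mul_pos_of_norm_sub_one_le ((norm_sub_one_le_norm_sq_sub_one hre).trans hg) hq)

lemma pow_mul_re_div_neg (hb : 0 < b) (hx : x ≠ 0) (hu : u.im ≤ 0)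
    (hs : ‖(1 + s * I) ^ k - 1‖ ≤ 1 / 4)
    (hsq : ‖(u / (I * b * (x * (1 + s * I)) ^ k)) ^ 2 - 1‖ ≤ 1 / 4) :
    x ^ k * (u / (I * b * (x * (1 + s * I)) ^ k)).re < 0 := by
  set q := (1 + s * I) ^ k with hq
  set g := u / (I * b * (x * (1 + s * I)) ^ k)
  have hq₀ : q ≠ 0 := by
    intro h
    norm_num [h] at hs
  have hu_eq : u = (b * x ^ k : ℝ) * (I * (g * q)) := by
    have hden : I * b * (x * (1 + s * I)) ^ k ≠ 0 := by
      rw [mul_pow]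
      simp [hb.ne', hx, hq₀, ← hq]
    have hmul : u = g * (I * b * (x * (1 + s * I)) ^ k) := (div_mul_cancel₀ u hden).symm
    rw [hmul, mul_pow, ← hq]
    push_cast
    ring
  have him : b * (x ^ k * (g * q).re) ≤ 0 := by
    rwa [hu_eq, im_ofReal_mul, I_mul_im, mul_assoc] at hu
  have hre : x ^ k * (g * q).re ≤ 0 := nonpos_of_mul_nonpos_right him hb
  obtain hxk | hxk := (pow_ne_zero k hx).lt_or_gt
  · have hneg := re_neg_of_re_mul_nonpos (g := -g) (by rwa [neg_sq]) hs
      (by rw [neg_mul, neg_re]; linarith [nonneg_of_mul_nonpos_right hre hxk])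
    rw [neg_re, neg_lt_zero] at hneg
    exact mul_neg_of_neg_of_pos hxk hneg
  · exact mul_neg_of_pos_of_neg hxk
      (re_neg_of_re_mul_nonpos hsq hs (nonpos_of_mul_nonpos_right hre hxk))

lemma pow_mul_re_div_neg_of_forall_abs_le {η : ℝ} (hb : 0 < b) (hη : 0 ≤ η) (hx : x ≠ 0)
    (hu : u.im ≤ 0) (hpow : ∀ s : ℝ, |s| ≤ η → ‖(1 + s * I) ^ k - 1‖ ≤ 1 / 4)
    (hsq : ‖(u / (I * b * (x + (η * |x| : ℝ) * I) ^ k)) ^ 2 - 1‖ ≤ 1 / 4) :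
    x ^ k * (u / (I * b * (x + (η * |x| : ℝ) * I) ^ k)).re < 0 := by
  have hz : (x + (η * |x| : ℝ) * I : ℂ) = x * (1 + (η * |x| / x : ℝ) * I) := by
    push_cast
    field_simp [ofReal_ne_zero.2 hx]
  have hslope : |η * |x| / x| ≤ η := by
    rw [abs_div, abs_mul, abs_abs, mul_div_cancel_right₀ _ (abs_ne_zero.2 hx), abs_of_nonneg hη]
  rw [hz] at hsq ⊢
  exact pow_mul_re_div_neg hb hx hu (hpow _ hslope) hsq

lemma re_mul_re_pos_of_norm_sq_sub_one_lt {f : ℝ → ℂ} {l r : ℝ} (hlr : l ≤ r)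
    (hf : ContinuousOn f (Icc l r)) (hsq : ∀ t ∈ Icc l r, ‖f t ^ 2 - 1‖ < 1) :
    0 < (f l).re * (f r).re := by
  have hne : ∀ t ∈ Icc l r, (f t).re ≠ 0 := by
    intro t ht h
    have hre := (abs_re_le_norm _).trans_lt (hsq t ht)
    rw [sub_re, sq, mul_re, h, one_re, abs_lt] at hre
    nlinarith
  have hcont : ContinuousOn (fun t => (f t).re) (Icc l r) := continuous_re.comp_continuousOn hf
  by_contra! hle
  have hzero : (0 : ℝ) ∈ uIcc (f l).re (f r).re := by
    rw [mem_uIcc]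
    exact (mul_nonpos_iff.1 hle).symm.imp_right And.symm
  rw [← uIcc_of_le hlr] at hcont
  obtain ⟨t, ht, ht₀⟩ := intermediate_value_uIcc hcont hzero
  exact hne t (uIcc_of_le hlr ▸ ht) ht₀

lemma eventually_norm_one_add_mul_I_pow_sub_one_le (k : ℕ) :
    ∀ᶠ η : ℝ in 𝓝[>] 0, ∀ s : ℝ, |s| ≤ η → ‖(1 + s * I) ^ k - 1‖ ≤ 1 / 4 := by
  have hcont : Continuous fun s : ℝ => ‖(1 + s * I) ^ k - 1‖ := by fun_prop
  have hnear : ∀ᶠ s : ℝ in 𝓝 0, ‖(1 + s * I) ^ k - 1‖ < 1 / 4 :=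
    hcont.continuousAt.eventually_lt continuousAt_const (by simp)
  obtain ⟨δ, hδ, hball⟩ := Metric.eventually_nhds_iff.1 hnear
  filter_upwards [Ioo_mem_nhdsGT hδ] with η hη s hs
  exact (hball (by simpa using hs.trans_lt hη.2)).le

end Signs

section Polynomial

lemma eventually_re_eval_pos {P : ℂ[X]} {a : ℝ} (ha : 0 < a) (hlead : P.leadingCoeff = a)
    (heven : Even P.natDegree) :
    ∀ᶠ η : ℝ in 𝓝[>] 0, ∀ᶠ z in cobounded ℂ, |z.im| ≤ η * |z.re| → 0 < (P.eval z).re := by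
  filter_upwards [eventually_norm_one_add_mul_I_pow_sub_one_le P.natDegree] with η hη
  obtain ⟨φ, hφ, hP⟩ := P.isEquivalent_cobounded_leading_monomial.exists_eq_mul
  have hφ_near : ∀ᶠ z in cobounded ℂ, ‖φ z - 1‖ ≤ 1 / 4 := by
    simpa [dist_eq_norm] using hφ.eventually (closedBall_mem_nhds 1 (by norm_num : (0 : ℝ) < 1 / 4))
  filter_upwards [hP, hφ_near, eventually_ne_cobounded 0] with z hPz hφz hz₀ hz
  have hre : z.re ≠ 0 := by
    intro h
    exact hz₀ (Complex.ext h (by simpa [h] using hz))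
  have hslope : |z.im / z.re| ≤ η := by
    rwa [abs_div, div_le_iff₀ (abs_pos.2 hre)]
  have hz_eq : z = (z.re : ℂ) * (1 + (z.im / z.re : ℝ) * I) := by
    apply Complex.ext <;> simp [mul_div_cancel₀, hre]
  have hPz_eq : P.eval z = (a * z.re ^ P.natDegree : ℝ) *
      (φ z * (1 + (z.im / z.re : ℝ) * I) ^ P.natDegree) := by
    rw [hPz, Pi.mul_apply, hlead]
    conv_lhs => enter [2, 2]; rw [hz_eq, mul_pow]
    push_cast
    ring
  rw [hPz_eq, re_ofReal_mul]
  exact mul_pos (mul_pos ha (heven.pow_pos hre))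
    (re_mul_pos_of_norm_sub_one_le hφz (hη _ hslope))

lemma map_conj_eq_self_of_frequently {P : ℂ[X]}
    (hP : ∃ᶠ x : ℝ in cobounded ℝ, (P.eval (x : ℂ)).im = 0) :
    P.map (starRingEnd ℂ) = P := by
  refine Polynomial.eq_of_infinite_eval_eq _ _ fun hfin => hP ?_
  have hreal : {x : ℝ | (P.eval (x : ℂ)).im = 0}.Finite := by
    refine (hfin.preimage ofReal_injective.injOn).subset fun x hx => ?_
    rw [mem_preimage, mem_ofPred_eq]
    conv_lhs => rw [← conj_ofReal x, eval_map, eval₂_at_apply]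
    exact conj_eq_iff_im.2 hx
  exact isBounded_def.1 hreal.isBounded

lemma im_eval_ofReal_eq_zero_of_map_conj {P : ℂ[X]} (hP : P.map (starRingEnd ℂ) = P) (x : ℝ) :
    (P.eval (x : ℂ)).im = 0 := by
  rw [← conj_eq_iff_im, ← eval₂_at_apply, conj_ofReal, ← eval_map, hP]

lemma exists_pos_leadingCoeff_eq {P : ℂ[X]} (hP₀ : P ≠ 0) (heven : Even P.natDegree)
    (hconj : P.map (starRingEnd ℂ) = P)
    (hnonneg : ∃ᶠ x : ℝ in cobounded ℝ, 0 ≤ (P.eval (x : ℂ)).re) :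
    ∃ a : ℝ, 0 < a ∧ P.leadingCoeff = a := by
  obtain ⟨a, ha⟩ : ∃ a : ℝ, P.leadingCoeff = a := by
    rw [← conj_eq_iff_real, ← leadingCoeff_map, hconj]
  refine ⟨a, ?_, ha⟩
  have ha₀ : a ≠ 0 := by
    rintro rfl
    exact hP₀ (leadingCoeff_eq_zero.1 (by simpa using ha))
  by_contra hpos
  have hneg : 0 < -a := neg_pos.2 (lt_of_le_of_ne (not_lt.1 hpos) ha₀)
  obtain ⟨η, hη, hη₀⟩ := ((eventually_re_eval_pos (P := -P) hneg (by simp [ha])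
    (by rwa [natDegree_neg])).and self_mem_nhdsWithin).exists
  refine hnonneg ?_
  filter_upwards [isometry_ofReal.antilipschitz.tendsto_cobounded.eventually hη] with x hx
  have := hx (by simpa using mul_nonneg (le_of_lt hη₀) (abs_nonneg x))
  simpa using this

end Polynomial

section Rolle

lemma exists_next_mem {S : Set ℝ} {a b : ℝ} (hab : a < b) (hb : b ∈ S)
    (hfin : (S ∩ Icc a b).Finite) : ∃ c ∈ S, a < c ∧ c ≤ b ∧ ∀ x ∈ Ioo a c, x ∉ S := by
  have hfin' : (S ∩ Ioc a b).Finite := hfin.subset (by gcongr; exact Ioc_subset_Icc_self)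
  obtain ⟨c, ⟨hcS, hac, hcb⟩, hmin⟩ := hfin'.exists_minimal ⟨b, hb, hab, le_rfl⟩
  exact ⟨c, hcS, hac, hcb, fun x hx hxS =>
    hx.2.not_ge (hmin ⟨hxS, hx.1, hx.2.le.trans hcb⟩ hx.2.le)⟩

lemma exists_lt_mem_forall_Icc_le_abs {S : Set ℝ} (hS : S.Infinite)
    (hfin : ∀ a b, (S ∩ Icc a b).Finite) (R : ℝ) :
    ∃ a ∈ S, ∃ b ∈ S, a < b ∧ ∀ x ∈ Icc a b, R ≤ |x| := by
  have hsplit : S \ (S ∩ Icc (-R) R) ⊆ (S ∩ Ici R) ∪ (S ∩ Iic (-R)) := by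
    rintro x ⟨hxS, hx⟩
    by_cases hxR : R ≤ x
    · exact Or.inl ⟨hxS, hxR⟩
    · refine Or.inr ⟨hxS, ?_⟩
      by_contra hxR'
      exact hx ⟨hxS, (not_le.1 hxR').le, (not_le.1 hxR).le⟩
  obtain h | h := infinite_union.1 ((hS.sdiff (hfin (-R) R)).mono hsplit)
  · obtain ⟨a, ⟨haS, haR⟩, b, ⟨hbS, -⟩, hab⟩ := h.nontrivial.exists_lt
    exact ⟨a, haS, b, hbS, hab, fun x hx => (le_trans haR hx.1).trans (le_abs_self x)⟩
  · obtain ⟨a, ⟨haS, -⟩, b, ⟨hbS, hbR⟩, hab⟩ := h.nontrivial.exists_lt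
    exact ⟨a, haS, b, hbS, hab, fun x hx =>
      (le_neg_of_le_neg (hx.2.trans hbR)).trans (neg_le_abs x)⟩

lemma frequently_deriv_eq_zero_of_infinite {f f' : ℝ → ℝ} {S : Set ℝ} (hS : S.Infinite)
    (hfin : ∀ a b, (S ∩ Icc a b).Finite) (hf : ∀ x ∈ S, f x = 0)
    (hf' : ∀ x, HasDerivAt f (f' x) x) : ∃ᶠ x in cobounded ℝ, x ∉ S ∧ f' x = 0 := by
  rw [hasBasis_cobounded_norm.frequently_iff]
  intro R _
  obtain ⟨a, haS, b, hbS, hab, hR⟩ := exists_lt_mem_forall_Icc_le_abs hS hfin R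
  obtain ⟨c, hcS, hac, hcb, hgap⟩ := exists_next_mem hab hbS (hfin a b)
  obtain ⟨x, hx, hx₀⟩ := exists_hasDerivAt_eq_zero hac
    (HasDerivAt.continuousOn fun x _ => hf' x) ((hf a haS).trans (hf c hcS).symm)
    fun x _ => hf' x
  exact ⟨x, hR x ⟨hx.1.le, hx.2.le.trans hcb⟩, hgap x hx, hx₀⟩

end Rolle

section Solution

/-- `w` is an entire solution of `w'' + q * w = 0`; the derivative `w''` is written as
`deriv (deriv w)` and isolated, as this is the form in which the equation is substituted. -/
structure IsEntireSolution (q w : ℂ → ℂ) : Prop where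
  differentiable : Differentiable ℂ w
  deriv_deriv : ∀ z, deriv (deriv w) z = -(q z * w z)

lemma finite_real_zeros_inter_Icc {w : ℂ → ℂ} (hw : Differentiable ℂ w) (hw₀ : w ≠ 0) (a b : ℝ) :
    ({x : ℝ | w x = 0} ∩ Icc a b).Finite := by
  obtain ⟨z, hz⟩ := Function.ne_iff.1 hw₀
  have hcodisc : w ⁻¹' {0}ᶜ ∈ codiscrete ℂ :=
    AnalyticOnNhd.preimage_zero_mem_codiscrete (fun z _ => hw.analyticAt z) hz
  have hK : IsCompact (((↑) : ℝ → ℂ) '' Icc a b) := isCompact_Icc.image continuous_ofReal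
  have hfin := hK.finite_sdiff_of_mem_codiscreteWithin
    (codiscreteWithin_mono (subset_univ _) hcodisc)
  refine (hfin.preimage ofReal_injective.injOn).subset fun x hx => ?_
  exact ⟨mem_image_of_mem _ hx.2, fun h => h hx.1⟩

namespace IsEntireSolution

variable {q w : ℂ → ℂ}

lemma hasDerivAt_deriv_mul_conj (h : IsEntireSolution q w) (c v : ℂ) (t : ℝ) :
    HasDerivAt (fun t : ℝ => deriv w (c + t * v) * conj (w (c + t * v)))
      (-(v * q (c + t * v)) * (‖w (c + t * v)‖ ^ 2 : ℝ)
        + conj v * (‖deriv w (c + t * v)‖ ^ 2 : ℝ)) t := by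
  have hline : HasDerivAt (fun s : ℂ => c + s * v) v (t : ℂ) := by
    simpa using ((hasDerivAt_id (t : ℂ)).mul_const v).const_add c
  have hw : HasDerivAt (fun t : ℝ => w (c + t * v)) (deriv w (c + t * v) * v) t :=
    ((h.differentiable _).hasDerivAt.comp (t : ℂ) hline).comp_ofReal
  have hdw : HasDerivAt (fun t : ℝ => deriv w (c + t * v))
      (-(q (c + t * v) * w (c + t * v)) * v) t := by
    rw [← h.deriv_deriv]
    exact ((h.differentiable.deriv _).hasDerivAt.comp (t : ℂ) hline).comp_ofReal
  refine (hdw.mul hw.star).congr_deriv ?_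
  simp only [ofReal_pow, ← mul_conj', star_def, map_mul]
  ring

lemma hasDerivAt_re_deriv_mul_conj_ofReal (h : IsEntireSolution q w) (x : ℝ) :
    HasDerivAt (fun x : ℝ => (deriv w x * conj (w x)).re)
      (-((q x).re * ‖w x‖ ^ 2) + ‖deriv w x‖ ^ 2) x := by
  have := reCLM.hasFDerivAt.comp_hasDerivAt x (h.hasDerivAt_deriv_mul_conj 0 1 x)
  simp only [zero_add, mul_one, one_mul, map_one] at this
  refine this.congr_deriv ?_
  simp only [reCLM_apply, add_re, neg_mul, neg_re, re_mul_ofReal, ofReal_re]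

lemma hasDerivAt_im_deriv_mul_conj_ofReal (h : IsEntireSolution q w) (x : ℝ) :
    HasDerivAt (fun x : ℝ => (deriv w x * conj (w x)).im) (-((q x).im * ‖w x‖ ^ 2)) x := by
  have := imCLM.hasFDerivAt.comp_hasDerivAt x (h.hasDerivAt_deriv_mul_conj 0 1 x)
  simp only [zero_add, mul_one, one_mul, map_one] at this
  refine this.congr_deriv ?_
  simp only [imCLM_apply, add_im, neg_mul, neg_im, im_mul_ofReal, ofReal_im, add_zero]

lemma hasDerivAt_im_deriv_mul_conj_vertical (h : IsEntireSolution q w) (x t : ℝ) :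
    HasDerivAt (fun t : ℝ => (deriv w (x + t * I) * conj (w (x + t * I))).im)
      (-((q (x + t * I)).re * ‖w (x + t * I)‖ ^ 2 + ‖deriv w (x + t * I)‖ ^ 2)) t := by
  refine (imCLM.hasFDerivAt.comp_hasDerivAt t (h.hasDerivAt_deriv_mul_conj x I t)).congr_deriv ?_
  simp only [imCLM_apply, conj_I, add_im, neg_mul, neg_im, im_mul_ofReal, I_mul_im, I_im]
  ring

lemma frequently_im_eq_zero (h : IsEntireSolution q w) (hw₀ : w ≠ 0)
    (hinf : {x : ℝ | w x = 0}.Infinite) : ∃ᶠ x : ℝ in cobounded ℝ, (q x).im = 0 := by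
  refine (frequently_deriv_eq_zero_of_infinite hinf
    (finite_real_zeros_inter_Icc h.differentiable hw₀) (fun x hx => ?_)
    h.hasDerivAt_im_deriv_mul_conj_ofReal).mono fun x hx => ?_
  · simp [show w x = 0 from hx]
  · simpa [show w x ≠ 0 from hx.1] using hx.2

lemma frequently_re_nonneg (h : IsEntireSolution q w) (hw₀ : w ≠ 0)
    (hinf : {x : ℝ | w x = 0}.Infinite) : ∃ᶠ x : ℝ in cobounded ℝ, 0 ≤ (q x).re := by
  refine (frequently_deriv_eq_zero_of_infinite hinf
    (finite_real_zeros_inter_Icc h.differentiable hw₀) (fun x hx => ?_)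
    h.hasDerivAt_re_deriv_mul_conj_ofReal).mono fun x hx => ?_
  · simp [show w x = 0 from hx]
  · have hwx : 0 < ‖w x‖ ^ 2 := pow_pos (norm_pos_iff.2 hx.1) 2
    exact nonneg_of_mul_nonneg_left (by linarith [hx.2, sq_nonneg ‖deriv w x‖]) hwx

lemma im_deriv_mul_conj_ofReal_eq_zero (h : IsEntireSolution q w) (hq : ∀ x : ℝ, (q x).im = 0)
    {a : ℝ} (ha : w a = 0) (x : ℝ) : (deriv w x * conj (w x)).im = 0 := by
  have hderiv (t : ℝ) := h.hasDerivAt_im_deriv_mul_conj_ofReal t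
  have hconst := is_const_of_deriv_eq_zero (fun t => (hderiv t).differentiableAt)
    (fun t => by rw [(hderiv t).deriv, hq, zero_mul, neg_zero]) x a
  simpa [ha] using hconst

lemma im_logDeriv_nonpos (h : IsEntireSolution q w) {x y : ℝ} (hy : 0 ≤ y)
    (hx : (deriv w x * conj (w x)).im = 0)
    (hq : ∀ t ∈ Icc 0 y, 0 ≤ (q (x + t * I)).re) : (logDeriv w (x + y * I)).im ≤ 0 := by
  have hanti : AntitoneOn (fun t : ℝ => (deriv w (x + t * I) * conj (w (x + t * I))).im)
      (Icc 0 y) := by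
    refine antitoneOn_of_hasDerivWithinAt_nonpos (convex_Icc 0 y)
      (HasDerivAt.continuousOn fun t _ => h.hasDerivAt_im_deriv_mul_conj_vertical x t)
      (fun t _ => (h.hasDerivAt_im_deriv_mul_conj_vertical x t).hasDerivWithinAt) fun t ht => ?_
    have := hq t (interior_subset ht)
    exact neg_nonpos.2 (by positivity)
  have him := hanti (left_mem_Icc.2 hy) (right_mem_Icc.2 hy) hy
  simp only [ofReal_zero, zero_mul, add_zero, hx] at him
  rw [logDeriv_apply, div_eq_mul_inv, inv_def, ← mul_assoc, im_mul_ofReal]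
  exact mul_nonpos_of_nonpos_of_nonneg him (inv_nonneg.2 (normSq_nonneg _))

lemma hasDerivAt_logDeriv (h : IsEntireSolution q w) {z : ℂ} (hz : w z ≠ 0) :
    HasDerivAt (logDeriv w) (-q z - logDeriv w z ^ 2) z := by
  refine ((h.differentiable.deriv z).hasDerivAt.div (h.differentiable z).hasDerivAt hz).congr_deriv
    ?_
  rw [h.deriv_deriv, logDeriv_apply]
  field_simp

lemma deriv_logDeriv_add_sq (h : IsEntireSolution q w) {z : ℂ} (hz : w z ≠ 0) :
    deriv (logDeriv w) z + logDeriv w z ^ 2 = -q z := by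
  rw [(h.hasDerivAt_logDeriv hz).deriv, sub_add_cancel]

lemma logDeriv_sq_isEquivalent {P : ℂ[X]} (h : IsEntireSolution P.eval w) (hP : P ≠ 0) {ε : ℝ}
    (hε : 0 < ε) (hw : ∀ᶠ z in atUpperSector (ε / 2), w z ≠ 0) :
    (fun z => logDeriv w z ^ 2) ~[atUpperSector ε]
      fun z => -(P.leadingCoeff * z ^ P.natDegree) := by
  have hlead (δ : ℝ) : P.eval ~[atUpperSector δ] fun z => P.leadingCoeff * z ^ P.natDegree :=
    P.isEquivalent_cobounded_leading_monomial.mono inf_le_left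
  have hric : (fun z => deriv (logDeriv w) z + logDeriv w z ^ 2)
      =O[atUpperSector (ε / 2)] fun z => z ^ P.natDegree :=
    ((hlead _).isBigO.trans (isBigO_const_mul_self _ _ _)).neg_left.congr'
      (hw.mono fun z hz => (h.deriv_logDeriv_add_sq hz).symm) .rfl
  have hderiv : deriv (logDeriv w)
      =o[atUpperSector ε] fun z => -(P.leadingCoeff * z ^ P.natDegree) :=
    ((deriv_isLittleO_pow_of_riccati hε
      (hw.mono fun z hz => (h.hasDerivAt_logDeriv hz).differentiableAt) hric).const_mul_right
      (leadingCoeff_ne_zero.2 hP)).neg_right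
  refine ((hlead ε).neg.sub_isLittleO hderiv).congr_left ?_
  filter_upwards [eventually_forall_mem_closedBall hε hw] with z hz
  have hwz : w z ≠ 0 := hz z (mem_closedBall_self (by positivity))
  exact sub_eq_of_eq_add' (h.deriv_logDeriv_add_sq hwz).symm

lemma eventually_norm_logDeriv_div_sq_sub_one_le {P : ℂ[X]} {b ε : ℝ} {k : ℕ}
    (h : IsEntireSolution P.eval w) (hb : 0 < b) (hlead : P.leadingCoeff = (b ^ 2 : ℝ))
    (hdeg : P.natDegree = 2 * k) (hε : 0 < ε) (hw : ∀ᶠ z in atUpperSector (ε / 2), w z ≠ 0) :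
    ∀ᶠ z in atUpperSector ε, ‖(logDeriv w z / (I * b * z ^ k)) ^ 2 - 1‖ ≤ 1 / 4 := by
  have hP : P ≠ 0 := by
    rintro rfl
    rw [leadingCoeff_zero] at hlead
    exact (pow_pos hb 2).ne (mod_cast hlead)
  obtain ⟨φ, hφ, hu⟩ := (h.logDeriv_sq_isEquivalent hP hε hw).exists_eq_mul
  have hz₀ : ∀ᶠ z in atUpperSector ε, z ≠ 0 := (eventually_ne_cobounded 0).filter_mono inf_le_left
  filter_upwards [hu, hφ.eventually (closedBall_mem_nhds 1 (by norm_num : (0 : ℝ) < 1 / 4)), hz₀]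
    with z hu hφ hz
  have hb' : (b : ℂ) ≠ 0 := ofReal_ne_zero.2 hb.ne'
  have hg : (logDeriv w z / (I * b * z ^ k)) ^ 2 = φ z := by
    rw [div_pow, hu, Pi.mul_apply, hlead, hdeg, mul_pow, mul_pow, I_sq, ← pow_mul, mul_comm k]
    push_cast
    field_simp
  rwa [hg, ← mem_closedBall_iff_norm]

lemma eventually_im_logDeriv_nonpos {P : ℂ[X]} {a : ℝ} (h : IsEntireSolution P.eval w)
    (ha : 0 < a) (hlead : P.leadingCoeff = a) (heven : Even P.natDegree)
    (hreal : ∀ x : ℝ, (deriv w x * conj (w x)).im = 0) :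
    ∀ᶠ η : ℝ in 𝓝[>] 0, ∀ᶠ x : ℝ in cobounded ℝ, (logDeriv w (x + (η * |x| : ℝ) * I)).im ≤ 0 := by
  filter_upwards [eventually_re_eval_pos ha hlead heven, self_mem_nhdsWithin] with η hη hη₀
  obtain ⟨R, -, hR⟩ := hasBasis_cobounded_norm.eventually_iff.1 hη
  filter_upwards [eventually_cobounded_le_norm R] with x hx
  refine h.im_logDeriv_nonpos (mul_nonneg (le_of_lt hη₀) (abs_nonneg x)) (hreal x)
    fun t ht => (hR ?_ ?_).le
  · refine (show R ≤ |x| from hx).trans ?_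
    simpa using abs_re_le_norm (x + t * I)
  · simpa [abs_of_nonneg ht.1] using ht.2

lemma continuousAt_logDeriv_div_pow (h : IsEntireSolution q w) {b z : ℂ} (k : ℕ) (hb : b ≠ 0)
    (hz : z ≠ 0) (hwz : w z ≠ 0) :
    ContinuousAt (fun z => logDeriv w z / (I * b * z ^ k)) z :=
  (h.hasDerivAt_logDeriv hwz).continuousAt.div (by fun_prop)
    (mul_ne_zero (mul_ne_zero I_ne_zero hb) (pow_ne_zero k hz))

lemma even_of_eventually_ne_zero {P : ℂ[X]} {b : ℝ} {k : ℕ} (h : IsEntireSolution P.eval w)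
    (hb : 0 < b) (hlead : P.leadingCoeff = (b ^ 2 : ℝ)) (hdeg : P.natDegree = 2 * k)
    (hreal : ∀ x : ℝ, (deriv w x * conj (w x)).im = 0)
    (hw : ∀ ε > 0, ∀ᶠ z in atUpperSector ε, w z ≠ 0) : Even k := by
  obtain ⟨η, him, hpow, hη₀, hη₁⟩ := ((h.eventually_im_logDeriv_nonpos (by positivity) hlead
    (hdeg ▸ even_two_mul k) hreal).and ((eventually_norm_one_add_mul_I_pow_sub_one_le k).and
      (Ioc_mem_nhdsGT one_pos))).exists
  obtain ⟨R₀, -, him⟩ := hasBasis_cobounded_norm.eventually_iff.1 him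
  set g : ℂ → ℂ := fun z => logDeriv w z / (I * b * z ^ k)
  have hsector : ∀ᶠ z in atUpperSector (η / 3), w z ≠ 0 ∧ ‖g z ^ 2 - 1‖ ≤ 1 / 4 :=
    (hw _ (by positivity)).and (h.eventually_norm_logDeriv_div_sq_sub_one_le hb hlead hdeg
      (by positivity) (hw _ (by positivity)))
  obtain ⟨R, hseg, hR₀, hR⟩ := ((eventually_forall_mem_Icc_of_atUpperSector hη₀ hη₁ hsector).and
    ((eventually_ge_atTop R₀).and (eventually_gt_atTop 0))).exists
  have hsign (x : ℝ) (hx : |x| = R) : x ^ k * (g (x + (η * R : ℝ) * I)).re < 0 := by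
    subst hx
    exact pow_mul_re_div_neg_of_forall_abs_le hb hη₀.le (abs_pos.1 hR) (him hR₀) hpow
      (hseg x (abs_le.1 le_rfl)).2
  have hcont : ContinuousOn (fun x : ℝ => g (x + (η * R : ℝ) * I)) (Icc (-R) R) := by
    intro x hx
    have hz : (x + (η * R : ℝ) * I : ℂ) ≠ 0 := by
      intro hz
      simpa [hη₀.ne', hR.ne'] using congrArg im hz
    have hgz := h.continuousAt_logDeriv_div_pow k (ofReal_ne_zero.2 hb.ne') hz (hseg x hx).1
    exact (hgz.comp (f := fun x : ℝ => (x + (η * R : ℝ) * I : ℂ))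
      (by fun_prop)).continuousWithinAt
  have hsame := re_mul_re_pos_of_norm_sq_sub_one_lt (by linarith) hcont
    fun x hx => (hseg x hx).2.trans_lt (by norm_num)
  by_contra hk
  have hright := hsign R (abs_of_pos hR)
  have hleft := hsign (-R) (by rw [abs_neg, abs_of_pos hR])
  rw [(Nat.not_even_iff_odd.1 hk).neg_pow, neg_mul, neg_lt_zero] at hleft
  have hRk : 0 < R ^ k := pow_pos hR k
  exact hsame.not_gt
    (mul_neg_of_pos_of_neg (pos_of_mul_pos_right hleft hRk.le) (neg_of_mul_neg_right hright hRk.le))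

end IsEntireSolution

end Solution

theorem stmt_7_general (P : Polynomial ℂ) (hP : P.natDegree % 4 = 2)
    (w : ℂ → ℂ) (hw : Differentiable ℂ w)
    (hde : ∀ z : ℂ, iteratedDeriv 2 w z + P.eval z * w z = 0)
    (hsector : ∀ ε > 0, {z : ℂ | w z = 0 ∧ ε * ‖z‖ < z.im}.Finite) :
    {x : ℝ | w x = 0}.Finite := by
  have h : IsEntireSolution P.eval w :=
    ⟨hw, fun z => eq_neg_of_add_eq_zero_left (by
      simpa only [iteratedDeriv_succ, iteratedDeriv_zero] using hde z)⟩
  have hne (ε : ℝ) (hε : 0 < ε) : ∀ᶠ z in atUpperSector ε, w z ≠ 0 := by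
    filter_upwards [mem_inf_of_left (isBounded_def.1 (hsector ε hε).isBounded),
      mem_inf_of_right (mem_principal_self _)] with z hz him hwz using hz ⟨hwz, him⟩
  obtain ⟨z, hz⟩ := exists_of_eventually_atUpperSector one_half_lt_one (hne _ one_half_pos)
  have hw₀ : w ≠ 0 := Function.ne_iff.2 ⟨z, hz⟩
  by_contra hinf
  obtain ⟨x₀, hx₀⟩ := Set.Infinite.nonempty hinf
  have hconj := map_conj_eq_self_of_frequently (h.frequently_im_eq_zero hw₀ hinf)
  have hreal := h.im_deriv_mul_conj_ofReal_eq_zero (im_eval_ofReal_eq_zero_of_map_conj hconj) hx₀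
  obtain ⟨a, ha, hlead⟩ := exists_pos_leadingCoeff_eq (by rintro rfl; simp at hP)
    (Nat.even_iff.2 (by lia)) hconj (h.frequently_re_nonneg hw₀ hinf)
  have heven : Even (P.natDegree / 2) := h.even_of_eventually_ne_zero (Real.sqrt_pos.2 ha)
    (by rw [hlead, Real.sq_sqrt ha.le]) (by lia) hreal hne
  rw [Nat.even_iff] at heven
  lia

/-- If `P` is a polynomial of degree `d ≡ 2 (mod 4)` and `w` is a nonzero entire solution of
`w'' + P·w = 0` with all but finitely many zeros real, then `w` has only finitely many
zeros. -/
theorem stmt_7 (P : Polynomial ℂ) (hP : P.natDegree % 4 = 2)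
    (w : ℂ → ℂ) (hw : Differentiable ℂ w) (hw0 : w ≠ 0)
    (hde : ∀ z : ℂ, iteratedDeriv 2 w z + P.eval z * w z = 0)
    (hzeros : {z : ℂ | w z = 0 ∧ z.im ≠ 0}.Finite) :
    {z : ℂ | w z = 0}.Finite := by
  have hreal := stmt_7_general P hP w hw hde fun ε hε => hzeros.subset fun z hz =>
    ⟨hz.1, ((mul_nonneg hε.le (norm_nonneg z)).trans_lt hz.2).ne'⟩
  refine (hzeros.union (hreal.image ((↑) : ℝ → ℂ))).subset fun z hz => ?_
  by_cases him : z.im = 0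
  · lift z to ℝ using him
    exact Or.inr (mem_image_of_mem _ hz)
  · exact Or.inl ⟨hz, him⟩
end
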